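/- arXiv:1608.04183 — 6 statements merged into one kernel-verified Lean document; each statement's English description precedes it below -/
import Mathlib

section
/- Let l be a prime number, G a finite group, A a normal subgroup of G whose order is coprime to l and whose index in G is a power of l, and C a simple F_l[G]-module whose dimension over F_l is finite and strictly greater than 1. Then the first group cohomology H^1(G, C) vanishes. -/
/-!
Since `A` is normal, inflation-restriction reduces `H¹(G, C) = 0` to `H¹(A, C) = 0` and
`H¹(G ⧸ A, Cᴬ) = 0`. The former follows by averaging cocycles, as `|A|` is invertible on `C`. The
latter holds because `Cᴬ = 0`: the `l`-group `G ⧸ A` acts on `Cᴬ`, which is killed by `l`, so if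
`Cᴬ` were nonzero it would contain a nonzero vector fixed by `G`, whose span would be all of `C`.
-/

universe u

section CohomologyVanishing

open groupCohomology

variable {k G : Type u} [CommRing k] [Group G]

theorem subsingleton_H1_iff {V : Rep.{u} k G} :
    Subsingleton (H1 V) ↔ cocycles₁ V ≤ coboundaries₁ V := by
  refine ⟨fun _ f hf => (H1π_eq_zero_iff ⟨f, hf⟩).1 (Subsingleton.elim _ _), fun h => ?_⟩
  refine subsingleton_of_forall_eq 0 fun c => ?_
  induction c using H1_induction_on with
  | h f => exact (H1π_eq_zero_iff f).2 (h f.2)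

theorem subsingleton_H1_of_isUnit_natCard [Finite G] (V : Rep.{u} k G)
    (hG : IsUnit (Nat.card G : k)) : Subsingleton (H1 V) := by
  refine subsingleton_H1_iff.2 fun f hf => ?_
  have := Fintype.ofFinite G
  obtain ⟨c, hc⟩ := hG.exists_left_inv
  have card_smul_eq (g : G) :
      (Nat.card G : k) • f g = ∑ h, f h - V.ρ g (∑ h, f h) := by
    calc (Nat.card G : k) • f g
        = ∑ h, (f (g * h) - V.ρ g (f h)) := by
          simp [(mem_cocycles₁_iff f).1 hf g, Nat.cast_smul_eq_nsmul]
      _ = ∑ h, f h - V.ρ g (∑ h, f h) := by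
          rw [Finset.sum_sub_distrib, map_sum,
            Fintype.sum_equiv (Equiv.mulLeft g) (fun h => f (g * h)) f fun _ => rfl]
  refine ⟨-(c • ∑ h, f h), funext fun g => ?_⟩
  calc V.ρ g (-(c • ∑ h, f h)) - -(c • ∑ h, f h)
      = c • (∑ h, f h - V.ρ g (∑ h, f h)) := by
        rw [map_neg, map_smul, smul_sub]
        abel
    _ = f g := by rw [← card_smul_eq, smul_smul, hc, one_smul]

theorem subsingleton_H1_of_subsingleton (V : Rep.{u} k G) [Subsingleton V] :
    Subsingleton (H1 V) :=
  subsingleton_H1_iff.2 fun f _ => Subsingleton.elim (0 : G → V) f ▸ zero_mem _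

theorem subsingleton_H1_of_normal (V : Rep.{u} k G) (A : Subgroup G) [A.Normal]
    (hquot : Subsingleton (H1 (V.quotientToInvariants A)))
    (hres : Subsingleton (H1 (Rep.res A.subtype V))) : Subsingleton (H1 V) := by
  refine ModuleCat.subsingleton_of_isZero ((H1InfRes_exact V A).isZero_of_both_isZero ?_ ?_)
  · exact ModuleCat.isZero_iff_subsingleton.2 hquot
  · exact ModuleCat.isZero_iff_subsingleton.2 hres

end CohomologyVanishing

section FixedVectors

open MulAction Representation

theorem exists_ne_zero_mem_fixedPoints_of_isPGroup {p : ℕ} [Fact p.Prime] {P M : Type*} [Group P]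
    [AddCommGroup M] [Module (ZMod p) M] [DistribMulAction P M] (hP : IsPGroup p P) {x : M}
    (hx : x ≠ 0) (horb : (orbit P x).Finite) : ∃ y ∈ fixedPoints P M, y ≠ 0 := by
  let N : Submodule (ZMod p) M := Submodule.span (ZMod p) (orbit P x)
  have smul_mem_N (g : P) {v : M} (hv : v ∈ N) : g • v ∈ N := by
    have hN : N ≤ N.comap ((DistribSMul.toAddMonoidHom M g).toZModLinearMap p) :=
      Submodule.span_le.2 fun _ hw => Submodule.subset_span (mem_orbit_of_mem_orbit g hw)
    exact hN hv
  let S : SubMulAction P M := ⟨N, smul_mem_N⟩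
  have : Module.Finite (ZMod p) N := Module.Finite.span_of_finite _ horb
  have : Finite N := Module.finite_of_finite (ZMod p)
  have : Finite S := ‹Finite N›
  have : Nontrivial N :=
    ⟨⟨⟨x, Submodule.subset_span (mem_orbit_self x)⟩, 0, fun h => hx (congrArg Subtype.val h)⟩⟩
  have dvd_card : p ∣ Nat.card S := by
    change p ∣ Nat.card N
    rw [Module.natCard_eq_pow_finrank (K := ZMod p), Nat.card_zmod]
    exact dvd_pow_self p Module.finrank_pos.ne'
  have zero_fixed : (⟨0, N.zero_mem⟩ : S) ∈ fixedPoints P S := fun g => Subtype.ext (smul_zero g)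
  obtain ⟨y, hy, hy0⟩ :=
    hP.exists_fixed_point_of_prime_dvd_card_of_fixed_point S dvd_card zero_fixed
  exact ⟨y, fun g => congrArg Subtype.val (hy g), fun h => hy0 (Subtype.ext h.symm)⟩

variable {k G V : Type*} [Group G] [AddCommGroup V]

theorem subsingleton_of_invariants_eq_bot_of_isPGroup [CommRing k] [Module k V] {p : ℕ}
    [Fact p.Prime] [CharP k p] (ρ : Representation k G V) (hG : IsPGroup p G)
    (horb : ∀ v, (Set.range fun g => ρ g v).Finite) (hinv : ρ.invariants = ⊥) :
    Subsingleton V := by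
  let _ : Module (ZMod p) V := Module.compHom V (ZMod.castHom dvd_rfl k)
  let _ : DistribMulAction G V := DistribMulAction.compHom V ρ
  refine subsingleton_of_forall_eq 0 fun v => by_contra fun hv => ?_
  obtain ⟨w, hw, hw0⟩ := exists_ne_zero_mem_fixedPoints_of_isPGroup hG hv (horb v)
  have : w ∈ ρ.invariants := hw
  exact hw0 (by rwa [hinv, Submodule.mem_bot] at this)

theorem invariants_quotientToInvariants_eq_bot [CommRing k] [Module k V]
    {ρ : Representation k G V} (A : Subgroup G) [A.Normal] (hinv : ρ.invariants = ⊥) :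
    (ρ.quotientToInvariants A).invariants = ⊥ := by
  refine (Submodule.eq_bot_iff _).2 fun v hv => Subtype.ext ?_
  have : (v : V) ∈ ρ.invariants := fun g => congrArg Subtype.val (hv g)
  rwa [hinv] at this

theorem subsingleton_invariants_subgroup_of_isPGroup_quotient [CommRing k] [Module k V] {p : ℕ}
    [Fact p.Prime] [CharP k p] (ρ : Representation k G V) (A : Subgroup G) [A.Normal]
    (hquot : IsPGroup p (G ⧸ A)) (horb : ∀ v, (Set.range fun g => ρ g v).Finite)
    (hinv : ρ.invariants = ⊥) : Subsingleton (invariants (ρ.comp A.subtype)) := by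
  refine subsingleton_of_invariants_eq_bot_of_isPGroup (ρ.quotientToInvariants A) hquot
    (fun v => ?_) (invariants_quotientToInvariants_eq_bot A hinv)
  refine Set.Finite.of_finite_image ((horb v).subset ?_) Subtype.val_injective.injOn
  rintro _ ⟨_, ⟨q, rfl⟩, rfl⟩
  obtain ⟨g, rfl⟩ := QuotientGroup.mk_surjective q
  exact ⟨g, rfl⟩

theorem invariants_eq_bot_of_isIrreducible [Field k] [Module k V] (ρ : Representation k G V)
    [ρ.IsIrreducible] (hdim : Module.finrank k V ≠ 1) : ρ.invariants = ⊥ := by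
  refine (Submodule.eq_bot_iff _).2 fun v hv => by_contra fun hv0 => hdim ?_
  let L : Subrepresentation ρ :=
    ⟨k ∙ v, fun g w hw => by
      obtain ⟨c, rfl⟩ := Submodule.mem_span_singleton.1 hw
      rw [map_smul, hv g]
      exact hw⟩
  have L_ne_bot : L ≠ ⊥ := fun h =>
    hv0 (Submodule.span_singleton_eq_bot.1 (congrArg Subrepresentation.toSubmodule h))
  have span_eq_top : k ∙ v = ⊤ :=
    congrArg Subrepresentation.toSubmodule ((eq_bot_or_eq_top L).resolve_left L_ne_bot)
  rw [← finrank_top, ← span_eq_top, finrank_span_singleton hv0]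

theorem isIrreducible_of_forall_submodule [Field k] [Module k V] [Nontrivial V]
    {ρ : Representation k G V}
    (h : ∀ W : Submodule k V, (∀ g, ∀ v ∈ W, ρ g v ∈ W) → W = ⊥ ∨ W = ⊤) :
    ρ.IsIrreducible where
  exists_pair_ne :=
    ⟨⊥, ⊤, fun h => bot_ne_top (congrArg Subrepresentation.toSubmodule h : (⊥ : Submodule k V) = ⊤)⟩
  eq_bot_or_eq_top W :=
    (h W.toSubmodule W.apply_mem_toSubmodule).imp
      (fun hW => Subrepresentation.toSubmodule_injective hW)
      fun hW => Subrepresentation.toSubmodule_injective hW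

end FixedVectors

theorem stmt_0_general {k G V : Type u} [CommRing k] [Group G] [AddCommGroup V] [Module k V]
    {p : ℕ} [Fact p.Prime] [CharP k p] (ρ : Representation k G V) (A : Subgroup G) [A.Normal]
    (hA : (Nat.card A).Coprime p) (hquot : IsPGroup p (G ⧸ A))
    (horb : ∀ v, (Set.range fun g => ρ g v).Finite) (hinv : ρ.invariants = ⊥) :
    Subsingleton (groupCohomology (Rep.of ρ) 1) := by
  have hp : p.Prime := Fact.out
  have not_dvd_card : ¬p ∣ Nat.card A := (hp.coprime_iff_not_dvd).1 hA.symm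
  have : Finite A := Nat.finite_of_card_ne_zero fun h => not_dvd_card (h ▸ dvd_zero p)
  refine subsingleton_H1_of_normal (Rep.of ρ) A ?_ ?_
  · have : Subsingleton ((Rep.of ρ).quotientToInvariants A) :=
      subsingleton_invariants_subgroup_of_isPGroup_quotient ρ A hquot horb hinv
    exact subsingleton_H1_of_subsingleton _
  · exact subsingleton_H1_of_isUnit_natCard _ ((CharP.isUnit_natCast_iff hp).2 not_dvd_card)

/-- If `l` is prime, `G` a finite group with a normal subgroup `A` of order coprime
to `l` and of index a power of `l`, and `C` is a simple `𝔽_l[G]`-module of finite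
`𝔽_l`-dimension strictly greater than `1`, then `H¹(G, C) = 0`. -/
theorem stmt_0 (l : ℕ) [hl : Fact l.Prime] (G : Type) [Group G] [Finite G]
    (A : Subgroup G) [A.Normal] (hA : Nat.Coprime (Nat.card A) l)
    (hidx : ∃ k : ℕ, A.index = l ^ k)
    (C : Type) [AddCommGroup C] [Module (ZMod l) C]
    [DistribMulAction G C] [SMulCommClass G (ZMod l) C]
    [FiniteDimensional (ZMod l) C]
    (hdim : 1 < Module.finrank (ZMod l) C)
    (hsimple : ∀ W : Submodule (ZMod l) C,
      (∀ (g : G) (x : C), x ∈ W → g • x ∈ W) → W = ⊥ ∨ W = ⊤) :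
    Subsingleton
      (groupCohomology (Rep.of (Representation.ofDistribMulAction (ZMod l) G C)) 1) := by
  obtain ⟨m, hm⟩ := hidx
  have : Nontrivial C := Module.nontrivial_of_finrank_pos (by omega : 0 < Module.finrank (ZMod l) C)
  have : (Representation.ofDistribMulAction (ZMod l) G C).IsIrreducible :=
    isIrreducible_of_forall_submodule hsimple
  exact stmt_0_general _ A hA (IsPGroup.of_card hm) (fun _ => Set.finite_range _)
    (invariants_eq_bot_of_isIrreducible _ hdim.ne')
end

section
/- Let l be a prime number, G a finite group, A a normal subgroup of G whose order is coprime to l and whose index in G is a power of l, and C a simple F_l[G]-module whose dimension over F_l is finite and strictly greater than 1. Then the second group cohomology H^2(G, C) vanishes. -/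
/-!
Since `A` is normal, `v ↦ ∑ a ∈ A, a • v` is a natural endomorphism of the identity functor of the
category of representations of `G`. On `Extⁿ(𝟙, V) = Hⁿ(G, V)` it can be computed on either
variable: on the trivial representation it is multiplication by `|A|`, which is invertible, while
on `V` it vanishes as soon as `V` has no nonzero `A`-invariants. So in that case `Hⁿ(G, V) = 0`
for every `n`.

If `V` did have nonzero `A`-invariants, the finite `l`-group `G ⧸ A` would fix a nonzero vector
among them, because `l` annihilates `V`. In a simple module such a vector spans everything, which is
excluded in dimension greater than one.
-/

open CategoryTheory Limits

universe u v w

section CentralEndomorphism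

variable {C : Type*} [Category* C] [Abelian C] (η : 𝟭 C ⟶ 𝟭 C)

theorem isZero_leftDerived_obj_of_map_app_eq_zero [HasProjectiveResolutions C]
    {D : Type*} [Category* D] [Abelian D] (F : C ⥤ D) [F.Additive]
    (hF : ∀ Z, F.map (η.app Z) = 0) (X : C) [IsIso (η.app X)] (n : ℕ) :
    IsZero ((F.leftDerived n).obj X) := by
  let P := projectiveResolution X
  let ηP : P.complex ⟶ P.complex :=
    { f i := η.app (P.complex.X i)
      comm' i j _ := (η.naturality (P.complex.d i j)).symm }
  have ηP_comp_π : ηP ≫ P.π = P.π ≫ (ChainComplex.single₀ C).map (η.app X) := by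
    ext
    simp only [HomologicalComplex.comp_f, ChainComplex.single₀_map_f_zero]
    exact (η.naturality (P.π.f 0)).symm
  have map_ηP : (F.mapHomologicalComplex (.down ℕ)).map ηP = 0 := by
    ext i
    exact hF _
  have map_app_eq_zero : (F.leftDerived n).map (η.app X) = 0 := by
    rw [F.leftDerived_map_eq n (η.app X) ηP ηP_comp_π, Functor.comp_map, map_ηP,
      Functor.map_zero, zero_comp, comp_zero]
  rw [IsZero.iff_id_eq_zero, ← cancel_mono ((F.leftDerived n).map (η.app X))]
  simp only [map_app_eq_zero, comp_zero]

theorem isZero_Ext_of_isIso_app_of_app_eq_zero {R : Type*} [Ring R] [Linear R C]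
    [EnoughProjectives C] (X : C) [IsIso (η.app X)] {Y : C} (hY : η.app Y = 0) (n : ℕ) :
    IsZero (((Ext R C n).obj (.op X)).obj Y) := by
  refine (isZero_leftDerived_obj_of_map_app_eq_zero η ((linearYoneda R C).obj Y).rightOp
    (fun Z ↦ Quiver.Hom.unop_inj ?_) X n).unop
  ext (f : Z ⟶ Y)
  change η.app Z ≫ f = 0
  exact (η.naturality f).symm.trans (by rw [hY, comp_zero])

end CentralEndomorphism

section NormalSubgroupNorm

variable {k : Type u} {G : Type v} [CommRing k] [Group G]

theorem norm_eq_zero_of_invariants_eq_bot [Fintype G] {V : Type*} [AddCommGroup V] [Module k V]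
    (ρ : Representation k G V) (h : ρ.invariants = ⊥) : ρ.norm = 0 := by
  ext v
  simpa [h] using (ρ.mem_invariants (ρ.norm v)).2 fun g ↦ ρ.self_norm_apply g v

variable (A : Subgroup G) [A.Normal] [Fintype A]

theorem norm_comp_subtype_comm {V : Type*} [AddCommGroup V] [Module k V]
    (ρ : Representation k G V) (g : G) :
    Representation.norm (ρ.comp A.subtype) ∘ₗ ρ g =
      ρ g ∘ₗ Representation.norm (ρ.comp A.subtype) := by
  ext v
  simp only [Representation.norm, LinearMap.comp_apply, LinearMap.sum_apply, map_sum]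
  refine Fintype.sum_equiv (MulAut.conjNormal g⁻¹).toEquiv _ _ fun a ↦ ?_
  simp [← Module.End.mul_apply, ← map_mul, mul_assoc]

/-- The norm `v ↦ ∑ a ∈ A, a • v` of a finite normal subgroup `A` of `G`, as a natural endomorphism
of the identity functor of `Rep k G`. For `A = ⊤` this is `Rep.normNatTrans`. -/
noncomputable def normalSubgroupNorm : 𝟭 (Rep.{w} k G) ⟶ 𝟭 (Rep.{w} k G) where
  app V := Rep.ofHom (ρ := V.ρ) (σ := V.ρ)
    ⟨Representation.norm (V.ρ.comp A.subtype), norm_comp_subtype_comm A V.ρ⟩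
  naturality V W f := by
    ext v
    simp [Representation.norm, Rep.hom_comm_apply]

theorem isIso_normalSubgroupNorm_app_trivial (hA : IsUnit (Nat.card A : k))
    (V : Type w) [AddCommGroup V] [Module k V] :
    IsIso ((normalSubgroupNorm A).app (Rep.trivial k G V)) := by
  obtain ⟨c, hc⟩ := hA
  have smul_id_eq : (c : k) • 𝟙 (Rep.trivial k G V) =
      (normalSubgroupNorm A).app (Rep.trivial k G V) := by
    ext v
    change (c : k) • v = Representation.norm ((Representation.trivial k G V).comp A.subtype) v
    simp [Representation.norm, hc, Nat.cast_smul_eq_nsmul]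
  rw [← smul_id_eq]
  exact ⟨(↑c⁻¹ : k) • 𝟙 _, by simp [smul_smul], by simp [smul_smul]⟩

end NormalSubgroupNorm

theorem isZero_groupCohomology_of_invariants_comp_subtype_eq_bot {k G : Type u} [CommRing k]
    [Group G] (A : Subgroup G) [A.Normal] [Finite A] (hA : IsUnit (Nat.card A : k))
    (V : Rep.{u} k G) (hV : Representation.invariants (V.ρ.comp A.subtype) = ⊥) (n : ℕ) :
    IsZero (groupCohomology V n) := by
  have := Fintype.ofFinite A
  have := isIso_normalSubgroupNorm_app_trivial A hA k
  have app_eq_zero : (normalSubgroupNorm A).app V = 0 := by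
    ext v
    exact congr($(norm_eq_zero_of_invariants_eq_bot _ hV) v)
  exact (isZero_Ext_of_isIso_app_of_app_eq_zero _ _ app_eq_zero n).of_iso
    (groupCohomologyIsoExt V n)

section PGroup

variable {k G V : Type*} [CommRing k] [Group G] [AddCommGroup V] [Module k V]

theorem exists_finite_addSubgroup_stable (p : ℕ) [NeZero p] [CharP k p] [Finite G]
    (ρ : Representation k G V) (v : V) :
    ∃ W : AddSubgroup V, Finite W ∧ v ∈ W ∧ ∀ g, ∀ w ∈ W, ρ g w ∈ W := by
  let W := AddSubgroup.closure (Set.range fun g ↦ ρ g v)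
  refine ⟨W, ?_, AddSubgroup.subset_closure ⟨1, by simp⟩, fun g ↦ ?_⟩
  · have p_nsmul_eq_zero (w : W) : p • w = 0 := by ext; simp [← Nat.cast_smul_eq_nsmul k]
    exact AddCommGroup.finite_of_fg_isAddTorsion W fun w ↦
      isOfFinAddOrder_iff_nsmul_eq_zero.2 ⟨p, NeZero.pos p, p_nsmul_eq_zero w⟩
  · change W ≤ W.comap (ρ g).toAddMonoidHom
    rw [AddSubgroup.closure_le]
    rintro _ ⟨h, rfl⟩
    exact AddSubgroup.subset_closure ⟨g * h, by simp⟩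

variable {p : ℕ} [Fact p.Prime] [CharP k p]

theorem invariants_ne_bot_of_isPGroup [Finite G] (hG : IsPGroup p G) [Nontrivial V]
    (ρ : Representation k G V) : ρ.invariants ≠ ⊥ := by
  obtain ⟨v, hv⟩ := exists_ne (0 : V)
  obtain ⟨W, _, hvW, hW⟩ := exists_finite_addSubgroup_stable p ρ v
  let _ : MulAction G W :=
    { smul g w := ⟨ρ g w, hW g w w.2⟩
      one_smul w := by ext; exact congr($(map_one ρ) w)
      mul_smul g h w := by ext; exact congr($(map_mul ρ g h) w) }
  have p_dvd_card : p ∣ Nat.card W := by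
    have addOrderOf_v : addOrderOf v = p :=
      addOrderOf_eq_prime (by simp [← Nat.cast_smul_eq_nsmul k]) hv
    rw [← addOrderOf_v, ← AddSubgroup.addOrderOf_mk v hvW]
    exact addOrderOf_dvd_natCard _
  obtain ⟨w, hw, hw0⟩ := hG.exists_fixed_point_of_prime_dvd_card_of_fixed_point W p_dvd_card
    (a := 0) fun g ↦ Subtype.ext (map_zero (ρ g))
  exact (Submodule.ne_bot_iff _).2
    ⟨w, fun g ↦ congr_arg Subtype.val (hw g), by simpa using hw0.symm⟩

theorem invariants_comp_subtype_eq_bot_of_index_eq_pow {A : Subgroup G} [A.Normal] {m : ℕ}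
    (hA : A.index = p ^ m) {ρ : Representation k G V} (hρ : ρ.invariants = ⊥) :
    Representation.invariants (ρ.comp A.subtype) = ⊥ := by
  by_contra h
  have := Submodule.nontrivial_iff_ne_bot.2 h
  have : A.FiniteIndex := ⟨by simp [hA, (Fact.out : p.Prime).ne_zero]⟩
  obtain ⟨v, hv, hv0⟩ := (Submodule.ne_bot_iff _).1 <|
    invariants_ne_bot_of_isPGroup (IsPGroup.of_card hA) (ρ.quotientToInvariants A)
  have v_mem : v.1 ∈ ρ.invariants := fun g ↦ congr_arg Subtype.val (hv g)
  exact hv0 (by simpa [hρ] using v_mem)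

end PGroup

section Irreducible

variable {k G V : Type*} [Field k] [Group G] [AddCommGroup V] [Module k V]

theorem invariants_eq_bot_of_isIrreducible_of_finrank_ne_one (ρ : Representation k G V)
    [ρ.IsIrreducible] (h : Module.finrank k V ≠ 1) : ρ.invariants = ⊥ := by
  by_contra h_ne_bot
  obtain ⟨v, hv, hv0⟩ := (Submodule.ne_bot_iff _).1 h_ne_bot
  let line : Subrepresentation ρ := ⟨k ∙ v, fun g w hw ↦ by
    obtain ⟨c, rfl⟩ := Submodule.mem_span_singleton.1 hw
    rwa [map_smul, hv g]⟩
  rcases eq_bot_or_eq_top line with h_bot | h_top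
  · exact hv0 (Submodule.span_singleton_eq_bot.1 congr(($h_bot).toSubmodule))
  · apply h
    rw [← finrank_top, ← finrank_span_singleton (K := k) hv0]
    exact congr(Module.finrank k ($h_top).toSubmodule).symm

theorem isIrreducible_ofDistribMulAction [DistribMulAction G V] [SMulCommClass G k V]
    [Nontrivial V]
    (h : ∀ W : Submodule k V, (∀ (g : G) (x : V), x ∈ W → g • x ∈ W) → W = ⊥ ∨ W = ⊤) :
    (Representation.ofDistribMulAction k G V).IsIrreducible where
  exists_pair_ne := ⟨⊥, ⊤, fun h ↦ bot_ne_top (α := Submodule k V) congr(($h).toSubmodule)⟩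
  eq_bot_or_eq_top W := (h W.toSubmodule W.apply_mem_toSubmodule).imp
    (Subrepresentation.toSubmodule_injective ·) (Subrepresentation.toSubmodule_injective ·)

end Irreducible

theorem stmt_1_general {l : ℕ} [Fact l.Prime] {k G : Type u} [CommRing k] [CharP k l] [Group G]
    (A : Subgroup G) [A.Normal] (hA : Nat.Coprime (Nat.card A) l) (hidx : ∃ m : ℕ, A.index = l ^ m)
    {V : Type u} [AddCommGroup V] [Module k V] (ρ : Representation k G V)
    (hρ : ρ.invariants = ⊥) (n : ℕ) :
    Subsingleton (groupCohomology (Rep.of ρ) n) := by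
  have hl : l.Prime := Fact.out
  obtain ⟨m, hm⟩ := hidx
  have not_dvd_card : ¬ l ∣ Nat.card A := (Nat.Prime.coprime_iff_not_dvd hl).1 hA.symm
  have : Finite A := Nat.finite_of_card_ne_zero fun h ↦ not_dvd_card (h ▸ dvd_zero l)
  exact ModuleCat.subsingleton_of_isZero <|
    isZero_groupCohomology_of_invariants_comp_subtype_eq_bot A
      ((CharP.isUnit_natCast_iff hl).2 not_dvd_card) (Rep.of ρ)
      (invariants_comp_subtype_eq_bot_of_index_eq_pow hm hρ) n

/-- If `l` is prime, `G` a finite group with a normal subgroup `A` of order coprime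
to `l` and of index a power of `l`, and `C` is a simple `𝔽_l[G]`-module of finite
`𝔽_l`-dimension strictly greater than `1`, then `H²(G, C) = 0`. -/
theorem stmt_1 (l : ℕ) [hl : Fact l.Prime] (G : Type) [Group G] [Finite G]
    (A : Subgroup G) [A.Normal] (hA : Nat.Coprime (Nat.card A) l)
    (hidx : ∃ k : ℕ, A.index = l ^ k)
    (C : Type) [AddCommGroup C] [Module (ZMod l) C]
    [DistribMulAction G C] [SMulCommClass G (ZMod l) C]
    [FiniteDimensional (ZMod l) C]
    (hdim : 1 < Module.finrank (ZMod l) C)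
    (hsimple : ∀ W : Submodule (ZMod l) C,
      (∀ (g : G) (x : C), x ∈ W → g • x ∈ W) → W = ⊥ ∨ W = ⊤) :
    Subsingleton
      (groupCohomology (Rep.of (Representation.ofDistribMulAction (ZMod l) G C)) 2) := by
  have : Nontrivial C := Module.nontrivial_of_finrank_pos (zero_lt_one.trans hdim)
  have := isIrreducible_ofDistribMulAction hsimple
  exact stmt_1_general A hA hidx _
    (invariants_eq_bot_of_isIrreducible_of_finrank_ne_one _ hdim.ne') 2
end

section
/- Let l be a prime number, G a finite group possessing a normal subgroup A whose order is coprime to l and whose index in G is a power of l. Let Γ be a group and π : Γ → G a surjective group homomorphism whose kernel C is a finite abelian group in which every element satisfies x^l = 1, so that the conjugation action of Γ on C factors through G and makes C an F_l[G]-module; assume this module is simple of F_l-dimension strictly greater than 1. Then π admits a section: there exists a group homomorphism σ : G → Γ with π ∘ σ = id_G. -/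
/-!
Let `M` be the preimage of `A` in `Γ`. As `C = ker π` has order coprime to `|A|`, it has a
complement `H` in `M`, unique up to conjugation by `C`, so the Frattini argument gives
`Γ = C · N_Γ(H)`. An element of `C ∩ N_Γ(H)` commutes with `H` and with the abelian group `C`, hence
with `M = C H`. The subgroup of `C` centralized by `M` is normal in `Γ`; were it all of `C`, the
`l`-group `Γ / M` would act on the `l`-group `C` with a nontrivial fixed point, and simplicity would
make `C` central, hence of dimension at most one. So `C ∩ N_Γ(H) = 1`, and `N_Γ(H)` is a complement
of `C` in `Γ`.
-/

open Subgroup MulAction MulOpposite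
open scoped Pointwise

section Complements

variable {G : Type*} [Group G] {N H K : Subgroup G} [N.Normal]

theorem isComplement'_of_disjoint_of_sup_eq_top (hdisj : Disjoint N H) (hsup : N ⊔ H = ⊤) :
    IsComplement' N H :=
  isComplement'_of_disjoint_and_mul_eq_univ hdisj (by rw [← normal_mul, hsup, coe_top])

theorem isComplement'_subgroupOf_sup (hdisj : Disjoint N H) :
    IsComplement' (N.subgroupOf (N ⊔ H)) (H.subgroupOf (N ⊔ H)) := by
  refine isComplement'_of_disjoint_of_sup_eq_top ?_ (codisjoint_subgroupOf_sup N H).eq_top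
  rw [disjoint_iff, subgroupOf, subgroupOf, ← comap_inf, hdisj.eq_bot]
  exact bot_subgroupOf _

theorem exists_stabilizer_quotientDiff_eq [IsMulCommutative N] [N.FiniteIndex]
    (hcop : (Nat.card N).Coprime N.index) (hH : IsComplement' N H) :
    ∃ α : N.QuotientDiff, stabilizer G α = H := by
  let T : N.LeftTransversal := ⟨H, hH.symm⟩
  let α : N.QuotientDiff := Quotient.mk'' T
  have smul_transversal (h : G) (hh : h ∈ H) : op h⁻¹ • T = T :=
    Subtype.ext (op_smul_coe_set (H.inv_mem hh))
  have le_stabilizer : H ≤ stabilizer G α := fun h hh =>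
    congrArg Quotient.mk'' (smul_transversal h hh)
  refine ⟨α, le_antisymm (fun g hg => ?_) le_stabilizer⟩
  obtain ⟨n, hn, h, hh, rfl⟩ : ∃ n ∈ N, ∃ h ∈ H, n * h = g :=
    mem_sup_of_normal_left.1 (hH.sup_eq_top ▸ mem_top g)
  have n_smul : n • α = α := by
    have := (stabilizer G α).mul_mem hg (inv_mem (le_stabilizer hh))
    rwa [mul_inv_cancel_right] at this
  have n_eq_one : n = 1 := congrArg Subtype.val (eq_one_of_smul_eq_one hcop α ⟨n, hn⟩ n_smul)
  rwa [n_eq_one, one_mul]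

theorem exists_map_conj_eq_of_isComplement' [IsMulCommutative N] [N.FiniteIndex]
    (hcop : (Nat.card N).Coprime N.index) (hH : IsComplement' N H) (hK : IsComplement' N K) :
    ∃ n ∈ N, H.map (MulAut.conj n) = K := by
  obtain ⟨α, rfl⟩ := exists_stabilizer_quotientDiff_eq hcop hH
  obtain ⟨β, rfl⟩ := exists_stabilizer_quotientDiff_eq hcop hK
  obtain ⟨n, rfl⟩ := exists_smul_eq hcop α β
  exact ⟨n, n.2, (stabilizer_smul_eq_stabilizer_map_conj (n : G) α).symm⟩

theorem relIndex_sup_eq_card_of_disjoint (hdisj : Disjoint N H) :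
    N.relIndex (N ⊔ H) = Nat.card H := by
  rw [relIndex_sup_left, relIndex, subgroupOf_eq_bot.2 hdisj, index_bot]

theorem exists_map_conj_eq_of_sup_eq_sup [IsMulCommutative N] [Finite H]
    (hcop : (Nat.card N).Coprime (Nat.card H)) (hH : Disjoint N H) (hK : Disjoint N K)
    (hsup : N ⊔ H = N ⊔ K) : ∃ n ∈ N, H.map (MulAut.conj n) = K := by
  have index_eq : (N.subgroupOf (N ⊔ H)).index = Nat.card H := relIndex_sup_eq_card_of_disjoint hH
  have card_eq : Nat.card (N.subgroupOf (N ⊔ H)) = Nat.card N :=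
    Nat.card_congr (subgroupOfEquivOfLe le_sup_left).toEquiv
  have : (N.subgroupOf (N ⊔ H)).FiniteIndex := ⟨index_eq ▸ Nat.card_pos.ne'⟩
  obtain ⟨n, hn, hmap⟩ :=
    exists_map_conj_eq_of_isComplement' (by rwa [index_eq, card_eq])
      (isComplement'_subgroupOf_sup hH) (hsup ▸ isComplement'_subgroupOf_sup hK)
  refine ⟨n, hn, ?_⟩
  calc H.map (MulAut.conj (n : G))
    _ = ((H.subgroupOf (N ⊔ H)).map (N ⊔ H).subtype).map (MulAut.conj (n : G)) := by
      rw [map_subgroupOf_eq_of_le le_sup_right]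
    _ = ((H.subgroupOf (N ⊔ H)).map (MulAut.conj n)).map (N ⊔ H).subtype := by
      rw [map_map, map_map]; rfl
    _ = K := by rw [hmap, map_subgroupOf_eq_of_le (hsup ▸ le_sup_right)]

theorem sup_normalizer_eq_top_of_coprime [IsMulCommutative N] [Finite H] [(N ⊔ H).Normal]
    (hcop : (Nat.card N).Coprime (Nat.card H)) (hdisj : Disjoint N H) :
    N ⊔ normalizer H = ⊤ := by
  refine (eq_top_iff' _).2 fun g => ?_
  have disjoint_conj : Disjoint N (H.map (MulAut.conj g)) := by
    rw [← Normal.map_conj_eq N g]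
    exact disjoint_map (MulAut.conj g).injective hdisj
  have sup_conj : N ⊔ H = N ⊔ H.map (MulAut.conj g) := by
    rw [← Normal.map_conj_eq (N ⊔ H) g, Subgroup.map_sup, Normal.map_conj_eq]
  obtain ⟨n, hn, hconj⟩ := exists_map_conj_eq_of_sup_eq_sup hcop hdisj disjoint_conj sup_conj
  have mem_normalizer : n⁻¹ * g ∈ normalizer H := by
    have conj_smul_eq : MulAut.conj n • H = MulAut.conj g • H := hconj
    have conj_smul_self : MulAut.conj (n⁻¹ * g) • H = H := by
      rw [map_mul, mul_smul, ← conj_smul_eq, map_inv, inv_smul_smul]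
    exact mem_normalizer_iff_map_conj_eq.2 conj_smul_self
  rw [← mul_inv_cancel_left n g]
  exact mul_mem_sup hn mem_normalizer

theorem inf_normalizer_le_centralizer_of_disjoint (hdisj : Disjoint N H) :
    N ⊓ normalizer H ≤ centralizer H := by
  rw [← commutator_eq_bot_iff_le_centralizer, ← le_bot_iff, ← hdisj.eq_bot]
  exact le_inf ((commutator_mono inf_le_left le_rfl).trans (commutator_le_left N H))
    (le_normalizer_iff_commutator_le_right.1 inf_le_right)

theorem exists_disjoint_sup_eq_of_coprime {M : Subgroup G} (hNM : N ≤ M)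
    (hcop : (Nat.card N).Coprime (N.relIndex M)) : ∃ H, Disjoint N H ∧ N ⊔ H = M := by
  have hcop' : (Nat.card (N.subgroupOf M)).Coprime (N.subgroupOf M).index := by
    rwa [Nat.card_congr (subgroupOfEquivOfLe hNM).toEquiv]
  obtain ⟨H, hH⟩ := exists_right_complement'_of_coprime hcop'
  have map_eq : (N.subgroupOf M).map M.subtype = N := map_subgroupOf_eq_of_le hNM
  refine ⟨H.map M.subtype, ?_, ?_⟩
  · simpa only [map_eq] using disjoint_map M.subtype_injective hH.disjoint
  · have := congrArg (map M.subtype) hH.sup_eq_top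
    rwa [Subgroup.map_sup, map_eq, ← MonoidHom.range_eq_map, range_subtype] at this

/-- Coprimality makes inflation `H²(G ⧸ M, Nᴹ) → H²(G ⧸ N, N)` an isomorphism, and `hfix` says that
its source is zero. -/
theorem exists_isComplement'_of_inf_centralizer_eq_bot {M : Subgroup G} [M.Normal]
    [IsMulCommutative N] [N.IsFiniteRelIndex M] (hNM : N ≤ M)
    (hcop : (Nat.card N).Coprime (N.relIndex M)) (hfix : N ⊓ centralizer M = ⊥) :
    ∃ L, IsComplement' N L := by
  obtain ⟨H, hdisj, rfl⟩ := exists_disjoint_sup_eq_of_coprime hNM hcop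
  have card_eq : N.relIndex (N ⊔ H) = Nat.card H := relIndex_sup_eq_card_of_disjoint hdisj
  have : Finite H := Nat.finite_of_card_ne_zero (card_eq ▸ relIndex_ne_zero)
  have inf_le_centralizer : N ⊓ normalizer H ≤ centralizer (N ⊔ H : Subgroup G) := by
    rw [le_centralizer_iff, sup_le_iff, le_centralizer_iff, le_centralizer_iff (H := H)]
    exact ⟨inf_le_left.trans N.le_centralizer, inf_normalizer_le_centralizer_of_disjoint hdisj⟩
  refine ⟨normalizer H, isComplement'_of_disjoint_of_sup_eq_top ?_
    (sup_normalizer_eq_top_of_coprime (card_eq ▸ hcop) hdisj)⟩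
  rw [disjoint_iff, ← le_bot_iff, ← hfix]
  exact le_inf inf_le_left inf_le_centralizer

end Complements

section MinimalNormal

variable {G : Type*} [Group G] {N : Subgroup G} {p : ℕ}

theorem ker_conjNormal [N.Normal] : (MulAut.conjNormal : G →* MulAut N).ker = centralizer N := by
  ext g
  simp only [MonoidHom.mem_ker, MulEquiv.ext_iff, Subtype.ext_iff, MulAut.conjNormal_apply,
    MulAut.one_apply, Subtype.forall, mul_inv_eq_iff_eq_mul, mem_centralizer_iff, SetLike.mem_coe]
  exact forall₂_congr fun _ _ => eq_comm

theorem inf_center_ne_bot_of_isPGroup_quotient [Fact p.Prime] [N.Normal] [Finite N] [Nontrivial N]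
    (hN : IsPGroup p N) {M : Subgroup G} [M.Normal] (hGM : IsPGroup p (G ⧸ M))
    (hNM : N ≤ centralizer M) : N ⊓ center G ≠ ⊥ := by
  let conj : G ⧸ M →* MulAut N := QuotientGroup.lift M MulAut.conjNormal
    (by rw [ker_conjNormal]; exact le_centralizer_iff.1 hNM)
  have p_dvd_card : p ∣ Nat.card N := hN.card_eq_or_dvd.resolve_left Finite.one_lt_card.ne'
  obtain ⟨x, hx, hx_ne⟩ := (hGM.of_surjective conj.rangeRestrict
    conj.rangeRestrict_surjective).exists_fixed_point_of_prime_dvd_card_of_fixed_point N p_dvd_card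
    (a := 1) smul_one
  have x_central : (x : G) ∈ center G := mem_center_iff.2 fun g => by
    have : MulAut.conjNormal g x = x := hx (conj.rangeRestrict g)
    rw [Subtype.ext_iff, MulAut.conjNormal_apply] at this
    exact mul_inv_eq_iff_eq_mul.1 this
  intro h
  exact hx_ne.symm (Subtype.ext (mem_bot.1 (h ▸ mem_inf.2 ⟨x.2, x_central⟩)))

theorem inf_centralizer_eq_bot_of_minimal [Fact p.Prime] [N.Normal] [Finite N]
    (hN : IsPGroup p N) {M : Subgroup G} [M.Normal] (hGM : IsPGroup p (G ⧸ M))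
    (hmin : ∀ H ≤ N, H.Normal → H = ⊥ ∨ H = N) (hcenter : ¬ N ≤ center G) :
    N ⊓ centralizer M = ⊥ := by
  refine (hmin _ inf_le_left inferInstance).resolve_right fun hfix => ?_
  have : Nontrivial N := (nontrivial_iff_ne_bot N).2 fun h => hcenter (h ▸ bot_le)
  have inf_center : N ⊓ center G = N := (hmin _ inf_le_left inferInstance).resolve_left
    (inf_center_ne_bot_of_isPGroup_quotient hN hGM (inf_eq_left.1 hfix))
  exact hcenter (inf_eq_left.1 inf_center)

theorem card_dvd_of_le_center_of_minimal {n : ℕ} (hexp : ∀ x ∈ N, x ^ n = 1)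
    (hmin : ∀ H ≤ N, H.Normal → H = ⊥ ∨ H = N) (hcenter : N ≤ center G) : Nat.card N ∣ n := by
  obtain rfl | ⟨x, hx, hx_ne⟩ := N.bot_or_exists_ne_one
  · rw [card_bot]; exact one_dvd n
  have zpowers_le : zpowers x ≤ N := zpowers_le.2 hx
  have zpowers_normal : (zpowers x).Normal := ⟨fun y hy g => by
    rwa [mem_center_iff.1 (hcenter (zpowers_le hy)) g, mul_inv_cancel_right]⟩
  have zpowers_eq : zpowers x = N :=
    (hmin _ zpowers_le zpowers_normal).resolve_left (zpowers_ne_bot.2 hx_ne)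
  rw [← zpowers_eq, Nat.card_zpowers]
  exact orderOf_dvd_of_pow_eq_one (hexp x hx)

theorem not_le_center_of_minimal {d : ℕ} [Fact p.Prime] (hexp : ∀ x ∈ N, x ^ p = 1)
    (hmin : ∀ H ≤ N, H.Normal → H = ⊥ ∨ H = N) (hcard : Nat.card N = p ^ d) (hd : 1 < d) :
    ¬ N ≤ center G := fun hcenter => by
  have pow_dvd : p ^ d ∣ p ^ 1 := by
    rw [pow_one, ← hcard]
    exact card_dvd_of_le_center_of_minimal hexp hmin hcenter
  exact hd.not_ge ((Nat.pow_dvd_pow_iff_le_right (Fact.out : p.Prime).one_lt).1 pow_dvd)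

end MinimalNormal

section Extension

variable {G Γ : Type*} [Group G] [Group Γ] {π : Γ →* G}

theorem exists_section_of_isComplement'_ker (hπ : Function.Surjective π) {K : Subgroup Γ}
    (hK : IsComplement' π.ker K) : ∃ σ : G →* Γ, π.comp σ = MonoidHom.id G := by
  let e : K ≃* G :=
    hK.symm.QuotientMulEquiv.symm.trans (QuotientGroup.quotientKerEquivOfSurjective π hπ)
  have π_coe (k : K) : π k = e k := rfl
  refine ⟨K.subtype.comp e.symm, MonoidHom.ext fun g => ?_⟩
  exact (π_coe (e.symm g)).trans (e.apply_symm_apply g)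

theorem isPGroup_quotient_comap {p : ℕ} {A : Subgroup G} [A.Normal] (hGA : IsPGroup p (G ⧸ A)) :
    IsPGroup p (Γ ⧸ A.comap π) :=
  hGA.of_injective (QuotientGroup.map (A.comap π) A π le_rfl) <| by
    rw [← MonoidHom.ker_eq_bot_iff, QuotientGroup.ker_map, QuotientGroup.map_mk'_self]

theorem relIndex_ker_comap_of_surjective (hπ : Function.Surjective π) (A : Subgroup G) :
    π.ker.relIndex (A.comap π) = Nat.card A := by
  rw [relIndex_ker, map_comap_eq_self_of_surjective hπ]

end Extension

theorem stmt_2_general {l : ℕ} [Fact l.Prime] {G Γ : Type*} [Group G] [Group Γ]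
    (A : Subgroup G) [A.Normal] (hA : Nat.Coprime (Nat.card A) l) (hGA : IsPGroup l (G ⧸ A))
    (π : Γ →* G) (hπ : Function.Surjective π) [Finite π.ker]
    (hab : ∀ x y : Γ, x ∈ π.ker → y ∈ π.ker → x * y = y * x)
    (hexp : ∀ x : Γ, x ∈ π.ker → x ^ l = 1)
    (hcenter : ¬ π.ker ≤ center Γ)
    (hsimple : ∀ H : Subgroup Γ, H ≤ π.ker →
      (∀ γ : Γ, ∀ x ∈ H, γ * x * γ⁻¹ ∈ H) → H = ⊥ ∨ H = π.ker) :
    ∃ σ : G →* Γ, π.comp σ = MonoidHom.id G := by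
  have : IsMulCommutative π.ker := ⟨⟨fun x y => Subtype.ext (hab x y x.2 y.2)⟩⟩
  have isPGroup_ker : IsPGroup l π.ker := fun x =>
    ⟨1, Subtype.ext (by rw [pow_one]; exact hexp x x.2)⟩
  have relIndex_eq : π.ker.relIndex (A.comap π) = Nat.card A :=
    relIndex_ker_comap_of_surjective hπ A
  have card_ne_zero : Nat.card A ≠ 0 := fun h =>
    (Fact.out : l.Prime).ne_one ((Nat.coprime_zero_left l).1 (h ▸ hA))
  have : π.ker.IsFiniteRelIndex (A.comap π) := ⟨relIndex_eq ▸ card_ne_zero⟩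
  have coprime : (Nat.card π.ker).Coprime (π.ker.relIndex (A.comap π)) := by
    obtain ⟨n, card_ker⟩ := IsPGroup.iff_card.1 isPGroup_ker
    rw [card_ker, relIndex_eq]
    exact (hA.pow_right n).symm
  have no_invariants : π.ker ⊓ centralizer (A.comap π : Subgroup Γ) = ⊥ :=
    inf_centralizer_eq_bot_of_minimal isPGroup_ker (isPGroup_quotient_comap hGA)
      (fun H hle hH => hsimple H hle fun γ x hx => hH.conj_mem x hx γ) hcenter
  obtain ⟨L, hL⟩ :=
    exists_isComplement'_of_inf_centralizer_eq_bot (ker_le_comap π A) coprime no_invariants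
  exact exists_section_of_isComplement'_ker hπ hL

/-- If `l` is prime, `G` a finite group with a normal subgroup `A` of order coprime to `l`
and of index a power of `l`, and `π : Γ → G` is a surjective homomorphism whose kernel `C`
is a finite abelian group of exponent dividing `l` which, as an `𝔽_l[G]`-module under
conjugation, is simple of dimension `> 1` (i.e. of cardinality `l ^ d` with `d > 1`,
having no `Γ`-stable proper nontrivial subgroups), then `π` admits a section. -/
theorem stmt_2 (l : ℕ) [hl : Fact l.Prime] (G : Type) [Group G] [Finite G]
    (A : Subgroup G) [A.Normal] (hA : Nat.Coprime (Nat.card A) l)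
    (hidx : ∃ k : ℕ, A.index = l ^ k)
    (Γ : Type) [Group Γ] (π : Γ →* G) (hπ : Function.Surjective π)
    [Finite π.ker]
    (hab : ∀ x y : Γ, x ∈ π.ker → y ∈ π.ker → x * y = y * x)
    (hexp : ∀ x : Γ, x ∈ π.ker → x ^ l = 1)
    (hdim : ∃ d : ℕ, Nat.card π.ker = l ^ d ∧ 1 < d)
    (hsimple : ∀ H : Subgroup Γ, H ≤ π.ker →
      (∀ γ : Γ, ∀ x ∈ H, γ * x * γ⁻¹ ∈ H) → H = ⊥ ∨ H = π.ker) :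
    ∃ σ : G →* Γ, π.comp σ = MonoidHom.id G := by
  obtain ⟨k, hk⟩ := hidx
  obtain ⟨d, hcard, hd⟩ := hdim
  exact stmt_2_general A hA (IsPGroup.of_card hk) π hπ hab hexp (not_le_center_of_minimal hexp
    (fun H hle hH => hsimple H hle fun γ x hx => hH.conj_mem x hx γ) hcard hd) hsimple
end

section
/- Fix a prime p and an integer n ≥ 1, and set e_n = p^n − 1. Fix an algebraic closure Ω of the p-adic field ℚ_p, let K_n = ℚ_p(ζ) ⊆ Ω where ζ ∈ Ω is a primitive e_n-th root of unity, and let L_n ⊆ Ω be the field generated over K_n by all x ∈ Ω with x^{e_n} ∈ K_n. Then L_n is a finite Galois extension of ℚ_p and [L_n : ℚ_p] = s_n · (p^n − 1)², where s_n is the multiplicative order of p modulo p^n − 1. -/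
/-! Let `k` be a nonarchimedean local field with uniformizer `ϖ` and residue field of order `q`, and
let `m` be prime to `q`. Reduction modulo the maximal ideal separates roots of unity of order prime
to `q`, so `k⟮ζ⟯`, for `ζ` a primitive `m`-th root of unity, is unramified of degree `s`, the order
of `q` modulo `m`, and every unit of `k⟮ζ⟯` is a `(q ^ s - 1)`-th root of unity times an element
near `1`, which is an `m`-th power. Hence every nonzero `x` in `k⟮ζ⟯` has the form
`ϖ ^ n * η * v ^ m` with `η ^ (q ^ s - 1) = 1`, and adjoining all `m`-th roots of such `x` amounts
to adjoining a primitive `m * (q ^ s - 1)`-th root of unity `ξ` and one `π` with `π ^ m = ϖ`. The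
first step is unramified of degree `s * m`, the order of `q` modulo `m * (q ^ s - 1)`; the second is
totally ramified of degree `m`, because the norms of `1, π, …, π ^ (m - 1)` are distinct modulo the
value group of `k⟮ξ⟯`. -/

open Polynomial IsLocalRing IntermediateField
open scoped NormedField Valued

section OrderModulo

variable {a : ℕ}

theorem natCast_zmod_pow_eq_one_iff_dvd (ha : a ≠ 0) (N t : ℕ) :
    (a : ZMod N) ^ t = 1 ↔ N ∣ a ^ t - 1 := by
  rw [← Nat.cast_pow, ← Nat.cast_one, eq_comm, ZMod.natCast_eq_natCast_iff,
    Nat.modEq_iff_dvd' (Nat.one_le_pow _ _ (Nat.pos_of_ne_zero ha))]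

theorem dvd_pow_orderOf_natCast_zmod_sub_one (ha : a ≠ 0) (m : ℕ) :
    m ∣ a ^ orderOf (a : ZMod m) - 1 :=
  (natCast_zmod_pow_eq_one_iff_dvd ha m _).1 (pow_orderOf_eq_one _)

theorem pow_sub_one_dvd_pow_sub_one_iff (ha : 1 < a) (n t : ℕ) :
    a ^ n - 1 ∣ a ^ t - 1 ↔ n ∣ t := by
  have hpos (j : ℕ) : 1 ≤ a ^ j := Nat.one_le_pow _ _ (by lia)
  rw [← Nat.gcd_eq_left_iff_dvd, Nat.pow_sub_one_gcd_pow_sub_one,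
    tsub_left_inj (hpos _) (hpos _), Nat.pow_right_inj ha, Nat.gcd_eq_left_iff_dvd]

theorem orderOf_natCast_zmod_pow_sub_one (ha : 1 < a) (n : ℕ) :
    orderOf (a : ZMod (a ^ n - 1)) = n := by
  have hpow := natCast_zmod_pow_eq_one_iff_dvd (by lia : a ≠ 0) (a ^ n - 1)
  apply Nat.dvd_antisymm
  · rw [orderOf_dvd_iff_pow_eq_one, hpow]
  · rw [← pow_sub_one_dvd_pow_sub_one_iff ha, ← hpow, pow_orderOf_eq_one]

-- The cofactor of `a ^ n - 1` in `a ^ (n * u) - 1` is a sum of `u` powers of `a ^ n ≡ 1 [MOD m]`.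
theorem mul_pow_sub_one_dvd_pow_mul_sub_one_iff {n m : ℕ} (ha : 1 < a) (hn : n ≠ 0)
    (hm : m ∣ a ^ n - 1) (u : ℕ) : m * (a ^ n - 1) ∣ a ^ (n * u) - 1 ↔ m ∣ u := by
  have hlt : 1 < a ^ n := Nat.one_lt_pow hn ha
  have hmod : (a : ZMod m) ^ n = 1 := (natCast_zmod_pow_eq_one_iff_dvd (by lia) m n).2 hm
  rw [pow_mul, ← geom_sum_mul_of_one_le hlt.le, Nat.mul_dvd_mul_iff_right (Nat.sub_pos_of_lt hlt),
    ← ZMod.natCast_eq_zero_iff, ← ZMod.natCast_eq_zero_iff u]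
  simp [hmod]

theorem orderOf_natCast_zmod_mul_pow_sub_one {n m : ℕ} (ha : 1 < a) (hn : n ≠ 0)
    (hm : m ∣ a ^ n - 1) : orderOf (a : ZMod (m * (a ^ n - 1))) = n * m := by
  have hpow := natCast_zmod_pow_eq_one_iff_dvd (by lia : a ≠ 0) (m * (a ^ n - 1))
  apply Nat.dvd_antisymm
  · rw [orderOf_dvd_iff_pow_eq_one, hpow, mul_pow_sub_one_dvd_pow_mul_sub_one_iff ha hn hm]
  · have hdvd := (hpow _).1 (pow_orderOf_eq_one (a : ZMod (m * (a ^ n - 1))))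
    obtain ⟨u, hu⟩ : n ∣ orderOf (a : ZMod (m * (a ^ n - 1))) :=
      (pow_sub_one_dvd_pow_sub_one_iff ha _ _).1 ((dvd_mul_left _ _).trans hdvd)
    rw [hu, mul_pow_sub_one_dvd_pow_mul_sub_one_iff ha hn hm] at hdvd
    exact hu ▸ Nat.mul_dvd_mul_left n hdvd

theorem coprime_pow_sub_one {n : ℕ} (ha : a ≠ 0) (hn : n ≠ 0) : a.Coprime (a ^ n - 1) := by
  refine .coprime_dvd_left (dvd_pow_self a hn) ?_
  rw [Nat.coprime_self_sub_right (Nat.one_le_pow _ _ (Nat.pos_of_ne_zero ha))]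
  exact Nat.coprime_one_right _

theorem orderOf_natCast_zmod_ne_zero {m : ℕ} (hm : a.Coprime m) : orderOf (a : ZMod m) ≠ 0 := by
  rcases eq_or_ne m 0 with rfl | hm0
  · simp [(Nat.coprime_zero_right a).1 hm]
  · have : NeZero m := ⟨hm0⟩
    exact ((ZMod.isUnit_iff_coprime a m).2 hm).isOfFinOrder.orderOf_pos.ne'

end OrderModulo

section NearbyRoots

theorem norm_eq_one_of_pow_eq_one {F : Type*} [NormedField F] {m : ℕ} (hm : m ≠ 0) {z : F}
    (hz : z ^ m = 1) : ‖z‖ = 1 :=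
  (isOfFinOrder_iff_pow_eq_one.2 ⟨m, Nat.pos_of_ne_zero hm, hz⟩).norm_eq_one

theorem exists_isRoot_norm_sub_lt_one_of_monic {F : Type*} [NormedField F] {f : F[X]}
    (hf : f.Monic) (hs : f.Splits) {z : F} (hz : ‖f.eval z‖ < 1) :
    ∃ η, f.IsRoot η ∧ ‖z - η‖ < 1 := by
  by_contra! hfar
  refine hz.not_ge ?_
  rw [hs.eval_eq_prod_roots_of_monic hf]
  change 1 ≤ normHom (α := F) _
  rw [map_multiset_prod, Multiset.map_map]
  refine Multiset.one_le_prod ?_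
  simpa using fun _ η _ hη h ↦ h ▸ hfar η hη

theorem exists_pow_eq_one_norm_sub_lt_one {F : Type*} [NormedField F] [IsSepClosed F] {m : ℕ}
    (hm : (m : F) ≠ 0) {z : F} (hz : ‖z ^ m - 1‖ < 1) : ∃ η, η ^ m = 1 ∧ ‖z - η‖ < 1 := by
  have hm0 : m ≠ 0 := by rintro rfl; simp at hm
  obtain ⟨η, hη, hzη⟩ := exists_isRoot_norm_sub_lt_one_of_monic (f := X ^ m - 1) (z := z)
    (monic_X_pow_sub_C 1 hm0) (IsSepClosed.splits_of_separable _ (X_pow_sub_one_separable_iff.2 hm))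
    (by simpa using hz)
  exact ⟨η, by simpa [sub_eq_zero] using hη, hzη⟩

variable {F : Type*} [NontriviallyNormedField F] [IsUltrametricDist F]

theorem exists_integer_eq_of_pow_eq_one {m : ℕ} (hm : m ≠ 0) {ζ : F} (hζ : ζ ^ m = 1) :
    ∃ w : 𝒪[F], (w : F) = ζ :=
  ⟨⟨ζ, Valued.integer.mem_iff.2 (norm_eq_one_of_pow_eq_one hm hζ).le⟩, rfl⟩

theorem residue_eq_zero_iff_norm_lt_one {x : 𝒪[F]} : residue 𝒪[F] x = 0 ↔ ‖(x : F)‖ < 1 := by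
  rw [residue_eq_zero_iff, mem_maximalIdeal, mem_nonunits_iff,
    Valued.integer.isUnit_iff_norm_eq_one, ← ne_eq, ← (Valued.integer.norm_le_one x).lt_iff_ne]
  rfl

theorem norm_eq_one_of_norm_sub_one_lt_one {x : F} (hx : ‖x - 1‖ < 1) : ‖x‖ = 1 := by
  refine (IsUltrametricDist.norm_eq_of_add_norm_lt_max (y := -1) ?_).trans (by simp)
  rw [← sub_eq_add_neg, norm_neg, norm_one]
  exact hx.trans_le (le_max_right _ _)

theorem eq_one_of_pow_eq_one_of_norm_sub_one_lt_one {m : ℕ} (hm : ‖(m : F)‖ = 1) {z : F}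
    (hz : z ^ m = 1) (hz1 : ‖z - 1‖ < 1) : z = 1 := by
  lift z to 𝒪[F] using Valued.integer.mem_iff.2 (norm_eq_one_of_norm_sub_one_lt_one hz1).le
  by_contra hne
  have hsum : ∑ i ∈ Finset.range m, z ^ i = 0 := by
    refine (mul_eq_zero.1 ?_).resolve_right
      (sub_ne_zero.2 fun h : z = 1 ↦ hne (congrArg Subtype.val h))
    rw [geom_sum_mul, sub_eq_zero]
    exact Subtype.ext hz
  have hres : residue 𝒪[F] z = 1 := by
    rw [← sub_eq_zero, ← map_one (residue 𝒪[F]), ← map_sub]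
    exact residue_eq_zero_iff_norm_lt_one.2 hz1
  have hm_res : residue 𝒪[F] m = 0 := by
    simpa [hres] using congrArg (residue 𝒪[F]) hsum
  exact (residue_eq_zero_iff_norm_lt_one.1 hm_res).ne (by simpa using hm)

theorem eq_of_pow_eq_of_norm_sub_lt {m : ℕ} (hm : ‖(m : F)‖ = 1) {x y : F}
    (hxy : x ^ m = y ^ m) (hlt : ‖x - y‖ < ‖y‖) : x = y := by
  have hy : y ≠ 0 := norm_pos_iff.1 ((norm_nonneg _).trans_lt hlt)
  rw [← div_eq_one_iff_eq hy]
  refine eq_one_of_pow_eq_one_of_norm_sub_one_lt_one hm ?_ ?_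
  · rw [div_pow, hxy, div_self (pow_ne_zero _ hy)]
  · rwa [div_sub_one hy, norm_div, div_lt_one (norm_pos_iff.2 hy)]

end NearbyRoots

section Residue

variable {F : Type*} [NontriviallyNormedField F] [IsUltrametricDist F]

theorem norm_natCast_eq_one_of_coprime_card {A : Type*} [NormedField A] [NormedAlgebra F A] {m : ℕ}
    (hm : (Nat.card 𝓀[F]).Coprime m) : ‖(m : A)‖ = 1 := by
  have hm_res : residue 𝒪[F] m ≠ 0 := by
    rw [map_natCast]
    have hcard : (Nat.card 𝓀[F] : 𝓀[F]) = 0 := by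
      rcases finite_or_infinite 𝓀[F] with h | h
      · have := Fintype.ofFinite 𝓀[F]
        rw [Nat.card_eq_fintype_card, Nat.cast_card_eq_zero]
      · simp
    simpa [hcard] using hm.cast (R := 𝓀[F])
  rw [← map_natCast (algebraMap F A), norm_algebraMap']
  refine (IsUltrametricDist.norm_natCast_le_one F m).eq_of_not_lt fun hlt ↦ hm_res ?_
  exact residue_eq_zero_iff_norm_lt_one.2 (by simpa using hlt)

theorem isPrimitiveRoot_residue {m : ℕ} (hm : ‖(m : F)‖ = 1) {w : 𝒪[F]}
    (hw : IsPrimitiveRoot (w : F) m) : IsPrimitiveRoot (residue 𝒪[F] w) m where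
  pow_eq_one := by
    rw [← map_pow, show w ^ m = 1 from Subtype.ext hw.pow_eq_one, map_one]
  dvd_of_pow_eq_one l hl := by
    refine hw.dvd_of_pow_eq_one l (eq_one_of_pow_eq_one_of_norm_sub_one_lt_one hm ?_ ?_)
    · rw [← pow_mul, mul_comm, pow_mul, hw.pow_eq_one, one_pow]
    · rw [← sub_eq_zero, ← map_pow, ← map_one (residue 𝒪[F]), ← map_sub] at hl
      simpa using residue_eq_zero_iff_norm_lt_one.1 hl

variable {k Ω : Type*} [NontriviallyNormedField k] [IsUltrametricDist k]
  [NontriviallyNormedField Ω] [IsUltrametricDist Ω] [NormedAlgebra k Ω]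

instance hasExtension_of_normedAlgebra :
    (Valued.v : Valuation k _).HasExtension (Valued.v : Valuation Ω _) where
  val_isEquiv_comap := by
    rw [Valuation.isEquiv_iff_val_le_one]
    intro x
    simp [NormedField.valuation_apply, ← NNReal.coe_le_coe]

theorem coe_aeval_integer (w : 𝒪[Ω]) (G : 𝒪[k][X]) : (aeval w G : 𝒪[Ω]) = aeval (w : Ω) G :=
  (aeval_algebraMap_apply Ω w G).symm

theorem residue_aeval (w : 𝒪[Ω]) (G : 𝒪[k][X]) :
    residue 𝒪[Ω] (aeval w G) = aeval (residue 𝒪[Ω] w) (G.map (residue 𝒪[k])) := by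
  change algebraMap 𝒪[Ω] 𝓀[Ω] _ = aeval (algebraMap 𝒪[Ω] 𝓀[Ω] w) (G.map (algebraMap 𝒪[k] 𝓀[k]))
  rw [aeval_map_algebraMap, aeval_algebraMap_apply]

theorem aeval_residue_eq_zero_iff {G : 𝒪[k][X]} {w : 𝒪[Ω]} :
    aeval (residue 𝒪[Ω] w) (G.map (residue 𝒪[k])) = 0 ↔ ‖aeval (w : Ω) G‖ < 1 := by
  rw [← residue_aeval, residue_eq_zero_iff_norm_lt_one, coe_aeval_integer]

-- Divide by a coefficient of maximal norm.
theorem exists_eq_C_mul_map_residue_ne_zero {g : k[X]} (hg : g ≠ 0) :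
    ∃ c ≠ 0, ∃ G : 𝒪[k][X], g = C c * G.map (algebraMap 𝒪[k] k) ∧ G.map (residue 𝒪[k]) ≠ 0 := by
  obtain ⟨i, hi, hmax⟩ := g.support.exists_max_image (‖g.coeff ·‖) (by simpa using hg)
  have hc : g.coeff i ≠ 0 := mem_support_iff.1 hi
  have hle (j : ℕ) : ‖(g.coeff i)⁻¹ * g.coeff j‖ ≤ 1 := by
    rw [norm_mul, norm_inv, inv_mul_le_one₀ (norm_pos_iff.2 hc)]
    by_cases hj : g.coeff j = 0
    · simp [hj]
    · exact hmax j (mem_support_iff.2 hj)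
  obtain ⟨G, hG⟩ : C (g.coeff i)⁻¹ * g ∈ lifts (algebraMap 𝒪[k] k) := by
    rw [lifts_iff_coeff_lifts]
    intro j
    exact ⟨⟨(g.coeff i)⁻¹ * g.coeff j, Valued.integer.mem_iff.2 (hle j)⟩, (coeff_C_mul g).symm⟩
  rw [coe_mapRingHom] at hG
  refine ⟨g.coeff i, hc, G, ?_, fun h0 ↦ ?_⟩
  · rw [hG, ← mul_assoc, ← C_mul, mul_inv_cancel₀ hc, C_1, one_mul]
  · have hcoeff : (G.coeff i : k) = 1 := by
      simpa [hc] using congrArg (coeff · i) hG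
    have hres : residue 𝒪[k] (G.coeff i) = 0 := by rw [← coeff_map, h0, coeff_zero]
    simpa [hcoeff] using residue_eq_zero_iff_norm_lt_one.1 hres

theorem norm_aeval_eq_one {w : 𝒪[Ω]} {G : 𝒪[k][X]} (hG : G.map (residue 𝒪[k]) ≠ 0)
    (hdeg : G.natDegree < (minpoly 𝓀[k] (residue 𝒪[Ω] w)).natDegree) : ‖aeval (w : Ω) G‖ = 1 := by
  have hle : ‖aeval (w : Ω) G‖ ≤ 1 := coe_aeval_integer w G ▸ Valued.integer.norm_le_one _
  refine hle.eq_of_not_lt fun hlt ↦ hdeg.not_ge ?_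
  exact (natDegree_le_natDegree <|
    minpoly.degree_le_of_ne_zero _ _ hG (aeval_residue_eq_zero_iff.2 hlt)).trans natDegree_map_le

theorem natDegree_minpoly_residue_le {w : 𝒪[Ω]} (hw : IsIntegral k (w : Ω)) :
    (minpoly 𝓀[k] (residue 𝒪[Ω] w)).natDegree ≤ (minpoly k (w : Ω)).natDegree := by
  by_contra! hlt
  obtain ⟨c, hc, G, hg, hG⟩ := exists_eq_C_mul_map_residue_ne_zero (minpoly.ne_zero hw)
  rw [hg, natDegree_C_mul hc, natDegree_map_eq_of_injective (FaithfulSMul.algebraMap_injective _ _)]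
    at hlt
  have hzero : aeval (w : Ω) (minpoly k (w : Ω)) = 0 := minpoly.aeval _ _
  rw [hg, map_mul, aeval_C, aeval_map_algebraMap, mul_eq_zero, map_eq_zero, or_iff_right hc]
    at hzero
  simpa [hzero] using norm_aeval_eq_one hG hlt

end Residue

section Unramified

theorem natDegree_minpoly_of_isPrimitiveRoot {K L : Type*} [Field K] [Finite K] [Field L]
    [Algebra K L] {m : ℕ} (hm : (Nat.card K).Coprime m) {ζ : L} (hζ : IsPrimitiveRoot ζ m) :
    (minpoly K ζ).natDegree = orderOf (Nat.card K : ZMod m) := by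
  have := Fintype.ofFinite K
  obtain ⟨p, _, f, hp, hcard⟩ := FiniteField.card' K
  have : Fact p.Prime := ⟨hp⟩
  rw [Nat.card_eq_fintype_card, hcard] at hm ⊢
  have hpm : p.Coprime m := (Nat.coprime_pow_left_iff f.pos p m).1 hm
  have hm0 : m ≠ 0 := by rintro rfl; exact hp.one_lt.ne' (by simpa using hpm)
  have hint : IsIntegral K ζ := (hζ.isIntegral (Nat.pos_of_ne_zero hm0)).tower_top
  have hdvd : minpoly K ζ ∣ cyclotomic m K := minpoly.dvd _ _ <| by
    rw [aeval_def, ← eval_map, map_cyclotomic]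
    exact hζ.isRoot_cyclotomic (Nat.pos_of_ne_zero hm0)
  rw [natDegree_of_dvd_cyclotomic_of_irreducible hcard hpm hdvd (minpoly.irreducible hint),
    ← orderOf_units, ZMod.coe_unitOfCoprime]

theorem norm_algEquiv {k Ω : Type*} [NontriviallyNormedField k] [IsUltrametricDist k]
    [CompleteSpace k] [NormedField Ω] [NormedAlgebra k Ω] [Algebra.IsAlgebraic k Ω]
    (σ : Gal(Ω/k)) (x : Ω) : ‖σ x‖ = ‖x‖ := by
  simp_rw [NormedAlgebra.norm_eq_spectralNorm k, ← spectralNorm_eq_of_equiv]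

variable {k Ω : Type*} [NontriviallyNormedField k] [IsUltrametricDist k] [CompleteSpace k]
  [NontriviallyNormedField Ω] [IsUltrametricDist Ω] [NormedAlgebra k Ω]

theorem aeval_residue_minpoly_residue_eq_zero_of_algEquiv [Algebra.IsAlgebraic k Ω] {w z : 𝒪[Ω]}
    (σ : Gal(Ω/k)) (hσ : σ w = (z : Ω)) :
    aeval (residue 𝒪[Ω] z) (minpoly 𝓀[k] (residue 𝒪[Ω] w)) = 0 := by
  obtain ⟨H, hH⟩ := map_surjective (residue 𝒪[k]) residue_surjective
    (minpoly 𝓀[k] (residue 𝒪[Ω] w))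
  rw [← hH, aeval_residue_eq_zero_iff, ← hσ]
  have hconj : aeval (σ w) H = σ (aeval (w : Ω) H) :=
    aeval_algHom_apply ((σ : Ω →ₐ[k] Ω).restrictScalars 𝒪[k]) (w : Ω) H
  rw [hconj, norm_algEquiv, ← aeval_residue_eq_zero_iff, hH, minpoly.aeval]

-- Conjugates of `w` are `m`-th roots of unity, which reduction modulo the maximal ideal separates.
theorem natDegree_minpoly_residue_of_pow_eq_one [IsGalois k Ω] {m : ℕ} (hm : ‖(m : Ω)‖ = 1)
    {w : 𝒪[Ω]} (hw : w ^ m = 1) :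
    (minpoly 𝓀[k] (residue 𝒪[Ω] w)).natDegree = (minpoly k (w : Ω)).natDegree := by
  have hint : IsIntegral k (w : Ω) := Algebra.IsIntegral.isIntegral _
  have hm0 : m ≠ 0 := by rintro rfl; simp at hm
  have hint_res : IsIntegral 𝓀[k] (residue 𝒪[Ω] w) :=
    .of_pow (Nat.pos_of_ne_zero hm0) (by rw [← map_pow, hw, map_one]; exact isIntegral_one)
  have hconj : ∀ y ∈ (minpoly k (w : Ω)).rootSet Ω, ∃ z : 𝒪[Ω], z = y ∧ z ^ m = 1 ∧
      residue 𝒪[Ω] z ∈ (minpoly 𝓀[k] (residue 𝒪[Ω] w)).rootSet 𝓀[Ω] := by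
    intro y hy
    obtain ⟨σ, hσ⟩ := minpoly.exists_algEquiv_of_root' hint.isAlgebraic (mem_rootSet.1 hy).2
    have hnorm : ‖y‖ ≤ 1 := by rw [← hσ, norm_algEquiv]; exact Valued.integer.norm_le_one w
    lift y to 𝒪[Ω] using Valued.integer.mem_iff.2 hnorm
    refine ⟨y, rfl, Subtype.ext ?_, mem_rootSet'.2 ⟨map_ne_zero (minpoly.ne_zero hint_res),
      aeval_residue_minpoly_residue_eq_zero_of_algEquiv σ hσ⟩⟩
    simpa [hσ] using congrArg (σ ∘ Subtype.val) hw
  refine (natDegree_minpoly_residue_le hint).antisymm ?_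
  rw [← card_rootSet_eq_natDegree (K := Ω) (IsGalois.separable k _) (IsGalois.splits k _),
    ← Nat.card_eq_fintype_card, Nat.card_coe_set_eq]
  refine le_trans ?_ (ncard_rootSet_le (minpoly 𝓀[k] (residue 𝒪[Ω] w)) 𝓀[Ω])
  choose! z hz hzm hzres using hconj
  refine Set.ncard_le_ncard_of_injOn (residue 𝒪[Ω] ∘ z) hzres ?_ (rootSet_finite _ _)
  intro x hx y hy hxy
  rw [Function.comp_apply, Function.comp_apply, ← sub_eq_zero, ← map_sub,
    residue_eq_zero_iff_norm_lt_one] at hxy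
  rw [← hz x hx, ← hz y hy]
  have hpow (y) (hy : y ∈ (minpoly k (w : Ω)).rootSet Ω) : (z y : Ω) ^ m = 1 :=
    congrArg Subtype.val (hzm y hy)
  refine eq_of_pow_eq_of_norm_sub_lt hm (by rw [hpow x hx, hpow y hy]) ?_
  rw [norm_eq_one_of_pow_eq_one hm0 (hpow y hy)]
  simpa using hxy

end Unramified

section RootExtraction

variable {k Ω : Type*} [NontriviallyNormedField k] [IsUltrametricDist k] [CompleteSpace k]
  [NontriviallyNormedField Ω] [IsUltrametricDist Ω] [NormedAlgebra k Ω] [IsGalois k Ω]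

-- The root near `1` is fixed by every automorphism over `K`, as these preserve the norm.
theorem exists_pow_eq_of_norm_sub_one_lt_one [IsSepClosed Ω] {m : ℕ} (hm : ‖(m : Ω)‖ = 1)
    {K : IntermediateField k Ω} {u : Ω} (hu : u ∈ K) (hu1 : ‖u - 1‖ < 1) :
    ∃ v ∈ K, v ^ m = u := by
  have hm0 : (m : Ω) ≠ 0 := norm_ne_zero_iff.1 (by simp [hm])
  have : NeZero (m : Ω) := ⟨hm0⟩
  obtain ⟨v₀, hv₀⟩ := IsSepClosed.exists_pow_nat_eq u m
  obtain ⟨η, hη, hη1⟩ := exists_pow_eq_one_norm_sub_lt_one hm0 (z := v₀) (by rwa [hv₀])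
  have hη_norm : ‖η‖ = 1 :=
    norm_eq_one_of_pow_eq_one (by rintro rfl; simp at hm0) hη
  have hη0 : η ≠ 0 := norm_ne_zero_iff.1 (by simp [hη_norm])
  set v := v₀ / η
  have hv : v ^ m = u := by rw [div_pow, hv₀, hη, div_one]
  have hv1 : ‖v - 1‖ < 1 := by rwa [div_sub_one hη0, norm_div, hη_norm, div_one]
  suffices hfix : ∀ σ : Gal(Ω/K), σ v = v by
    obtain ⟨a, ha⟩ := mem_bot.1 ((InfiniteGalois.mem_bot_iff_fixed v).2 hfix)
    exact ⟨v, ha ▸ a.2, hv⟩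
  intro σ
  refine eq_of_pow_eq_of_norm_sub_lt hm ?_ ?_
  · rw [← map_pow, hv]
    exact σ.commutes ⟨u, hu⟩
  · have hσ : ‖σ v - 1‖ < 1 := by
      rw [← map_one σ, ← map_sub]
      exact (norm_algEquiv (σ.restrictScalars k) (v - 1)).trans_lt hv1
    rw [norm_eq_one_of_norm_sub_one_lt_one hv1, ← sub_sub_sub_cancel_right _ _ 1, sub_eq_add_neg]
    exact (IsUltrametricDist.norm_add_le_max _ _).trans_lt (max_lt hσ (by rwa [norm_neg]))

end RootExtraction

section TotallyRamified

-- The constant coefficient of the minimal polynomial is a product of conjugates of norm `‖π‖`.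
theorem natDegree_minpoly_of_norm_pow_eq {K Ω : Type*} [Field K] [NormedField Ω] [Algebra K Ω]
    [Normal K Ω] {r : ℝ} (hr0 : 0 < r) (hr1 : r < 1)
    (hK : ∀ x : K, x ≠ 0 → ∃ n : ℤ, ‖algebraMap K Ω x‖ = r ^ n) {e : ℕ} {π : Ω} {a : K}
    (hπ : π ^ e = algebraMap K Ω a) (hr : ‖π‖ ^ e = r) : (minpoly K π).natDegree = e := by
  have hint : IsIntegral K π := Algebra.IsIntegral.isIntegral π
  have he : e ≠ 0 := by rintro rfl; simp [← hr] at hr1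
  have hπ0 : π ≠ 0 := by rintro rfl; simp [he, ← hr] at hr0
  have hdvd : minpoly K π ∣ X ^ e - C a := minpoly.dvd _ _ (by simp [hπ])
  have hroots : ∀ y ∈ ((minpoly K π).map (algebraMap K Ω)).roots, ‖y‖ = ‖π‖ := by
    intro y hy
    have hye : y ^ e = π ^ e := by
      rw [hπ, ← sub_eq_zero]
      simpa using (isRoot_of_mem_roots hy).dvd (Polynomial.map_dvd _ hdvd)
    rw [← pow_left_inj₀ (norm_nonneg _) (norm_nonneg _) he, ← norm_pow, hye, norm_pow]
  have hsplits := Normal.splits ‹Normal K Ω› π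
  have hcoeff : ‖algebraMap K Ω ((minpoly K π).coeff 0)‖ = ‖π‖ ^ (minpoly K π).natDegree := by
    rw [← coeff_map, hsplits.coeff_zero_eq_prod_roots_of_monic ((minpoly.monic hint).map _),
      norm_mul, norm_pow, norm_neg, norm_one, one_pow, one_mul]
    change normHom (α := Ω) _ = _
    rw [map_multiset_prod, Multiset.map_congr rfl (f := normHom) hroots, Multiset.map_const',
      Multiset.prod_replicate, ← hsplits.natDegree_eq_card_roots, natDegree_map]
  obtain ⟨n, hn⟩ := hK _ (minpoly.coeff_zero_ne_zero hint hπ0)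
  have hpow : r ^ (minpoly K π).natDegree = r ^ (n * e) := by
    rw [← hr, ← pow_mul, mul_comm, pow_mul, ← hcoeff, hn, hr, zpow_mul, zpow_natCast]
  rw [← zpow_natCast] at hpow
  have hdvd_deg : e ∣ (minpoly K π).natDegree := Int.natCast_dvd_natCast.1
    ⟨n, by rw [zpow_right_injective₀ hr0 hr1.ne hpow, mul_comm]⟩
  refine (Nat.le_of_dvd (minpoly.natDegree_pos hint) hdvd_deg).antisymm' ?_
  simpa using natDegree_le_of_dvd hdvd (monic_X_pow_sub_C a he).ne_zero

end TotallyRamified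

section UnramifiedElements

theorem aeval_pow_card_pow_eq {K L : Type*} [Field K] [Finite K] [Field L] [Algebra K L] {x : L}
    {s : ℕ} (hx : x ^ Nat.card K ^ s = x) (g : K[X]) :
    aeval x g ^ Nat.card K ^ s = aeval x g := by
  have := Fintype.ofFinite K
  have hfrob (y : L) : (FiniteField.frobeniusAlgHom K L ^ s) y = y ^ Nat.card K ^ s := by
    rw [AlgHom.coe_pow, FiniteField.coe_frobeniusAlgHom, pow_iterate, Nat.card_eq_fintype_card]
  rw [← hfrob, ← aeval_algHom_apply, hfrob, hx]

variable {k Ω : Type*} [NontriviallyNormedField k] [IsUltrametricDist k]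
  [NontriviallyNormedField Ω] [IsUltrametricDist Ω] [NormedAlgebra k Ω]

theorem exists_eq_mul_aeval_of_mem_adjoin {w : 𝒪[Ω]} (hint : IsIntegral k (w : Ω))
    (hdeg : (minpoly 𝓀[k] (residue 𝒪[Ω] w)).natDegree = (minpoly k (w : Ω)).natDegree) {x : Ω}
    (hx : x ∈ k⟮(w : Ω)⟯) (hx0 : x ≠ 0) :
    ∃ c ≠ 0, ∃ G : 𝒪[k][X], ‖aeval (w : Ω) G‖ = 1 ∧ x = algebraMap k Ω c * aeval (w : Ω) G := by
  obtain ⟨g, hg⟩ : ∃ g : k[X], aeval (w : Ω) g = x := by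
    rwa [← mem_toSubalgebra, adjoin_simple_toSubalgebra_of_isAlgebraic hint.isAlgebraic,
      Algebra.adjoin_singleton_eq_range_aeval] at hx
  rw [← aeval_modByMonic_eq_self_of_root (minpoly.aeval k (w : Ω))] at hg
  obtain ⟨c, hc, G, hgG, hG⟩ := exists_eq_C_mul_map_residue_ne_zero
    (g := g %ₘ minpoly k (w : Ω)) (by rintro h; simp [h, hx0.symm] at hg)
  refine ⟨c, hc, G, norm_aeval_eq_one hG ?_, ?_⟩
  · rw [hdeg, ← natDegree_map_eq_of_injective (FaithfulSMul.algebraMap_injective 𝒪[k] k),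
      ← natDegree_C_mul hc, ← hgG]
    exact natDegree_modByMonic_lt _ (minpoly.monic hint) (minpoly.ne_one _ _)
  · rw [← hg, hgG, map_mul, aeval_C, aeval_map_algebraMap]

theorem norm_aeval_pow_card_pow_sub_one_sub_one_lt_one [Finite 𝓀[k]] {w : 𝒪[Ω]} {s : ℕ}
    (hw : residue 𝒪[Ω] w ^ Nat.card 𝓀[k] ^ s = residue 𝒪[Ω] w) {G : 𝒪[k][X]}
    (hG : ‖aeval (w : Ω) G‖ = 1) : ‖aeval (w : Ω) G ^ (Nat.card 𝓀[k] ^ s - 1) - 1‖ < 1 := by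
  rw [← coe_aeval_integer] at hG ⊢
  set y := aeval w G
  have hy0 : residue 𝒪[Ω] y ≠ 0 := by
    rw [ne_eq, residue_eq_zero_iff_norm_lt_one, hG]
    exact lt_irrefl 1
  have hy : residue 𝒪[Ω] y ^ Nat.card 𝓀[k] ^ s = residue 𝒪[Ω] y := by
    rw [residue_aeval]
    exact aeval_pow_card_pow_eq hw _
  have hres : residue 𝒪[Ω] (y ^ (Nat.card 𝓀[k] ^ s - 1) - 1) = 0 := by
    rw [map_sub, map_pow, map_one, sub_eq_zero]
    refine mul_right_cancel₀ hy0 ?_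
    rw [pow_sub_one_mul (pow_ne_zero _ Nat.card_pos.ne'), hy, one_mul]
  simpa using residue_eq_zero_iff_norm_lt_one.1 hres

end UnramifiedElements

section RootsOfUnity

variable {k Ω : Type*} [NontriviallyNormedField k] [IsUltrametricDist k] [CompleteSpace k]
  [Finite 𝓀[k]] [NontriviallyNormedField Ω] [IsUltrametricDist Ω] [NormedAlgebra k Ω] [IsGalois k Ω]

theorem finrank_adjoin_of_isPrimitiveRoot {m : ℕ} (hm : (Nat.card 𝓀[k]).Coprime m) {ζ : Ω}
    (hζ : IsPrimitiveRoot ζ m) : Module.finrank k k⟮ζ⟯ = orderOf (Nat.card 𝓀[k] : ZMod m) := by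
  have hm1 : ‖(m : Ω)‖ = 1 := norm_natCast_eq_one_of_coprime_card hm
  have hm0 : m ≠ 0 := by rintro rfl; simp at hm1
  obtain ⟨w, rfl⟩ := exists_integer_eq_of_pow_eq_one hm0 hζ.pow_eq_one
  rw [adjoin.finrank (Algebra.IsIntegral.isIntegral _),
    ← natDegree_minpoly_residue_of_pow_eq_one hm1 (Subtype.ext hζ.pow_eq_one),
    natDegree_minpoly_of_isPrimitiveRoot hm (isPrimitiveRoot_residue hm1 hζ)]

theorem mem_adjoin_of_pow_eq_one [IsSepClosed Ω] {m : ℕ}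
    (hm : (Nat.card 𝓀[k]).Coprime m) {ζ : Ω} (hζ : IsPrimitiveRoot ζ m) {η : Ω}
    (hη : η ^ (Nat.card 𝓀[k] ^ orderOf (Nat.card 𝓀[k] : ZMod m) - 1) = 1) : η ∈ k⟮ζ⟯ := by
  set q := Nat.card 𝓀[k]
  set s := orderOf (q : ZMod m)
  have hcop : q.Coprime (q ^ s - 1) :=
    coprime_pow_sub_one Nat.card_pos.ne' (orderOf_natCast_zmod_ne_zero hm)
  have hN : ‖((q ^ s - 1 : ℕ) : Ω)‖ = 1 := norm_natCast_eq_one_of_coprime_card hcop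
  have : NeZero ((q ^ s - 1 : ℕ) : Ω) := ⟨norm_ne_zero_iff.1 (by simp [hN])⟩
  have : NeZero (q ^ s - 1) := .of_neZero_natCast Ω
  obtain ⟨τ, hτ⟩ := HasEnoughRootsOfUnity.exists_primitiveRoot Ω (q ^ s - 1)
  have hζτ : ζ ∈ k⟮τ⟯ := by
    have hdvd : m ∣ q ^ s - 1 := dvd_pow_orderOf_natCast_zmod_sub_one Nat.card_pos.ne' m
    obtain ⟨i, -, rfl⟩ := hτ.eq_pow_of_pow_eq_one (hζ.pow_eq_one_iff_dvd _ |>.2 hdvd)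
    exact pow_mem (mem_adjoin_simple_self k τ) i
  have := adjoin.finiteDimensional (Algebra.IsIntegral.isIntegral (R := k) τ)
  have heq : k⟮ζ⟯ = k⟮τ⟯ := eq_of_le_of_finrank_eq (adjoin_simple_le_iff.2 hζτ) <| by
    rw [finrank_adjoin_of_isPrimitiveRoot hm hζ, finrank_adjoin_of_isPrimitiveRoot hcop hτ,
      orderOf_natCast_zmod_pow_sub_one Finite.one_lt_card]
  obtain ⟨i, -, rfl⟩ := hτ.eq_pow_of_pow_eq_one hη
  exact heq ▸ pow_mem (mem_adjoin_simple_self k τ) i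

end RootsOfUnity

section Decomposition

variable {k Ω : Type*} [NontriviallyNormedField k] [IsUltrametricDist k] [CompleteSpace k]
  [IsDiscreteValuationRing 𝒪[k]] [Finite 𝓀[k]] [NontriviallyNormedField Ω] [IsUltrametricDist Ω]
  [NormedAlgebra k Ω] [IsGalois k Ω]

theorem exists_eq_zpow_mul_of_mem_adjoin {ϖ : 𝒪[k]} (hϖ : Irreducible ϖ) {m : ℕ}
    (hm : (Nat.card 𝓀[k]).Coprime m) {ζ : Ω} (hζ : IsPrimitiveRoot ζ m) {x : Ω} (hx : x ∈ k⟮ζ⟯)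
    (hx0 : x ≠ 0) : ∃ (n : ℤ) (y : Ω), ‖y‖ = 1 ∧
      ‖y ^ (Nat.card 𝓀[k] ^ orderOf (Nat.card 𝓀[k] : ZMod m) - 1) - 1‖ < 1 ∧
      x = algebraMap k Ω ϖ ^ n * y := by
  have hm1 : ‖(m : Ω)‖ = 1 := norm_natCast_eq_one_of_coprime_card hm
  have hm0 : m ≠ 0 := by rintro rfl; simp at hm1
  obtain ⟨w, rfl⟩ := exists_integer_eq_of_pow_eq_one hm0 hζ.pow_eq_one
  obtain ⟨c, hc, G, hG, rfl⟩ := exists_eq_mul_aeval_of_mem_adjoin (Algebra.IsIntegral.isIntegral _)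
    (natDegree_minpoly_residue_of_pow_eq_one hm1 (Subtype.ext hζ.pow_eq_one)) hx hx0
  obtain ⟨n, u, rfl⟩ := IsDiscreteValuationRing.exists_units_eq_smul_zpow_of_irreducible hϖ hc
  have hy : aeval (w : Ω) (C (u : 𝒪[k]) * G) = algebraMap k Ω u * aeval (w : Ω) G := by
    rw [map_mul, aeval_C]
    rfl
  have hy1 : ‖aeval (w : Ω) (C (u : 𝒪[k]) * G)‖ = 1 := by
    rw [hy, norm_mul, norm_algebraMap', hG, mul_one]
    exact Valued.integer.norm_coe_unit u
  have hw : residue 𝒪[Ω] w ^ Nat.card 𝓀[k] ^ orderOf (Nat.card 𝓀[k] : ZMod m) =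
      residue 𝒪[Ω] w := by
    have hdvd := dvd_pow_orderOf_natCast_zmod_sub_one (a := Nat.card 𝓀[k]) Nat.card_pos.ne' m
    rw [← pow_sub_one_mul (pow_ne_zero _ Nat.card_pos.ne'),
      (isPrimitiveRoot_residue hm1 hζ).pow_eq_one_iff_dvd _ |>.2 hdvd, one_mul]
  refine ⟨n, _, hy1, norm_aeval_pow_card_pow_sub_one_sub_one_lt_one hw hy1, ?_⟩
  rw [hy, Units.smul_def, Algebra.smul_def, map_mul, map_zpow₀]
  change algebraMap k Ω u * algebraMap k Ω ϖ ^ n * _ = _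
  ring

-- The unit part `y` of `x` is near a root of unity `η` of `k⟮ζ⟯`, and `y / η`, being near `1`, is
-- an `m`-th power.
theorem exists_eq_zpow_mul_mul_pow_of_mem_adjoin [IsSepClosed Ω] {ϖ : 𝒪[k]} (hϖ : Irreducible ϖ)
    {m : ℕ} (hm : (Nat.card 𝓀[k]).Coprime m) {ζ : Ω} (hζ : IsPrimitiveRoot ζ m) {x : Ω}
    (hx : x ∈ k⟮ζ⟯) (hx0 : x ≠ 0) : ∃ (n : ℤ) (η : Ω), ∃ v ∈ k⟮ζ⟯,
      η ^ (Nat.card 𝓀[k] ^ orderOf (Nat.card 𝓀[k] : ZMod m) - 1) = 1 ∧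
      x = algebraMap k Ω ϖ ^ n * η * v ^ m := by
  obtain ⟨n, y, -, hyN, rfl⟩ := exists_eq_zpow_mul_of_mem_adjoin hϖ hm hζ hx hx0
  set N := Nat.card 𝓀[k] ^ orderOf (Nat.card 𝓀[k] : ZMod m) - 1
  have hm1 : ‖(m : Ω)‖ = 1 := norm_natCast_eq_one_of_coprime_card hm
  have hN : ‖(N : Ω)‖ = 1 := norm_natCast_eq_one_of_coprime_card (F := k) <|
    coprime_pow_sub_one Nat.card_pos.ne' (orderOf_natCast_zmod_ne_zero hm)
  obtain ⟨η, hη, hyη⟩ := exists_pow_eq_one_norm_sub_lt_one (norm_ne_zero_iff.1 (by simp [hN])) hyN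
  have hη1 : ‖η‖ = 1 := norm_eq_one_of_pow_eq_one (by rintro h; simp [h] at hN) hη
  have hη0 : η ≠ 0 := norm_ne_zero_iff.1 (by simp [hη1])
  have hϖ0 : algebraMap k Ω ϖ ≠ 0 := by simpa using hϖ.ne_zero
  have hymem : y ∈ k⟮ζ⟯ := by
    have hmul := mul_mem (inv_mem (zpow_mem (k⟮ζ⟯.algebraMap_mem ϖ) n)) hx
    rwa [inv_mul_cancel_left₀ (zpow_ne_zero n hϖ0)] at hmul
  obtain ⟨v, hv, hvm⟩ := exists_pow_eq_of_norm_sub_one_lt_one hm1 (K := k⟮ζ⟯) (u := y / η)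
    (div_mem hymem (mem_adjoin_of_pow_eq_one hm hζ hη))
    (by rwa [div_sub_one hη0, norm_div, hη1, div_one])
  refine ⟨n, η, v, hv, hη, ?_⟩
  rw [hvm, mul_assoc, mul_div_cancel₀ _ hη0]

end Decomposition

section KummerExtension

theorem normal_adjoin_of_isPrimitiveRoot {k Ω : Type*} [Field k] [Field Ω] [Algebra k Ω]
    [Normal k Ω] {m : ℕ} (hm : m ≠ 0) {ζ : Ω} (hζ : IsPrimitiveRoot ζ m) : Normal k k⟮ζ⟯ := by
  have : NeZero m := ⟨hm⟩
  rw [normal_iff_forall_map_le']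
  intro σ
  rw [adjoin_map, Set.image_singleton, adjoin_simple_le_iff]
  obtain ⟨i, -, hi⟩ := hζ.eq_pow_of_pow_eq_one (ξ := σ ζ)
    (by rw [← map_pow, hζ.pow_eq_one, map_one])
  exact hi ▸ pow_mem (mem_adjoin_simple_self k ζ) i

theorem normal_adjoin_setOf_pow_mem {k Ω : Type*} [Field k] [Field Ω] [Algebra k Ω] [Normal k Ω]
    (K : IntermediateField k Ω) [Normal k K] (m : ℕ) :
    Normal k (adjoin k {x : Ω | x ^ m ∈ K}) := by
  rw [normal_iff_forall_map_le']
  intro σ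
  rw [adjoin_map, adjoin_le_iff]
  rintro _ ⟨x, hx, rfl⟩
  refine subset_adjoin _ _ ?_
  change σ x ^ m ∈ K
  rw [← map_pow]
  exact normal_iff_forall_map_le'.1 ‹Normal k K› σ ⟨_, hx, rfl⟩

variable {k Ω : Type*} [NontriviallyNormedField k] [IsUltrametricDist k] [CompleteSpace k]
  [IsDiscreteValuationRing 𝒪[k]] [Finite 𝓀[k]] [NontriviallyNormedField Ω] [IsUltrametricDist Ω]
  [NormedAlgebra k Ω] [IsGalois k Ω]

theorem natDegree_minpoly_adjoin_of_pow_eq {ϖ : 𝒪[k]} (hϖ : Irreducible ϖ) {N : ℕ}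
    (hN : (Nat.card 𝓀[k]).Coprime N) {ξ : Ω} (hξ : IsPrimitiveRoot ξ N) {e : ℕ} {π : Ω}
    (hπ : π ^ e = algebraMap k Ω ϖ) : (minpoly k⟮ξ⟯ π).natDegree = e := by
  have hnorm : ‖algebraMap k Ω ϖ‖ = ‖(ϖ : k)‖ := norm_algebraMap' _ _
  refine natDegree_minpoly_of_norm_pow_eq (Valued.integer.norm_irreducible_pos hϖ)
    (Valued.integer.norm_irreducible_lt_one hϖ) (fun x hx ↦ ?_) (a := algebraMap k k⟮ξ⟯ ϖ) hπ ?_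
  · obtain ⟨n, y, hy, -, hxy⟩ := exists_eq_zpow_mul_of_mem_adjoin hϖ hN hξ x.2 (by simpa using hx)
    refine ⟨n, ?_⟩
    change ‖(x : Ω)‖ = _
    rw [hxy, norm_mul, hy, mul_one, norm_zpow, hnorm]
    rfl
  · rw [← norm_pow, hπ, hnorm]
    rfl

variable [IsSepClosed Ω]

theorem adjoin_setOf_pow_mem_eq {ϖ : 𝒪[k]} (hϖ : Irreducible ϖ) {m : ℕ}
    (hm : (Nat.card 𝓀[k]).Coprime m) {ζ ξ π : Ω} (hζ : IsPrimitiveRoot ζ m)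
    (hξ : IsPrimitiveRoot ξ (m * (Nat.card 𝓀[k] ^ orderOf (Nat.card 𝓀[k] : ZMod m) - 1)))
    (hπ : π ^ m = algebraMap k Ω ϖ) : adjoin k {x : Ω | x ^ m ∈ k⟮ζ⟯} = k⟮ξ, π⟯ := by
  set N := Nat.card 𝓀[k] ^ orderOf (Nat.card 𝓀[k] : ZMod m) - 1
  have hm0 : m ≠ 0 := by
    rintro rfl
    exact Finite.one_lt_card.ne' ((Nat.coprime_zero_right _).1 hm)
  have hN0 : N ≠ 0 := Nat.sub_ne_zero_of_lt <|
    Nat.one_lt_pow (orderOf_natCast_zmod_ne_zero hm) Finite.one_lt_card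
  have : NeZero (m * N) := ⟨mul_ne_zero hm0 hN0⟩
  have hϖ0 : algebraMap k Ω ϖ ≠ 0 := by simpa using hϖ.ne_zero
  have hπ0 : π ≠ 0 := by rintro rfl; simp [hm0, hϖ0.symm] at hπ
  have hξmem : ξ ∈ k⟮ξ, π⟯ := subset_adjoin _ _ (by simp)
  have hπmem : π ∈ k⟮ξ, π⟯ := subset_adjoin _ _ (by simp)
  have hroot {z : Ω} (hz : z ^ (m * N) = 1) : z ∈ k⟮ξ, π⟯ := by
    obtain ⟨i, -, rfl⟩ := hξ.eq_pow_of_pow_eq_one hz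
    exact pow_mem hξmem i
  have hζmem : k⟮ζ⟯ ≤ k⟮ξ, π⟯ :=
    adjoin_simple_le_iff.2 (hroot (by rw [pow_mul, hζ.pow_eq_one, one_pow]))
  refine le_antisymm (adjoin_le_iff.2 fun x hx ↦ ?_) (adjoin_le_iff.2 ?_)
  · rcases eq_or_ne x 0 with rfl | hx0
    · exact zero_mem _
    obtain ⟨n, η, v, hv, hη, hxm⟩ :=
      exists_eq_zpow_mul_mul_pow_of_mem_adjoin hϖ hm hζ hx (pow_ne_zero m hx0)
    have hv0 : v ≠ 0 := by rintro rfl; simp [hm0, hx0] at hxm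
    have hxpow : (x / (π ^ n * v)) ^ m = η := by
      rw [div_pow, hxm, mul_pow, ← zpow_natCast (π ^ n), zpow_comm, zpow_natCast, hπ]
      field_simp
    rw [← div_mul_cancel₀ x (mul_ne_zero (zpow_ne_zero n hπ0) hv0)]
    refine mul_mem (hroot ?_) (mul_mem (zpow_mem hπmem n) (hζmem hv))
    rw [pow_mul, hxpow, hη]
  · rintro x (rfl | rfl)
    · refine subset_adjoin _ _ (mem_adjoin_of_pow_eq_one hm hζ ?_)
      rw [← pow_mul, hξ.pow_eq_one]
    · refine subset_adjoin _ _ ?_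
      rw [Set.mem_ofPred_eq, hπ]
      exact k⟮ζ⟯.algebraMap_mem _

theorem finrank_adjoin_setOf_pow_mem {m : ℕ} (hm : (Nat.card 𝓀[k]).Coprime m) {ζ : Ω}
    (hζ : IsPrimitiveRoot ζ m) :
    Module.finrank k (adjoin k {x : Ω | x ^ m ∈ k⟮ζ⟯}) =
      orderOf (Nat.card 𝓀[k] : ZMod m) * m ^ 2 := by
  obtain ⟨ϖ, hϖ⟩ := IsDiscreteValuationRing.exists_irreducible 𝒪[k]
  set q := Nat.card 𝓀[k]
  set s := orderOf (q : ZMod m)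
  have hq : 1 < q := Finite.one_lt_card
  have hs : s ≠ 0 := orderOf_natCast_zmod_ne_zero hm
  have hcop : q.Coprime (m * (q ^ s - 1)) := hm.mul_right (coprime_pow_sub_one (by lia) hs)
  have hm1 : ‖(m : Ω)‖ = 1 := norm_natCast_eq_one_of_coprime_card hm
  have hcop1 : ‖((m * (q ^ s - 1) : ℕ) : Ω)‖ = 1 := norm_natCast_eq_one_of_coprime_card hcop
  have : NeZero (m : Ω) := ⟨norm_ne_zero_iff.1 (by simp [hm1])⟩
  have : NeZero ((m * (q ^ s - 1) : ℕ) : Ω) := ⟨norm_ne_zero_iff.1 (by rw [hcop1]; simp)⟩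
  obtain ⟨ξ, hξ⟩ := HasEnoughRootsOfUnity.exists_primitiveRoot Ω (m * (q ^ s - 1))
  obtain ⟨π, hπ⟩ := IsSepClosed.exists_pow_nat_eq (algebraMap k Ω ϖ) m
  rw [adjoin_setOf_pow_mem_eq hϖ hm hζ hξ hπ, ← adjoin_simple_adjoin_simple]
  change Module.finrank k k⟮ξ⟯⟮π⟯ = _
  rw [← Module.finrank_mul_finrank k k⟮ξ⟯, adjoin.finrank (Algebra.IsIntegral.isIntegral π),
    natDegree_minpoly_adjoin_of_pow_eq hϖ hcop hξ hπ, finrank_adjoin_of_isPrimitiveRoot hcop hξ,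
    orderOf_natCast_zmod_mul_pow_sub_one hq hs (dvd_pow_orderOf_natCast_zmod_sub_one (by lia) m),
    mul_assoc, sq]

end KummerExtension

section LocallyCompact

open Valued.integer in
theorem isDiscreteValuationRing_and_finite_residueField (k : Type*) [NontriviallyNormedField k]
    [IsUltrametricDist k] [ProperSpace k] : IsDiscreteValuationRing 𝒪[k] ∧ Finite 𝓀[k] := by
  have : (Valued.v (R := k)).RankOne := inferInstanceAs (NormedField.valuation (K := k)).RankOne
  have : CompactSpace 𝒪[k] := by
    refine isCompact_iff_compactSpace.1 (?_ : IsCompact (𝒪[k] : Set k))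
    convert isCompact_closedBall (0 : k) 1
    ext x
    simp [Valued.integer.mem_iff]
  exact (compactSpace_iff_completeSpace_and_isDiscreteValuationRing_and_finite_residueField.1
    this).2

theorem natCard_residueField_padic (p : ℕ) [Fact p.Prime] : Nat.card 𝓀[ℚ_[p]] = p := by
  let e : 𝒪[ℚ_[p]] ≃+* ℤ_[p] := RingEquiv.subringCongr (s := 𝒪[ℚ_[p]])
    (t := PadicInt.subring p) (by ext x; exact Valued.integer.mem_iff)
  rw [Nat.card_congr ((ResidueField.mapEquiv e).trans PadicInt.residueField).toEquiv, Nat.card_zmod]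

end LocallyCompact

theorem stmt_9_general (k : Type*) [NontriviallyNormedField k] [IsUltrametricDist k] [ProperSpace k]
    (Ω : Type*) [Field Ω] [Algebra k Ω] [IsSepClosure k Ω] {m : ℕ}
    (hm : (Nat.card 𝓀[k]).Coprime m) {ζ : Ω} (hζ : IsPrimitiveRoot ζ m) :
    FiniteDimensional k ↥(k⟮ζ⟯ ⊔ adjoin k {x : Ω | x ^ m ∈ k⟮ζ⟯}) ∧
      IsGalois k ↥(k⟮ζ⟯ ⊔ adjoin k {x : Ω | x ^ m ∈ k⟮ζ⟯}) ∧
      Module.finrank k ↥(k⟮ζ⟯ ⊔ adjoin k {x : Ω | x ^ m ∈ k⟮ζ⟯}) =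
        orderOf (Nat.card 𝓀[k] : ZMod m) * m ^ 2 := by
  have hle : k⟮ζ⟯ ≤ adjoin k {x : Ω | x ^ m ∈ k⟮ζ⟯} :=
    fun x hx ↦ subset_adjoin _ _ (pow_mem hx m)
  rw [sup_eq_right.2 hle]
  obtain ⟨_, _⟩ := isDiscreteValuationRing_and_finite_residueField k
  let := spectralNorm.nontriviallyNormedField k Ω
  let := spectralNorm.normedAlgebra k Ω
  have := IsUltrametricDist.isUltrametricDist_of_forall_norm_add_le_max_norm
    (isNonarchimedean_spectralNorm (K := k) (L := Ω))
  have := IsSepClosure.sep_closed k (K := Ω)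
  have : m ≠ 0 := by
    rintro rfl
    exact Finite.one_lt_card.ne' ((Nat.coprime_zero_right _).1 hm)
  have hrank := finrank_adjoin_setOf_pow_mem hm hζ
  have := normal_adjoin_of_isPrimitiveRoot (k := k) ‹m ≠ 0› hζ
  have := normal_adjoin_setOf_pow_mem k⟮ζ⟯ m
  refine ⟨Module.finite_of_finrank_pos ?_, ⟨⟩, hrank⟩
  rw [hrank]
  have := orderOf_natCast_zmod_ne_zero hm
  positivity

/-- For a prime `p` and `n ≥ 1`, with `e_n = p ^ n - 1`, `K_n = ℚ_p(ζ)` for a primitive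
`e_n`-th root of unity `ζ` in a fixed algebraic closure `Ω` of `ℚ_p`, and `L_n` the field
generated over `K_n` by all `x ∈ Ω` with `x ^ e_n ∈ K_n`: the extension `L_n / ℚ_p` is
finite Galois of degree `s_n • (p ^ n - 1) ^ 2`, where `s_n` is the multiplicative order
of `p` modulo `p ^ n - 1`. -/
theorem stmt_9 (p : ℕ) [hp : Fact p.Prime] (n : ℕ) (hn : 1 ≤ n)
    (Ω : Type) [Field Ω] [Algebra ℚ_[p] Ω] [IsAlgClosure ℚ_[p] Ω]
    (ζ : Ω) (hζ : IsPrimitiveRoot ζ (p ^ n - 1))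
    (Kn : IntermediateField ℚ_[p] Ω) (hKn : Kn = IntermediateField.adjoin ℚ_[p] {ζ})
    (Ln : IntermediateField ℚ_[p] Ω)
    (hLn : Ln = Kn ⊔ IntermediateField.adjoin ℚ_[p] {x : Ω | x ^ (p ^ n - 1) ∈ Kn}) :
    FiniteDimensional ℚ_[p] ↥Ln ∧ IsGalois ℚ_[p] ↥Ln ∧
      Module.finrank ℚ_[p] ↥Ln = orderOf ((p : ZMod (p ^ n - 1))) * (p ^ n - 1) ^ 2 := by
  subst hKn hLn
  have hcop := coprime_pow_sub_one hp.out.ne_zero (Nat.one_le_iff_ne_zero.1 hn)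
  have hcard := natCard_residueField_padic p
  simpa only [hcard] using stmt_9_general ℚ_[p] Ω (hcard.symm ▸ hcop) hζ
end

section
/- Fix a prime p and an integer n ≥ 1, set e_n = p^n − 1, and fix an algebraic closure Ω of ℚ_p. Let K ⊆ Ω be a finite extension of ℚ_p, let K_n = K(ζ) where ζ ∈ Ω is a primitive e_n-th root of unity, and let L_n ⊆ Ω be the field generated over K_n by all x ∈ Ω with x^{e_n} ∈ K_n. Let E ⊆ Ω be a primitive extension of K with [E : K] = p^n. Then the compositum E·L_n is a Galois extension of K, the degree [E·L_n : L_n] equals p^n, and the Galois group Gal(E·L_n / L_n) is abelian with every element of order dividing p. -/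
/-!
Let `M` be the normal closure of `E` over `K`. Primitivity of `E` says that `G = Gal(M/K)` acts
primitively on the embeddings of `E`, with point stabilizer `U = Gal(M/E)`; hence a nontrivial
abelian normal subgroup `V` of `G` is its own centralizer, is minimal normal, and is a complement
of `U`, so that it has order `p ^ n`.

Let `A` be the image in `G` of the absolute Galois group of `K_n`. If the wild inertia group is
nontrivial, take it for `V`; otherwise `G` is cyclic of order `p ^ n`, and `V = G`. In the wild
case, the inertia group `I` acts on leading terms of elements of `M` through `e_n`-th roots of
unity, which `A` fixes, so that `[A, I] ≤ V`, and then `[A, A] ≤ V` because `G / I` is cyclic. By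
Clifford theory, `a ^ e_n` acts trivially on `V` for every `a` in `A`, hence lies in `V`. Kummer
theory now says that the image in `G` of the absolute Galois group of `L_n` is contained in `V`. It
is not trivial: otherwise `A` would have exponent dividing `e_n`, hence meet `V` trivially, hence
centralize `V` and be trivial itself, so that `[E : K] ≤ [K_n : K] < p ^ n`. Therefore this image is
a nontrivial abelian normal subgroup, and the complement property gives `E L_n = M L_n` and
identifies `Gal(E L_n / L_n)` with a group of order `p ^ n` and exponent `p`.
-/

open scoped Pointwise commutatorElement

section IrreducibleModules

theorem pow_card_sub_one_smul_of_notMem_annihilator {R W : Type*} [CommRing R]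
    [AddCommGroup W] [Module R W] [IsSimpleModule R W] [Finite W] {r : R}
    (hr : r ∉ Module.annihilator R W) (w : W) :
    r ^ (Nat.card W - 1) • w = w := by
  obtain ⟨I, hI, ⟨e⟩⟩ := isSimpleModule_iff_quot_maximal.mp (inferInstance : IsSimpleModule R W)
  let _ : Field (R ⧸ I) := Ideal.Quotient.field I
  have : Finite (R ⧸ I) := Finite.of_equiv W e.toEquiv
  let _ := Fintype.ofFinite (R ⧸ I)
  have hrI : Ideal.Quotient.mk I r ≠ 0 := by
    rwa [Ne, Ideal.Quotient.eq_zero_iff_mem, ← I.annihilator_quotient, ← e.annihilator_eq]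
  have hpow : Ideal.Quotient.mk I (r ^ (Nat.card W - 1)) = 1 := by
    rw [map_pow, Nat.card_congr e.toEquiv, Nat.card_eq_fintype_card]
    exact FiniteField.pow_card_sub_one_eq_one _ hrI
  apply e.injective
  rw [map_smul, Algebra.smul_def, Ideal.Quotient.algebraMap_eq, hpow, one_mul]

theorem card_eq_pow_of_sSup_simple_eq_top {R V : Type*} [Ring R] [AddCommGroup V]
    [Module R V] [Finite V] {s : Set (Submodule R V)} {q : ℕ}
    (hsimple : ∀ W ∈ s, IsSimpleModule R W) (hcard : ∀ W ∈ s, Nat.card W = q) (hs : sSup s = ⊤) :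
    ∃ k, Nat.card V = q ^ k := by
  have : ∀ W : s, IsSimpleModule R W := fun W ↦ hsimple W W.2
  have : IsSemisimpleModule R V :=
    isSemisimpleModule_of_isSemisimpleModule_submodule' (p := fun W : s ↦ (W : Submodule R V))
      (fun _ ↦ inferInstance) (sSup_eq_iSup' s ▸ hs)
  obtain ⟨k, S, e, hS⟩ := IsSemisimpleModule.exists_linearEquiv_fin_dfinsupp R V
  have hSq (i : Fin k) : Nat.card (S i) = q := by
    have := hS i
    obtain ⟨W, hW, ⟨f⟩⟩ := (S i).linearEquiv_of_sSup_eq_top s hs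
    rw [Nat.card_congr f.toEquiv, hcard W hW]
  refine ⟨k, ?_⟩
  rw [Nat.card_congr (e.toEquiv.trans DFinsupp.equivFunOnFintype), Nat.card_pi]
  simp [hSq]

variable {G V : Type*} [Group G] [AddCommGroup V] [DistribMulAction G V]

variable (V) in
/-- The ring of operators on `V` generated by a subgroup `A` of a group acting on `V`. -/
abbrev operatorRing (A : Subgroup G) : Subring (AddMonoid.End V) :=
  Subring.closure (DistribMulAction.toAddMonoidEnd G V '' A)

variable {A : Subgroup G} [A.Normal]

theorem exists_operatorRing_smul_comm (g : G) (r : operatorRing V A) :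
    ∃ s : operatorRing V A, ∀ v : V, g • r • v = s • g • v := by
  let conj := MulSemiringAction.toRingHom (ConjAct (AddMonoid.End V)ˣ) (AddMonoid.End V)
    (ConjAct.toConjAct ((DistribMulAction.toAddMonoidEnd G V).toHomUnits g))
  have hle : operatorRing V A ≤ (operatorRing V A).comap conj := by
    rw [Subring.closure_le]
    rintro _ ⟨a, ha, rfl⟩
    refine Subring.subset_closure ⟨g * a * g⁻¹, Subgroup.Normal.conj_mem ‹_› a ha g, ?_⟩
    rw [map_mul, map_mul]
    rfl
  refine ⟨⟨conj r, hle r.2⟩, fun v ↦ ?_⟩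
  change g • r • v = g • (r : AddMonoid.End V) (g⁻¹ • g • v)
  rw [inv_smul_smul]
  rfl

variable (V A) in
/-- Translation `W ↦ g⁻¹ W` of the submodules over the operators of a normal subgroup `A`: that
`G` permutes these submodules is the starting point of Clifford theory. -/
def submoduleTranslate (g : G) : Submodule (operatorRing V A) V ≃o Submodule (operatorRing V A) V :=
  let translate (g : G) (W : Submodule (operatorRing V A) V) : Submodule (operatorRing V A) V :=
    { W.toAddSubgroup.comap (DistribSMul.toAddMonoidHom V g) with
      smul_mem' := fun r v hv ↦ by
        obtain ⟨s, hs⟩ := exists_operatorRing_smul_comm g r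
        change g • r • v ∈ W
        exact hs v ▸ W.smul_mem s hv }
  Equiv.toOrderIso
    { toFun := translate g
      invFun := translate g⁻¹
      left_inv W := Submodule.ext fun v ↦ iff_of_eq <| congrArg (· ∈ W) (smul_inv_smul g v)
      right_inv W := Submodule.ext fun v ↦ iff_of_eq <| congrArg (· ∈ W) (inv_smul_smul g v) }
    (fun _ _ h _ hv ↦ h hv) (fun _ _ h _ hv ↦ h hv)

theorem mem_submoduleTranslate {g : G} {W : Submodule (operatorRing V A) V} {v : V} :
    v ∈ submoduleTranslate V A g W ↔ g • v ∈ W := Iff.rfl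

theorem card_submoduleTranslate (g : G) (W : Submodule (operatorRing V A) V) :
    Nat.card (submoduleTranslate V A g W) = Nat.card W :=
  Nat.card_congr ((MulAction.toPerm g).subtypeEquiv fun _ ↦ mem_submoduleTranslate)

theorem iSup_submoduleTranslate_eq_top
    (hirr : ∀ W : AddSubgroup V, (∀ g : G, ∀ w ∈ W, g • w ∈ W) → W = ⊥ ∨ W = ⊤)
    {W : Submodule (operatorRing V A) V} (hW : W ≠ ⊥) :
    ⨆ g, submoduleTranslate V A g W = ⊤ := by
  set T := ⨆ g, submoduleTranslate V A g W
  have htranslate_le (g : G) : submoduleTranslate V A g W ≤ T :=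
    le_iSup (submoduleTranslate V A · W) g
  have hstable (g : G) : T ≤ submoduleTranslate V A g T := by
    rw [(submoduleTranslate V A g).map_iSup]
    refine iSup_le fun h v hv ↦ ?_
    refine (le_iSup (fun k ↦ submoduleTranslate V A g (submoduleTranslate V A k W)) (h * g⁻¹)) ?_
    rw [mem_submoduleTranslate, mem_submoduleTranslate, smul_smul, inv_mul_cancel_right]
    exact hv
  rcases hirr T.toAddSubgroup fun g w hw ↦ hstable g hw with h | h
  · have hT : T = ⊥ := Submodule.toAddSubgroup_injective h
    have hW' : submoduleTranslate V A 1 W = ⊥ := le_bot_iff.mp (hT ▸ htranslate_le 1)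
    exact absurd ((map_eq_bot_iff (submoduleTranslate V A 1)).mp hW') hW
  · simpa using h

open scoped IsMulCommutative in
omit [A.Normal] in
theorem pow_card_sub_one_smul_of_mem_simple [IsMulCommutative (operatorRing V A)]
    {W : Submodule (operatorRing V A) V} [Finite W] (hW : IsSimpleModule (operatorRing V A) W)
    {a : G} (ha : a ∈ A) {w : V} (hw : w ∈ W) : a ^ (Nat.card W - 1) • w = w := by
  let α : operatorRing V A :=
    ⟨DistribMulAction.toAddMonoidEnd G V a, Subring.subset_closure ⟨a, ha, rfl⟩⟩
  have hα_ann : α ∉ Module.annihilator (operatorRing V A) W := by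
    intro h
    have := IsSimpleModule.nontrivial (operatorRing V A) W
    obtain ⟨w, hw⟩ := exists_ne (0 : W)
    have haw : a • (w : V) = 0 := congrArg Subtype.val (Module.mem_annihilator.mp h w)
    exact hw (Subtype.ext ((smul_eq_zero_iff_eq a).mp haw))
  have hαw : α ^ (Nat.card W - 1) • w = w :=
    congrArg Subtype.val (pow_card_sub_one_smul_of_notMem_annihilator hα_ann ⟨w, hw⟩)
  rw [Subring.smul_def, SubmonoidClass.coe_pow, ← map_pow] at hαw
  exact hαw

open scoped IsMulCommutative in
theorem pow_card_sub_one_smul_of_irreducible [Finite V]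
    (hirr : ∀ W : AddSubgroup V, (∀ g : G, ∀ w ∈ W, g • w ∈ W) → W = ⊥ ∨ W = ⊤)
    (hcomm : ∀ a ∈ A, ∀ b ∈ A, ∀ v : V, a • b • v = b • a • v) {a : G} (ha : a ∈ A) (v : V) :
    a ^ (Nat.card V - 1) • v = v := by
  cases subsingleton_or_nontrivial V
  · exact Subsingleton.elim _ _
  have : IsMulCommutative (operatorRing V A) := Subring.isMulCommutative_closure <| by
    rintro _ ⟨a, ha, rfl⟩ _ ⟨b, hb, rfl⟩
    exact AddMonoidHom.ext (hcomm a ha b hb)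
  obtain ⟨W, hW⟩ := IsAtomic.exists_atom (Submodule (operatorRing V A) V)
  have hsimple (g : G) : IsSimpleModule (operatorRing V A) (submoduleTranslate V A g W) :=
    isSimpleModule_iff_isAtom.mpr ((OrderIso.isAtom_iff _ W).mpr hW)
  have hfixed : ⊤ ≤ Submodule.torsionBy (operatorRing V A) V
      (⟨DistribMulAction.toAddMonoidEnd G V (a ^ (Nat.card W - 1)),
        Subring.subset_closure ⟨_, pow_mem ha _, rfl⟩⟩ - 1) := by
    rw [← iSup_submoduleTranslate_eq_top hirr hW.1]
    refine iSup_le fun g w hw ↦ ?_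
    rw [Submodule.mem_torsionBy_iff, sub_smul, one_smul, sub_eq_zero]
    exact card_submoduleTranslate g W ▸ pow_card_sub_one_smul_of_mem_simple (hsimple g) ha hw
  have hv : a ^ (Nat.card W - 1) • v = v := by
    have := (Submodule.mem_torsionBy_iff _ _).mp (hfixed (Submodule.mem_top : v ∈ _))
    rwa [sub_smul, one_smul, sub_eq_zero] at this
  obtain ⟨k, hk⟩ : ∃ k, Nat.card V = Nat.card W ^ k :=
    card_eq_pow_of_sSup_simple_eq_top (s := Set.range (submoduleTranslate V A · W))
      (Set.forall_mem_range.mpr hsimple)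
      (Set.forall_mem_range.mpr fun g ↦ card_submoduleTranslate g W)
      (by rw [sSup_range, iSup_submoduleTranslate_eq_top hirr hW.1])
  obtain ⟨m, hm⟩ : Nat.card W - 1 ∣ Nat.card V - 1 := by
    simpa [hk] using Nat.sub_dvd_pow_sub_pow (Nat.card W) 1 k
  rw [hm, pow_mul]
  exact (MulAction.stabilizer G v).pow_mem hv m

end IrreducibleModules

section MinimalNormal

variable {G : Type*} [Group G] {A V : Subgroup G} [A.Normal] [V.Normal]

open scoped IsMulCommutative in
theorem pow_card_sub_one_mem_centralizer_of_minimal_normal [Finite V] [IsMulCommutative V]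
    (hmin : ∀ N : Subgroup G, N.Normal → N ≤ V → N = ⊥ ∨ N = V)
    (hA : ⁅A, A⁆ ≤ Subgroup.centralizer V) {a : G} (ha : a ∈ A) :
    a ^ (Nat.card V - 1) ∈ Subgroup.centralizer V := by
  let conj : G →* AddMonoid.End (Additive V) := (monoidEndToAdditive V).toMonoidHom.comp
    ((MulDistribMulAction.toMonoidEnd (MulAut V) V).comp MulAut.conjNormal)
  let _ : DistribMulAction G (Additive V) := DistribMulAction.compHom _ conj
  have smul_eq_self_iff (g : G) (v : Additive V) : g • v = v ↔ (v.toMul : G) * g = g * v.toMul := by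
    rw [← Additive.toMul.injective.eq_iff, ← Subtype.val_inj, ← mul_inv_eq_iff_eq_mul.trans eq_comm]
    rfl
  have hcentral {c : G} (hc : c ∈ Subgroup.centralizer V) (v : Additive V) : c • v = v :=
    (smul_eq_self_iff c v).mpr (hc v.toMul v.toMul.2)
  have hirr (W : AddSubgroup (Additive V)) (hW : ∀ g : G, ∀ w ∈ W, g • w ∈ W) :
      W = ⊥ ∨ W = ⊤ := by
    have hnormal : ((AddSubgroup.toSubgroup' W).map V.subtype).Normal := by
      refine ⟨?_⟩
      rintro _ ⟨w, hw, rfl⟩ g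
      exact ⟨_, hW g _ hw, rfl⟩
    refine (hmin _ hnormal (Subgroup.map_subtype_le _)).imp (fun h ↦ ?_) fun h ↦ ?_
    · rw [Subgroup.map_eq_bot_iff_of_injective _ V.subtype_injective] at h
      simpa using h
    · have hW_top : AddSubgroup.toSubgroup' W = ⊤ :=
        Subgroup.map_injective V.subtype_injective <| by
          rw [h, ← MonoidHom.range_eq_map, V.range_subtype]
      simpa using hW_top
  have hcomm : ∀ a ∈ A, ∀ b ∈ A, ∀ v : Additive V, a • b • v = b • a • v := by
    intro a ha b hb v
    rw [← hcentral (hA (Subgroup.commutator_mem_commutator ha hb)) (b • a • v)]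
    simp only [smul_smul, commutatorElement_def]
    group
  exact fun v hv ↦ (smul_eq_self_iff _ (.ofMul ⟨v, hv⟩)).mp
    (pow_card_sub_one_smul_of_irreducible hirr hcomm ha (.ofMul ⟨v, hv⟩))

end MinimalNormal

section PrimitiveStabilizer

/-- A maximal subgroup containing no nontrivial normal subgroup of the ambient group, that is, a
point stabilizer in a faithful primitive permutation group. -/
structure IsPrimitiveStabilizer {G : Type*} [Group G] (U : Subgroup G) : Prop where
  isCoatom : IsCoatom U
  normalCore_eq_bot : U.normalCore = ⊥

namespace IsPrimitiveStabilizer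

variable {G : Type*} [Group G] {U : Subgroup G} (hU : IsPrimitiveStabilizer U)
include hU

theorem eq_bot_of_normal_of_le {N : Subgroup G} [N.Normal] (h : N ≤ U) : N = ⊥ :=
  eq_bot_iff.mpr (hU.normalCore_eq_bot ▸ Subgroup.normal_le_normalCore.mpr h)

section Normal

variable {N : Subgroup G} [N.Normal] (hN : N ≠ ⊥)
include hN

theorem sup_eq_top : N ⊔ U = ⊤ :=
  hU.isCoatom.2 _ (right_lt_sup.mpr fun hNU ↦ hN (hU.eq_bot_of_normal_of_le hNU))

theorem centralizer_inf_eq_bot : Subgroup.centralizer (N : Set G) ⊓ U = ⊥ := by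
  set C := Subgroup.centralizer (N : Set G)
  have hN_norm : N ≤ Subgroup.normalizer (C ⊓ U : Subgroup G) :=
    (Subgroup.le_centralizer_iff.mp inf_le_left).trans (Subgroup.centralizer_le_normalizer _)
  have hU_norm : U ≤ Subgroup.normalizer (C ⊓ U : Subgroup G) := by
    rw [← Subgroup.normal_subgroupOf_iff_le_normalizer inf_le_right, Subgroup.inf_subgroupOf_right]
    infer_instance
  have : (C ⊓ U).Normal := by
    rw [← Subgroup.normalizer_eq_top_iff, eq_top_iff, ← hU.sup_eq_top hN]
    exact sup_le hN_norm hU_norm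
  exact hU.eq_bot_of_normal_of_le inf_le_right

theorem eq_of_le_of_inf_eq_bot {C : Subgroup G} (hNC : N ≤ C) (hC : C ⊓ U = ⊥) : N = C := by
  refine le_antisymm hNC fun c hc ↦ ?_
  obtain ⟨x, hx, u, hu, rfl⟩ : c ∈ (N * U : Set G) := by
    rw [← Subgroup.normal_mul, hU.sup_eq_top hN]
    trivial
  have hu_one : u ∈ C ⊓ U := ⟨(C.mul_mem_cancel_left (hNC hx)).mp hc, hu⟩
  rw [hC, Subgroup.mem_bot] at hu_one
  simpa [hu_one] using hx

end Normal

section AbelianNormal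

variable {N : Subgroup G} [N.Normal] [IsMulCommutative N]

theorem eq_bot_or_eq_of_le {N' : Subgroup G} (hN' : N'.Normal) (hle : N' ≤ N) :
    N' = ⊥ ∨ N' = N := by
  refine or_iff_not_imp_left.mpr fun hbot ↦ ?_
  refine hU.eq_of_le_of_inf_eq_bot hbot hle (eq_bot_iff.mpr ?_)
  exact (inf_le_inf_right U (Subgroup.le_centralizer N)).trans_eq
    (hU.centralizer_inf_eq_bot (ne_bot_of_le_ne_bot hbot hle))

variable (hN : N ≠ ⊥)
include hN

theorem centralizer_eq : Subgroup.centralizer (N : Set G) = N :=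
  (hU.eq_of_le_of_inf_eq_bot hN (Subgroup.le_centralizer N) (hU.centralizer_inf_eq_bot hN)).symm

theorem card_eq_index : Nat.card N = U.index := by
  refine (Subgroup.isComplement'_of_disjoint_and_mul_eq_univ ?_ ?_).index_eq_card.symm
  · rw [disjoint_iff, ← hU.centralizer_inf_eq_bot hN, hU.centralizer_eq hN]
  · rw [← Subgroup.normal_mul, hU.sup_eq_top hN, Subgroup.coe_top]

theorem pow_index_sub_one_mem [Finite N] {A : Subgroup G} [A.Normal] (hA : ⁅A, A⁆ ≤ N)
    {a : G} (ha : a ∈ A) : a ^ (U.index - 1) ∈ N := by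
  rw [← hU.centralizer_eq hN] at hA ⊢
  rw [← hU.card_eq_index hN]
  exact pow_card_sub_one_mem_centralizer_of_minimal_normal
    (fun _ ↦ hU.eq_bot_or_eq_of_le) hA ha

end AbelianNormal

section NormalPGroup

variable {p : ℕ} [Fact p.Prime] {P : Subgroup G} [P.Normal] [Finite P] (hP : IsPGroup p P)
include hP

theorem isMulCommutative_of_isPGroup : IsMulCommutative P := by
  rcases eq_or_ne P ⊥ with rfl | hbot
  · infer_instance
  have : Nontrivial P := (Subgroup.nontrivial_iff_ne_bot P).mpr hbot
  let Z := (Subgroup.center P).map P.subtype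
  have hZ : Z ≠ ⊥ := by
    rw [Ne, Subgroup.map_eq_bot_iff_of_injective _ P.subtype_injective,
      ← Ne, ← Subgroup.nontrivial_iff_ne_bot]
    exact hP.center_nontrivial
  have hPZ : P ≤ Subgroup.centralizer Z := by
    rintro x hx _ ⟨z, hz, rfl⟩
    exact congrArg Subtype.val (Subgroup.mem_center_iff.mp hz ⟨x, hx⟩).symm
  rw [hU.centralizer_eq hZ] at hPZ
  have hZP : Z = P := le_antisymm (Subgroup.map_subtype_le _) hPZ
  exact hZP ▸ inferInstance

open scoped IsMulCommutative in
theorem pow_eq_one_of_isPGroup {x : G} (hx : x ∈ P) : x ^ p = 1 := by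
  rcases eq_or_ne P ⊥ with rfl | hbot
  · simp [Subgroup.mem_bot.mp hx]
  have := hU.isMulCommutative_of_isPGroup hP
  have : Nontrivial P := (Subgroup.nontrivial_iff_ne_bot P).mpr hbot
  let T : Subgroup G := (powMonoidHom p : P →* P).ker.map P.subtype
  have mem_T {y : G} : y ∈ T ↔ y ∈ P ∧ y ^ p = 1 := by
    simp [T, MonoidHom.mem_ker, Subtype.ext_iff, and_comm]
  have hT_normal : T.Normal := ⟨fun y hy g ↦ by
    rw [mem_T] at hy ⊢
    exact ⟨Subgroup.Normal.conj_mem ‹_› y hy.1 g, by simp [conj_pow, hy.2]⟩⟩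
  have hT_ne_bot : T ≠ ⊥ := by
    obtain ⟨k, hk, hcard⟩ := hP.nontrivial_iff_card.mp ‹_›
    obtain ⟨y, hy⟩ := exists_prime_orderOf_dvd_card' (G := P) p (hcard ▸ dvd_pow_self p hk.ne')
    refine fun hT ↦ (Fact.out : p.Prime).ne_one ?_
    have hyT : (y : G) ∈ T := mem_T.mpr ⟨y.2, by exact_mod_cast hy ▸ pow_orderOf_eq_one y⟩
    rw [hT, Subgroup.mem_bot] at hyT
    rw [← hy, orderOf_eq_one_iff]
    exact_mod_cast hyT
  have hT : T = P :=
    (hU.eq_bot_or_eq_of_le hT_normal (Subgroup.map_subtype_le _)).resolve_left hT_ne_bot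
  exact (mem_T.mp (hT ▸ hx)).2

theorem eq_bot_of_inf_isPGroup_eq_bot (hbot : P ≠ ⊥) {A : Subgroup G} [A.Normal]
    (h : A ⊓ P = ⊥) : A = ⊥ := by
  have := hU.isMulCommutative_of_isPGroup hP
  have hAP : A ≤ Subgroup.centralizer P := Subgroup.commutator_eq_bot_iff_le_centralizer.mp <|
    eq_bot_iff.mpr (h ▸ Subgroup.commutator_le_inf A P)
  rw [hU.centralizer_eq hbot] at hAP
  rwa [inf_eq_left.mpr hAP] at h

end NormalPGroup

end IsPrimitiveStabilizer

end PrimitiveStabilizer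

section TameRamification

theorem commutator_le_of_isCyclic_quotient {G : Type*} [Group G] {A I P : Subgroup G}
    [I.Normal] [P.Normal] [IsCyclic (G ⧸ I)] (hPI : P ≤ I) (h : ⁅A, I⁆ ≤ P) : ⁅A, A⁆ ≤ P := by
  let f : A.map (QuotientGroup.mk' P) →* G ⧸ I :=
    (QuotientGroup.map P I (.id G) hPI).comp (Subgroup.subtype _)
  have hf : f.ker ≤ Subgroup.center _ := by
    rintro ⟨_, a, ha, rfl⟩ hker
    have haI : a ∈ I := (QuotientGroup.eq_one_iff a).mp hker
    rw [Subgroup.mem_center_iff]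
    rintro ⟨_, b, hb, rfl⟩
    refine Subtype.ext (commutatorElement_eq_one_iff_mul_comm.mp ?_)
    rw [← map_commutatorElement, ← MonoidHom.mem_ker, QuotientGroup.ker_mk']
    exact h (Subgroup.commutator_mem_commutator hb haI)
  have hcomm := f.isMulCommutative_of_isCyclic_of_ker_le_center hf
  rw [← Subgroup.commutator_self_eq_bot_iff, ← Subgroup.map_commutator,
    Subgroup.map_eq_bot_iff, QuotientGroup.ker_mk'] at hcomm
  exact hcomm

/-- The group-theoretic shape of the inertia group `I` and the wild inertia group `P` of a finite
Galois extension of local fields with residue characteristic `p`. -/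
structure IsTameRamification (p : ℕ) {G : Type*} [Group G] (I P : Subgroup G) : Prop where
  normal_inertia : I.Normal
  normal_wild : P.Normal
  wild_le : P ≤ I
  isPGroup_wild : IsPGroup p P
  commutator_le : ⁅I, I⁆ ≤ P
  mem_of_pow_mem : ∀ a ∈ I, a ^ p ∈ P → a ∈ P
  isCyclic_quotient : IsCyclic (G ⧸ I)

namespace IsTameRamification

variable {G : Type*} [Group G] [Finite G] {p n : ℕ} [Fact p.Prime] {I P A U : Subgroup G}

theorem inertia_eq_bot_of_wild_eq_bot (h : IsTameRamification p I (⊥ : Subgroup G))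
    (hU : IsPrimitiveStabilizer U) (hindex : p ∣ U.index) : I = ⊥ := by
  have := h.normal_inertia
  have := Subgroup.commutator_self_eq_bot_iff.mp (le_bot_iff.mp h.commutator_le)
  by_contra hI
  obtain ⟨s, hs⟩ := exists_prime_orderOf_dvd_card' (G := I) p (hU.card_eq_index hI ▸ hindex)
  have hs_pow : (s : G) ^ p = 1 := by exact_mod_cast hs ▸ pow_orderOf_eq_one s
  have hs_one : s = 1 := by
    exact_mod_cast Subgroup.mem_bot.mp (h.mem_of_pow_mem s s.2 (Subgroup.mem_bot.mpr hs_pow))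
  exact (Fact.out : p.Prime).ne_one (by rw [← hs, hs_one, orderOf_one])

theorem exists_normal_isPGroup (h : IsTameRamification p I P)
    (hU : IsPrimitiveStabilizer U) (hn : n ≠ 0) (hindex : U.index = p ^ n) [A.Normal]
    (hA : ∀ s ∈ I, s ^ (p ^ n - 1) ∈ P → ∀ a ∈ A, ⁅a, s⁆ ∈ P) :
    ∃ V : Subgroup G, V.Normal ∧ V ≠ ⊥ ∧ IsPGroup p V ∧ ⁅A, A⁆ ≤ V ∧
      ∀ a ∈ A, a ^ (p ^ n - 1) ∈ V := by
  have := h.normal_inertia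
  have := h.normal_wild
  have := h.isCyclic_quotient
  by_cases hbot : P = ⊥
  · subst hbot
    obtain rfl := h.inertia_eq_bot_of_wild_eq_bot hU (hindex ▸ dvd_pow_self p hn)
    have : IsMulCommutative G :=
      (QuotientGroup.mk' (⊥ : Subgroup G)).isMulCommutative_of_isCyclic_of_ker_le_center (by simp)
    have hU_bot : U = ⊥ := by
      have : U.Normal := ⟨fun u hu g ↦ by rwa [mul_comm' g, mul_inv_cancel_right]⟩
      exact hU.eq_bot_of_normal_of_le le_rfl
    have hcard : Nat.card (⊤ : Subgroup G) = p ^ n := by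
      rw [← hindex, hU_bot, Subgroup.index_bot, Subgroup.card_top]
    refine ⟨⊤, inferInstance, fun htop ↦ ?_, IsPGroup.of_card hcard, le_top, by simp⟩
    rw [htop, Subgroup.card_bot] at hcard
    exact (Nat.one_lt_pow hn (Fact.out : p.Prime).one_lt).ne hcard
  · have := hU.isMulCommutative_of_isPGroup h.isPGroup_wild
    have hI (s : G) (hs : s ∈ I) : s ^ (p ^ n - 1) ∈ P :=
      hindex ▸ hU.pow_index_sub_one_mem hbot h.commutator_le hs
    have hAI : ⁅A, I⁆ ≤ P :=
      Subgroup.commutator_le.mpr fun a ha s hs ↦ hA s hs (hI s hs) a ha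
    have hAA := commutator_le_of_isCyclic_quotient h.wild_le hAI
    exact ⟨P, inferInstance, hbot, h.isPGroup_wild, hAA,
      fun a ha ↦ hindex ▸ hU.pow_index_sub_one_mem hbot hAA ha⟩

end IsTameRamification

end TameRamification

section Ramification

theorem isCyclic_ringAut (p : ℕ) [Fact p.Prime] (k : Type*) [Field k] [Finite k] [CharP k p] :
    IsCyclic (RingAut k) := by
  let _ := ZMod.algebra k p
  let toAlgEquiv : RingAut k →* Gal(k/ZMod p) :=
    { toFun f := AlgEquiv.ofRingEquiv (f := f) fun x ↦
        RingHom.congr_fun (RingHom.ext_zmod ((f : k →+* k).comp (algebraMap (ZMod p) k)) _) x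
      map_one' := rfl
      map_mul' _ _ := rfl }
  exact isCyclic_of_injective toAlgEquiv fun f g h ↦ RingEquiv.ext (AlgEquiv.congr_fun h)

attribute [local instance] Units.mulDistribMulActionRight

variable {M Γ₀ : Type*} [Field M] [LinearOrderedCommGroupWithZero Γ₀] (v : Valuation M Γ₀)

/-- The group of leading terms of nonzero elements with respect to a valuation: the quotient of the
multiplicative group by the principal units. -/
def LeadingTerm : Type _ :=
  Mˣ ⧸ v.valuationSubring.principalUnitGroup

instance : CommGroup (LeadingTerm v) :=
  inferInstanceAs (CommGroup (Mˣ ⧸ v.valuationSubring.principalUnitGroup))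

/-- The leading term of a nonzero element. -/
def leadingTerm : Mˣ →* LeadingTerm v :=
  QuotientGroup.mk' _

theorem leadingTerm_eq_one_iff {x : Mˣ} : leadingTerm v x = 1 ↔ v (x - 1 : M) < 1 :=
  (QuotientGroup.eq_one_iff x).trans
    v.isEquiv_valuation_valuationSubring.lt_one_iff_lt_one.symm

theorem leadingTerm_eq_iff {x y : Mˣ} :
    leadingTerm v x = leadingTerm v y ↔ v (x - y : M) < v y := by
  have hy : v (y : M) ≠ 0 := (v.ne_zero_iff).mpr y.ne_zero
  rw [← div_eq_one, ← map_div, leadingTerm_eq_one_iff, ← div_lt_one₀ (zero_lt_iff.mpr hy),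
    ← map_div₀, sub_div, div_self y.ne_zero, Units.val_div_eq_div_val]

/-- The valuation `v` is invariant under the action of `G` by field automorphisms. -/
class IsSMulInvariantValuation (G : Type*) [Group G] [MulSemiringAction G M] : Prop where
  map_smul : ∀ (g : G) (x : M), v (g • x) = v x

variable (G : Type*) [Group G] [MulSemiringAction G M] [IsSMulInvariantValuation v G]

theorem map_units_smul (g : G) (x : Mˣ) : v (g • x : Mˣ) = v x :=
  IsSMulInvariantValuation.map_smul g (x : M)

variable {G}

theorem leadingTerm_smul_eq_smul_iff (g : G) {x y : Mˣ} :
    leadingTerm v (g • x) = leadingTerm v (g • y) ↔ leadingTerm v x = leadingTerm v y := by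
  rw [leadingTerm_eq_iff, leadingTerm_eq_iff, map_units_smul, Units.coe_smul, Units.coe_smul,
    ← smul_sub, IsSMulInvariantValuation.map_smul]

theorem map_smul_div_self (g : G) (x : Mˣ) : v (g • x / x : Mˣ) = 1 := by
  rw [Units.val_div_eq_div_val, map_div₀, map_units_smul,
    div_self ((v.ne_zero_iff).mpr x.ne_zero)]

instance : MulSemiringAction G v.valuationSubring where
  smul g x := ⟨g • (x : M), (IsSMulInvariantValuation.map_smul g (x : M)).trans_le x.2⟩
  one_smul x := Subtype.ext (one_smul G (x : M))
  mul_smul g h x := Subtype.ext (mul_smul g h (x : M))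
  smul_zero g := Subtype.ext (smul_zero g)
  smul_add g x y := Subtype.ext (smul_add g (x : M) y)
  smul_one g := Subtype.ext (smul_one g)
  smul_mul g x y := Subtype.ext (smul_mul' g (x : M) y)

variable (G)

/-- The inertia group of `v`: the elements acting trivially on the residue field. It is phrased
through leading terms of units, so that it is visibly larger than the wild inertia group. -/
def inertia : Subgroup G where
  carrier := {g | ∀ x : Mˣ, v x = 1 → leadingTerm v (g • x) = leadingTerm v x}
  one_mem' x _ := by rw [one_smul]
  mul_mem' {g h} hg hh x hx := by
    rw [mul_smul, hg _ ((map_units_smul v G h x).trans hx), hh x hx]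
  inv_mem' {g} hg x hx := by
    rw [← leadingTerm_smul_eq_smul_iff v g, smul_inv_smul, hg x hx]

/-- The wild inertia group of `v`: the elements acting trivially on leading terms. -/
def wildInertia : Subgroup G where
  carrier := {g | ∀ x : Mˣ, leadingTerm v (g • x) = leadingTerm v x}
  one_mem' x := by rw [one_smul]
  mul_mem' {g h} hg hh x := by rw [mul_smul, hg, hh]
  inv_mem' {g} hg x := by rw [← leadingTerm_smul_eq_smul_iff v g, smul_inv_smul, hg x]

variable {G}

theorem ker_toRingAut_le_inertia :
    (MulSemiringAction.toRingAut G (IsLocalRing.ResidueField v.valuationSubring)).ker ≤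
      inertia v G := by
  intro g hg x hx
  let y : v.valuationSubring := ⟨x, hx.le⟩
  have hy : IsLocalRing.residue _ (g • y) = IsLocalRing.residue _ y :=
    RingEquiv.congr_fun hg (IsLocalRing.residue _ y)
  rw [← sub_eq_zero, ← map_sub, IsLocalRing.residue_eq_zero_iff,
    Valuation.mem_maximalIdeal_iff] at hy
  rw [leadingTerm_eq_iff, hx]
  exact hy

theorem wildInertia_le_inertia : wildInertia v G ≤ inertia v G :=
  fun _ hg x _ ↦ hg x

instance normal_inertia : (inertia v G).Normal where
  conj_mem g hg h x hx := by
    rw [← leadingTerm_smul_eq_smul_iff v h⁻¹, mul_smul, mul_smul, inv_smul_smul]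
    exact hg _ ((map_units_smul v G h⁻¹ x).trans hx)

instance normal_wildInertia : (wildInertia v G).Normal where
  conj_mem g hg h x := by
    rw [← leadingTerm_smul_eq_smul_iff v h⁻¹, mul_smul, mul_smul, inv_smul_smul]
    exact hg _

variable {v}

theorem commutator_mem_wildInertia {a s : G}
    (h : ∀ x : Mˣ, leadingTerm v (a • s • x) = leadingTerm v (s • a • x)) :
    ⁅a, s⁆ ∈ wildInertia v G := fun x ↦ by
  rw [commutatorElement_def, mul_smul, mul_smul, mul_smul, h, smul_inv_smul, smul_inv_smul]

theorem leadingTerm_smul_smul {a s : G} (hs : s ∈ inertia v G) (x : Mˣ) :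
    leadingTerm v (s • a • x) = leadingTerm v (a • x / x) * leadingTerm v (s • x) := by
  rw [← hs _ (map_smul_div_self v a x), ← map_mul, ← smul_mul', div_mul_cancel]

theorem commutator_inertia_le_wildInertia : ⁅inertia v G, inertia v G⁆ ≤ wildInertia v G := by
  refine Subgroup.commutator_le.mpr fun a ha s hs ↦ commutator_mem_wildInertia fun x ↦ ?_
  rw [leadingTerm_smul_smul hs, leadingTerm_smul_smul ha, map_div, map_div, div_mul_comm]

theorem leadingTerm_pow_smul {s : G} (hs : s ∈ inertia v G) (e : ℕ) (x : Mˣ) :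
    leadingTerm v (s ^ e • x) = leadingTerm v (s • x / x) ^ e * leadingTerm v x := by
  induction e with
  | zero => rw [pow_zero, pow_zero, one_smul, one_mul]
  | succ e ih =>
    rw [pow_succ, mul_smul, leadingTerm_smul_smul ((inertia v G).pow_mem hs e), ih, pow_succ',
      mul_assoc]

theorem leadingTerm_smul_div_pow_eq_one {s : G} (hs : s ∈ inertia v G) {e : ℕ}
    (hse : s ^ e ∈ wildInertia v G) (x : Mˣ) : leadingTerm v ((s • x / x) ^ e) = 1 := by
  rw [map_pow, ← mul_eq_right, ← leadingTerm_pow_smul hs, hse]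

theorem commutator_mem_wildInertia_of_pow_mem {a s : G} {e : ℕ}
    (ha : ∀ x : M, v (x ^ e - 1) < 1 → v (a • x - x) < 1)
    (hs : s ∈ inertia v G) (hse : s ^ e ∈ wildInertia v G) : ⁅a, s⁆ ∈ wildInertia v G := by
  refine commutator_mem_wildInertia fun x ↦ ?_
  have hfix : leadingTerm v (a • (s • x / x)) = leadingTerm v (s • x / x) := by
    rw [leadingTerm_eq_iff, map_smul_div_self]
    exact ha _ ((leadingTerm_eq_one_iff v).mp (leadingTerm_smul_div_pow_eq_one hs hse x))
  rw [smul_div', map_div, map_div, div_eq_div_iff_mul_eq_mul] at hfix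
  rw [leadingTerm_smul_smul hs, map_div, div_mul_eq_mul_div, eq_div_iff_mul_eq', hfix, mul_comm]

theorem map_sum_range_pow_smul_sub_lt {g : G} (hg : g ∈ wildInertia v G) (m : ℕ) {x : M}
    (hx : x ≠ 0) : v (∑ i ∈ Finset.range m, g ^ i • x - m * x) < v x := by
  have hterm (i : ℕ) : v (g ^ i • x - x) < v x :=
    (leadingTerm_eq_iff v).mp ((wildInertia v G).pow_mem hg i (Units.mk0 x hx))
  have hsum : ∑ i ∈ Finset.range m, g ^ i • x - m * x = ∑ i ∈ Finset.range m, (g ^ i • x - x) := by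
    rw [Finset.sum_sub_distrib, Finset.sum_const, Finset.card_range, nsmul_eq_mul]
  rw [hsum]
  exact v.map_sum_lt ((v.ne_zero_iff).mpr hx) fun i _ ↦ hterm i

theorem eq_one_of_pow_eq_one_of_mem_wildInertia [FaithfulSMul G M] {g : G}
    (hg : g ∈ wildInertia v G) {m : ℕ} (hgm : g ^ m = 1) (hm : v (m : M) = 1) : g = 1 := by
  refine FaithfulSMul.eq_of_smul_eq_smul fun x : M ↦ ?_
  rw [one_smul]
  by_contra hx
  have hsum : ∑ i ∈ Finset.range m, g ^ i • (g • x - x) = 0 := by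
    simp only [smul_sub, ← mul_smul, ← pow_succ]
    rw [Finset.sum_range_sub (fun i ↦ g ^ i • x), hgm, pow_zero, sub_self]
  have hlt := map_sum_range_pow_smul_sub_lt hg m (sub_ne_zero.mpr hx)
  rw [hsum, zero_sub, Valuation.map_neg, map_mul, hm, one_mul] at hlt
  exact hlt.false

theorem exists_map_sub_pow_lt_one_of_isPrimitiveRoot {e : ℕ} (he : 0 < e) {ζ : M}
    (hζ : IsPrimitiveRoot ζ e) {x : M} (hx : v (x ^ e - 1) < 1) : ∃ i : ℕ, v (x - ζ ^ i) < 1 := by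
  have := NeZero.of_pos he
  have hprod : x ^ e - 1 = ∏ w ∈ Polynomial.nthRootsFinset e (1 : M), (x - w) := by
    simpa [Polynomial.eval_prod] using
      congrArg (Polynomial.eval x) (Polynomial.X_pow_sub_one_eq_prod he hζ)
  obtain ⟨w, hw, hxw⟩ : ∃ w ∈ Polynomial.nthRootsFinset e (1 : M), v (x - w) < 1 := by
    by_contra! h
    rw [hprod, map_prod] at hx
    exact hx.not_ge (Finset.one_le_prod' h)
  obtain ⟨i, -, rfl⟩ := hζ.eq_pow_of_pow_eq_one ((Polynomial.mem_nthRootsFinset he 1).mp hw)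
  exact ⟨i, hxw⟩

theorem map_smul_sub_lt_one_of_isPrimitiveRoot {e : ℕ} (he : 0 < e) {ζ : M}
    (hζ : IsPrimitiveRoot ζ e) {a : G} (ha : a • ζ = ζ) {x : M} (hx : v (x ^ e - 1) < 1) :
    v (a • x - x) < 1 := by
  obtain ⟨i, hi⟩ := exists_map_sub_pow_lt_one_of_isPrimitiveRoot he hζ hx
  have hai : v (a • x - ζ ^ i) < 1 := by
    rwa [← ha, ← smul_pow', ← smul_sub, IsSMulInvariantValuation.map_smul]
  rw [← sub_sub_sub_cancel_right _ _ (ζ ^ i)]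
  exact v.map_sub_lt hai hi

section ResidueCharacteristic

variable {p : ℕ} [hp : Fact p.Prime] (hvp : v (p : M) < 1)
include hvp

theorem charP_residueField_valuationSubring :
    CharP (IsLocalRing.ResidueField v.valuationSubring) p := by
  refine (CharP.charP_iff_prime_eq_zero hp.out).mpr ?_
  rw [← map_natCast (IsLocalRing.residue v.valuationSubring), IsLocalRing.residue_eq_zero_iff,
    Valuation.mem_maximalIdeal_iff]
  exact hvp

theorem map_natCast_eq_one_of_coprime {m : ℕ} (hm : p.Coprime m) : v (m : M) = 1 := by
  have := charP_residueField_valuationSubring hvp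
  have hres : IsLocalRing.residue v.valuationSubring m ≠ 0 := by
    rw [map_natCast, Ne, CharP.cast_eq_zero_iff _ p]
    exact hp.out.coprime_iff_not_dvd.mp hm
  rw [Ne, IsLocalRing.residue_eq_zero_iff, Valuation.mem_maximalIdeal_iff, not_lt] at hres
  exact le_antisymm (m : v.valuationSubring).2 hres

theorem leadingTerm_eq_one_of_pow_prime {x : Mˣ} (hx : v x = 1) (h : leadingTerm v (x ^ p) = 1) :
    leadingTerm v x = 1 := by
  have := charP_residueField_valuationSubring hvp
  let y : v.valuationSubring := ⟨x, hx.le⟩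
  have hy : IsLocalRing.residue _ (y ^ p - 1) = 0 := by
    rw [leadingTerm_eq_one_iff] at h
    exact (IsLocalRing.residue_eq_zero_iff _).mpr ((Valuation.mem_maximalIdeal_iff M v).mpr h)
  rw [map_sub, map_pow, map_one, ← one_pow p, ← sub_pow_char, ← map_one (IsLocalRing.residue _),
    ← map_sub] at hy
  rw [leadingTerm_eq_one_iff]
  exact (Valuation.mem_maximalIdeal_iff M v).mp
    ((IsLocalRing.residue_eq_zero_iff _).mp (eq_zero_of_pow_eq_zero hy))

theorem mem_wildInertia_of_pow_prime_mem {a : G} (ha : a ∈ inertia v G)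
    (hap : a ^ p ∈ wildInertia v G) : a ∈ wildInertia v G := fun x ↦ by
  rw [← div_eq_one, ← map_div]
  exact leadingTerm_eq_one_of_pow_prime hvp (map_smul_div_self v a x)
    (leadingTerm_smul_div_pow_eq_one ha hap x)

theorem isPGroup_wildInertia [Finite G] [FaithfulSMul G M] : IsPGroup p (wildInertia v G) := by
  rintro ⟨g, hg⟩
  obtain ⟨k, m, hm, hgm⟩ := Nat.exists_eq_pow_mul_and_not_dvd (orderOf_pos g).ne' p hp.out.ne_one
  refine ⟨k, Subtype.ext ?_⟩
  refine eq_one_of_pow_eq_one_of_mem_wildInertia ((wildInertia v G).pow_mem hg (p ^ k)) (m := m) ?_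
    (map_natCast_eq_one_of_coprime hvp (hp.out.coprime_iff_not_dvd.mpr hm))
  rw [SubgroupClass.coe_pow, ← pow_mul, ← hgm, pow_orderOf_eq_one]

theorem isCyclic_quotient_inertia [Finite (IsLocalRing.ResidueField v.valuationSubring)] :
    IsCyclic (G ⧸ inertia v G) := by
  have := charP_residueField_valuationSubring hvp
  have := isCyclic_ringAut p (IsLocalRing.ResidueField v.valuationSubring)
  let φ := MulSemiringAction.toRingAut G (IsLocalRing.ResidueField v.valuationSubring)
  have : IsCyclic (G ⧸ φ.ker) := isCyclic_of_injective _ (QuotientGroup.kerLift_injective φ)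
  exact isCyclic_of_surjective _ (QuotientGroup.map_surjective_of_surjective _ _ (MonoidHom.id G)
    (QuotientGroup.mk'_surjective _) (ker_toRingAut_le_inertia v))

theorem isTameRamification_inertia_wildInertia [Finite G] [FaithfulSMul G M]
    [Finite (IsLocalRing.ResidueField v.valuationSubring)] :
    IsTameRamification p (inertia v G) (wildInertia v G) where
  normal_inertia := normal_inertia v
  normal_wild := normal_wildInertia v
  wild_le := wildInertia_le_inertia v
  isPGroup_wild := isPGroup_wildInertia hvp
  commutator_le := commutator_inertia_le_wildInertia
  mem_of_pow_mem _ := mem_wildInertia_of_pow_prime_mem hvp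
  isCyclic_quotient := isCyclic_quotient_inertia hvp

end ResidueCharacteristic

end Ramification

section SpectralValuation

open scoped NNReal

variable (K : Type*) [NontriviallyNormedField K] [IsUltrametricDist K] (L : Type*) [Field L]
  [Algebra K L] [Algebra.IsAlgebraic K L]

/-- The spectral norm of an algebraic extension of a complete nonarchimedean field, as a
valuation. -/
noncomputable def spectralValuation [CompleteSpace K] : Valuation L ℝ≥0 :=
  letI := spectralNorm.normedField K L
  haveI := IsUltrametricDist.isUltrametricDist_of_forall_norm_add_le_max_norm
    fun x y : L ↦ isNonarchimedean_spectralNorm (K := K) x y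
  NormedField.valuation

theorem coe_spectralValuation [CompleteSpace K] (x : L) :
    (spectralValuation K L x : ℝ) = spectralNorm K L x :=
  rfl

instance [CompleteSpace K] : IsSMulInvariantValuation (spectralValuation K L) Gal(L/K) where
  map_smul g x := NNReal.eq (spectralNorm_eq_of_equiv g x).symm

theorem spectralValuation_natCast_lt_one [CompleteSpace K] {m : ℕ} (hm : ‖(m : K)‖ < 1) :
    spectralValuation K L m < 1 := by
  rw [← NNReal.coe_lt_coe, coe_spectralValuation, ← map_natCast (algebraMap K L),
    spectralNorm_extends]
  exact hm

variable {L} in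
theorem spectralValuation_coe [CompleteSpace K] {M : IntermediateField K L} (x : M) :
    spectralValuation K L x = spectralValuation K M x :=
  NNReal.eq (spectralNorm.eq_of_tower x).symm

instance finite_residueField_spectralValuation [ProperSpace K] [FiniteDimensional K L] :
    Finite (IsLocalRing.ResidueField (spectralValuation K L).valuationSubring) := by
  let _ := spectralNorm.normedField K L
  let _ := spectralNorm.normedAlgebra K L
  have := FiniteDimensional.proper K L
  set v := spectralValuation K L
  obtain ⟨t, ht, hcover⟩ := Metric.totallyBounded_iff.mp
    (isCompact_closedBall (0 : L) 1).totallyBounded 1 one_pos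
  have := ht.to_subtype
  have hnear (z : IsLocalRing.ResidueField v.valuationSubring) :
      ∃ y : t, ∃ x : v.valuationSubring, IsLocalRing.residue _ x = z ∧ v (x - y : L) < 1 := by
    obtain ⟨x, rfl⟩ := IsLocalRing.residue_surjective z
    obtain ⟨y, hy, hxy⟩ := Set.mem_iUnion₂.mp (hcover (mem_closedBall_zero_iff.mpr x.2))
    exact ⟨⟨y, hy⟩, x, rfl, mem_ball_iff_norm.mp hxy⟩
  choose y x hx hxy using hnear
  refine Finite.of_injective y fun a b hab ↦ ?_
  rw [← hx a, ← hx b, ← sub_eq_zero, ← map_sub, IsLocalRing.residue_eq_zero_iff,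
    Valuation.mem_maximalIdeal_iff]
  have hdist := v.map_sub_lt (hxy a) (hab ▸ hxy b)
  rwa [sub_sub_sub_cancel_right] at hdist

end SpectralValuation

section Kummer

open IntermediateField

variable {k Ω : Type*} [Field k] [Field Ω] [Algebra k Ω] {e : ℕ}

open scoped IsMulCommutative in
theorem exists_character_ne_one_of_notMem {G : Type*} [Group G] [Finite G] [NeZero e] {ζ : k}
    (hζ : IsPrimitiveRoot ζ e) {W : Subgroup G} (hcomm : commutator G ≤ W)
    (hpow : ∀ a, a ^ e ∈ W) {σ : G} (hσ : σ ∉ W) :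
    ∃ χ : G →* kˣ, (∀ a, χ a ^ e = 1) ∧ χ σ ≠ 1 := by
  have : W.Normal := Subgroup.commutator_top_right_le_iff.mp
    ((Subgroup.commutator_mono le_top le_rfl).trans hcomm)
  have : IsMulCommutative (G ⧸ W) :=
    Subgroup.Normal.quotient_commutative_iff_commutator_le.mpr hcomm
  have hquot (a : G) : (a : G ⧸ W) ^ e = 1 := (QuotientGroup.eq_one_iff _).mpr (hpow a)
  have hexp : Monoid.exponent (G ⧸ W) ∣ e := Monoid.exponent_dvd_of_forall_pow_eq_one
    (QuotientGroup.mk_surjective.forall.mpr hquot)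
  have : HasEnoughRootsOfUnity k e := ⟨⟨ζ, hζ⟩, inferInstance⟩
  have : HasEnoughRootsOfUnity k (Monoid.exponent (G ⧸ W)) := .of_dvd k hexp
  obtain ⟨χ, hχ⟩ := CommGroup.exists_apply_ne_one_of_hasEnoughRootsOfUnity (G ⧸ W) k
    (a := (σ : G ⧸ W)) (by rwa [Ne, QuotientGroup.eq_one_iff])
  refine ⟨χ.comp (QuotientGroup.mk' W), fun a ↦ ?_, hχ⟩
  rw [MonoidHom.comp_apply, ← map_pow, QuotientGroup.mk'_apply, hquot, map_one]

theorem exists_pow_mem_range_of_notMem [FiniteDimensional k Ω] [IsGalois k Ω] [NeZero e] {ζ : k}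
    (hζ : IsPrimitiveRoot ζ e) {W : Subgroup Gal(Ω/k)} (hcomm : commutator Gal(Ω/k) ≤ W)
    (hpow : ∀ a : Gal(Ω/k), a ^ e ∈ W) {σ : Gal(Ω/k)} (hσ : σ ∉ W) :
    ∃ y : Ω, y ^ e ∈ Set.range (algebraMap k Ω) ∧ σ y ≠ y := by
  obtain ⟨χ, hχe, hχσ⟩ := exists_character_ne_one_of_notMem hζ hcomm hpow hσ
  obtain ⟨y, hy⟩ := groupCohomology.isMulCoboundary₁_of_isMulCocycle₁_of_aut_to_units
    (fun g ↦ Units.map (algebraMap k Ω) (χ g)) fun g h ↦ by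
      ext; simp [mul_comm]
  have smul_y (g : Gal(Ω/k)) : g y = algebraMap k Ω (χ g) * y :=
    congrArg Units.val (div_eq_iff_eq_mul.mp (hy g))
  refine ⟨y, (IsGalois.mem_range_algebraMap_iff_fixed _).mpr fun g ↦ ?_, fun h ↦ hχσ ?_⟩
  · rw [map_pow, smul_y, mul_pow, ← map_pow, ← Units.val_pow_eq_pow_val, hχe, Units.val_one,
      map_one, one_mul]
  · rw [smul_y, mul_eq_right₀ y.ne_zero] at h
    simpa using h

theorem exists_pow_mem_range_of_fixingSubgroup_le [NeZero e] {ζ : k}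
    (hζ : IsPrimitiveRoot ζ e) {W : Subgroup Gal(Ω/k)} {F : IntermediateField k Ω}
    [FiniteDimensional k F] [IsGalois k F] [Normal k Ω] (hF : F.fixingSubgroup ≤ W)
    (hcomm : commutator Gal(Ω/k) ≤ W) (hpow : ∀ a : Gal(Ω/k), a ^ e ∈ W) {σ : Gal(Ω/k)}
    (hσ : σ ∉ W) : ∃ y : Ω, y ^ e ∈ Set.range (algebraMap k Ω) ∧ σ y ≠ y := by
  let π : Gal(Ω/k) →* Gal(F/k) := AlgEquiv.restrictNormalHom F
  have hπ : Function.Surjective π := AlgEquiv.restrictNormalHom_surjective Ω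
  have hcomap : (W.map π).comap π = W :=
    Subgroup.comap_map_eq_self (F.restrictNormalHom_ker.trans_le hF)
  have hmap : ∀ g, π g ∈ W.map π ↔ g ∈ W := fun g ↦ by rw [← Subgroup.mem_comap, hcomap]
  have hcommπ : commutator Gal(F/k) ≤ W.map π := by
    rw [commutator_def, ← Subgroup.map_top_of_surjective π hπ, ← Subgroup.map_commutator]
    exact Subgroup.map_mono hcomm
  have hpowπ : ∀ a : Gal(F/k), a ^ e ∈ W.map π := hπ.forall.mpr fun a ↦ by
    rw [← map_pow, hmap]
    exact hpow a
  obtain ⟨y, ⟨x, hx⟩, hy⟩ := exists_pow_mem_range_of_notMem hζ hcommπ hpowπ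
    (mt (hmap σ).mp hσ)
  refine ⟨y, ⟨x, congrArg (algebraMap F Ω) hx⟩, fun h ↦ hy (Subtype.ext ?_)⟩
  rw [← h]
  exact AlgEquiv.restrictNormalHom_apply F σ y

/-- The field obtained from `K` by adjoining `ζ` and then all elements whose `e`-th power lies in
`K(ζ)`. When `ζ` is a primitive `e`-th root of unity, this is the maximal abelian extension of
exponent dividing `e` of `K(ζ)`. -/
def kummerField (K : Type*) {Ω : Type*} [Field K] [Field Ω] [Algebra K Ω] (ζ : Ω) (e : ℕ) :
    IntermediateField K Ω :=
  K⟮ζ⟯ ⊔ adjoin K {x : Ω | x ^ e ∈ K⟮ζ⟯}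

variable {K : Type*} [Field K] [Algebra K Ω] {ζ : Ω}

theorem mem_fixingSubgroup_adjoin_iff {S : Set Ω} {σ : Gal(Ω/K)} :
    σ ∈ (adjoin K S).fixingSubgroup ↔ ∀ x ∈ S, σ x = x :=
  (mem_fixingSubgroup_iff _ σ).trans (forall_mem_adjoin_smul_eq_self_iff K σ)

theorem mem_fixingSubgroup_adjoin_simple_iff {σ : Gal(Ω/K)} :
    σ ∈ K⟮ζ⟯.fixingSubgroup ↔ σ ζ = ζ :=
  mem_fixingSubgroup_adjoin_iff.trans (by simp)

theorem map_adjoin_simple_le_of_isPrimitiveRoot [NeZero e] (hζ : IsPrimitiveRoot ζ e)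
    (σ : Gal(Ω/K)) : K⟮ζ⟯.map (σ : Ω →ₐ[K] Ω) ≤ K⟮ζ⟯ := by
  rw [adjoin_map, Set.image_singleton, adjoin_simple_le_iff]
  have hσζ : (σ ζ) ^ e = 1 := by rw [← map_pow, hζ.pow_eq_one, map_one]
  obtain ⟨i, -, hi⟩ := hζ.eq_pow_of_pow_eq_one hσζ
  exact hi ▸ pow_mem (mem_adjoin_simple_self K ζ) i

theorem normal_adjoin_simple_of_isPrimitiveRoot [Normal K Ω] [NeZero e]
    (hζ : IsPrimitiveRoot ζ e) : Normal K K⟮ζ⟯ :=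
  normal_iff_forall_map_le'.mpr (map_adjoin_simple_le_of_isPrimitiveRoot hζ)

theorem normal_kummerField [Normal K Ω] [NeZero e] (hζ : IsPrimitiveRoot ζ e) :
    Normal K (kummerField K ζ e) := by
  refine normal_iff_forall_map_le'.mpr fun σ ↦ ?_
  have hσ := map_adjoin_simple_le_of_isPrimitiveRoot hζ σ
  rw [kummerField, IntermediateField.map_sup]
  refine sup_le_sup hσ ((adjoin_map K _ _).trans_le (adjoin.mono _ _ _ ?_))
  rintro - ⟨x, hx, rfl⟩
  have : σ (x ^ e) ∈ K⟮ζ⟯ := hσ ⟨x ^ e, hx, rfl⟩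
  rwa [map_pow] at this

theorem mem_fixingSubgroup_kummerField_iff {σ : Gal(Ω/K)} :
    σ ∈ (kummerField K ζ e).fixingSubgroup ↔ σ ζ = ζ ∧ ∀ x, x ^ e ∈ K⟮ζ⟯ → σ x = x := by
  rw [kummerField, fixingSubgroup_sup, Subgroup.mem_inf, mem_fixingSubgroup_adjoin_simple_iff,
    mem_fixingSubgroup_adjoin_iff]
  rfl

theorem pow_mem_fixingSubgroup_kummerField [NeZero e] (hζ : IsPrimitiveRoot ζ e) {σ : Gal(Ω/K)}
    (hσ : σ ∈ K⟮ζ⟯.fixingSubgroup) : σ ^ e ∈ (kummerField K ζ e).fixingSubgroup := by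
  have hσζ (i : ℕ) : σ (ζ ^ i) = ζ ^ i := by
    rw [map_pow, mem_fixingSubgroup_adjoin_simple_iff.mp hσ]
  refine mem_fixingSubgroup_kummerField_iff.mpr
    ⟨mem_fixingSubgroup_adjoin_simple_iff.mp (pow_mem hσ e), fun x hx ↦ ?_⟩
  have hσx : σ x ^ e = x ^ e := by rw [← map_pow, (mem_fixingSubgroup_iff _ σ).mp hσ _ hx]
  obtain ⟨i, hi⟩ : ∃ i : ℕ, σ x = ζ ^ i * x := by
    rcases eq_or_ne x 0 with rfl | hx0
    · exact ⟨0, by simp⟩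
    · obtain ⟨i, -, hi⟩ := hζ.eq_pow_of_pow_eq_one (ξ := σ x / x)
        (by rw [div_pow, hσx, div_self (pow_ne_zero e hx0)])
      exact ⟨i, by rw [hi, div_mul_cancel₀ _ hx0]⟩
  have hiter (m : ℕ) : (σ ^ m) x = (ζ ^ i) ^ m * x := by
    induction m with
    | zero => simp
    | succ m ih =>
      rw [pow_succ', AlgEquiv.mul_apply, ih, map_mul, map_pow, hσζ, hi, pow_succ, mul_assoc]
  rw [hiter, ← pow_mul, mul_comm i, pow_mul, hζ.pow_eq_one, one_pow, one_mul]

theorem exists_pow_mem_adjoin_simple_of_notMem [NeZero e] [IsGalois K Ω]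
    (hζ : IsPrimitiveRoot ζ e) {W : Subgroup Gal(Ω/K)} {M : IntermediateField K Ω}
    [FiniteDimensional K M] [Normal K M] (hM : M.fixingSubgroup ≤ W)
    (hcomm : ⁅K⟮ζ⟯.fixingSubgroup, K⟮ζ⟯.fixingSubgroup⁆ ≤ W)
    (hpow : ∀ a ∈ K⟮ζ⟯.fixingSubgroup, a ^ e ∈ W) {σ : Gal(Ω/K)}
    (hσ : σ ∈ K⟮ζ⟯.fixingSubgroup) (hσW : σ ∉ W) : ∃ y : Ω, y ^ e ∈ K⟮ζ⟯ ∧ σ y ≠ y := by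
  let ι : Gal(Ω/K⟮ζ⟯) →* Gal(Ω/K) :=
    K⟮ζ⟯.fixingSubgroup.subtype.comp (fixingSubgroupEquiv K⟮ζ⟯).symm
  have hι (a) : ι a ∈ K⟮ζ⟯.fixingSubgroup := Subtype.prop _
  let F : IntermediateField K⟮ζ⟯ Ω := extendScalars (le_sup_left : K⟮ζ⟯ ≤ K⟮ζ⟯ ⊔ M)
  have : FiniteDimensional K⟮ζ⟯ F := by
    have : FiniteDimensional K K⟮ζ⟯ := adjoin.finiteDimensional (Algebra.IsIntegral.isIntegral ζ)
    have : FiniteDimensional K ↥(K⟮ζ⟯ ⊔ M) := inferInstance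
    have : FiniteDimensional K F := this
    exact .right K _ _
  have : IsGalois K⟮ζ⟯ F := by
    have := normal_adjoin_simple_of_isPrimitiveRoot (K := K) hζ
    have : IsGalois K ↥(K⟮ζ⟯ ⊔ M) := ⟨⟩
    have : IsGalois K F := this
    exact .tower_top_of_isGalois K _ _
  have hF : F.fixingSubgroup ≤ W.comap ι := fun a ha ↦ hM <| (mem_fixingSubgroup_iff _ _).mpr
    fun x hx ↦ (mem_fixingSubgroup_iff _ _).mp ha x ((le_sup_right : M ≤ K⟮ζ⟯ ⊔ M) hx)
  have hcommι : commutator Gal(Ω/K⟮ζ⟯) ≤ W.comap ι := Subgroup.commutator_le.mpr fun a _ b _ ↦ by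
    rw [Subgroup.mem_comap, map_commutatorElement]
    exact hcomm (Subgroup.commutator_mem_commutator (hι a) (hι b))
  have hpowι (a) : a ^ e ∈ W.comap ι := by simpa using hpow _ (hι a)
  have hσι : ι (fixingSubgroupEquiv K⟮ζ⟯ ⟨σ, hσ⟩) = σ := rfl
  obtain ⟨y, ⟨x, hx⟩, hy⟩ := exists_pow_mem_range_of_fixingSubgroup_le
    (k := K⟮ζ⟯)
    (ζ := AdjoinSimple.gen K ζ) (IsPrimitiveRoot.coe_submonoidClass_iff.mp hζ) hF hcommι hpowι
    (hσι ▸ hσW)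
  exact ⟨y, hx ▸ x.2, hy⟩

theorem fixingSubgroup_kummerField_le [NeZero e] [IsGalois K Ω] (hζ : IsPrimitiveRoot ζ e)
    {W : Subgroup Gal(Ω/K)} {M : IntermediateField K Ω} [FiniteDimensional K M] [Normal K M]
    (hM : M.fixingSubgroup ≤ W) (hcomm : ⁅K⟮ζ⟯.fixingSubgroup, K⟮ζ⟯.fixingSubgroup⁆ ≤ W)
    (hpow : ∀ a ∈ K⟮ζ⟯.fixingSubgroup, a ^ e ∈ W) : (kummerField K ζ e).fixingSubgroup ≤ W := by
  intro σ hσ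
  by_contra hσW
  obtain ⟨y, hye, hy⟩ := exists_pow_mem_adjoin_simple_of_notMem hζ hM hcomm hpow
    (fixingSubgroup_antitone le_sup_left hσ) hσW
  exact hy ((mem_fixingSubgroup_kummerField_iff.mp hσ).2 y hye)

end Kummer

section PrimitiveExtension

open IntermediateField AlgEquiv

variable {K Ω : Type*} [Field K] [Field Ω] [Algebra K Ω]

theorem restrictNormalHom_mem_fixingSubgroup_restrict_iff {E M : IntermediateField K Ω}
    [Normal K M] (h : E ≤ M) {σ : Gal(Ω/K)} :
    restrictNormalHom M σ ∈ (restrict h).fixingSubgroup ↔ σ ∈ E.fixingSubgroup := by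
  simp only [IntermediateField.mem_fixingSubgroup_iff]
  refine ⟨fun hσ x hx ↦ ?_, fun hσ x hx ↦ Subtype.ext ?_⟩
  · rw [← restrictNormalHom_apply M σ ⟨x, h hx⟩, hσ _ ((mem_restrict h _).mpr hx)]
  · rw [restrictNormalHom_apply, hσ _ ((mem_restrict h x).mp hx)]

theorem fixingSubgroup_index_restrict {E M : IntermediateField K Ω} [IsGalois K M] (h : E ≤ M) :
    (restrict h).fixingSubgroup.index = Module.finrank K E := by
  rw [← finrank_eq_fixingSubgroup_index, (restrictAlgEquiv h).toLinearEquiv.finrank_eq]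

theorem isAtom_of_one_lt_finrank {E : IntermediateField K Ω} (hE : 1 < Module.finrank K E)
    (hprim : ∀ F : IntermediateField K Ω, F ≤ E → F = ⊥ ∨ F = E) : IsAtom E := by
  refine ⟨?_, fun F hF ↦ (hprim F hF.le).resolve_right hF.ne⟩
  rintro rfl
  exact hE.ne' IntermediateField.finrank_bot

theorem isAtom_restrict {E M : IntermediateField K Ω} (h : E ≤ M) (hE : IsAtom E) :
    IsAtom (restrict h) := by
  refine ⟨fun hbot ↦ hE.1 ?_, fun F hF ↦ ?_⟩
  · rw [← lift_restrict h, hbot, lift_bot]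
  · rw [← lift_inj, lift_bot]
    have hle : lift F ≤ E := by
      rw [← lift_restrict h]
      exact map_mono _ hF.le
    refine (hE.le_iff.mp hle).resolve_right fun hFE ↦ hF.ne ?_
    rw [← lift_inj, hFE, lift_restrict]

variable [Normal K Ω] {E : IntermediateField K Ω} [FiniteDimensional K E]
  [IsGalois K (normalClosure K E Ω)]

theorem normalCore_fixingSubgroup_restrict_normalClosure :
    (restrict (le_normalClosure E)).fixingSubgroup.normalCore = ⊥ := by
  set N := (restrict (le_normalClosure E)).fixingSubgroup.normalCore
  have hNE : restrict (le_normalClosure E) ≤ fixedField N :=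
    (le_iff_le _ _).mpr (Subgroup.normalCore_le _)
  have : Normal K (lift (fixedField N)) := .of_algEquiv (liftAlgEquiv (fixedField N))
  have hlift : normalClosure K E Ω ≤ lift (fixedField N) :=
    normalClosure_le_iff_of_normal.mpr ((lift_restrict _).symm.trans_le (map_mono _ hNE))
  have htop : fixedField N = ⊤ := eq_top_iff.mpr fun x _ ↦ (mem_lift x).mp (hlift x.2)
  rw [← fixingSubgroup_fixedField N, htop, fixingSubgroup_top]

theorem isPrimitiveStabilizer_fixingSubgroup_restrict (hE : IsAtom E) :
    IsPrimitiveStabilizer (restrict (le_normalClosure E)).fixingSubgroup where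
  isCoatom := isAtom_dual_iff_isCoatom.mp <|
    (IsGalois.intermediateFieldEquivSubgroup.isAtom_iff _).mpr
      (isAtom_restrict (le_normalClosure E) hE)
  normalCore_eq_bot := normalCore_fixingSubgroup_restrict_normalClosure

end PrimitiveExtension

section Compositum

open IntermediateField AlgEquiv

variable {K Ω : Type*} [Field K] [Field Ω] [Algebra K Ω] {E L M T : IntermediateField K Ω}

theorem normal_fixingSubgroup [Normal K L] : L.fixingSubgroup.Normal :=
  L.restrictNormalHom_ker ▸ inferInstance

theorem restrictNormalHom_sup_eq_one [Normal K M] [Normal K T] (hT : T = M ⊔ L)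
    {a : Gal(Ω/K)} (haL : a ∈ L.fixingSubgroup) (haM : restrictNormalHom M a = 1) :
    restrictNormalHom T a = 1 := by
  rw [← MonoidHom.mem_ker, restrictNormalHom_ker] at haM ⊢
  rw [hT, fixingSubgroup_sup]
  exact ⟨haM, haL⟩

section Normal

variable [Normal K Ω] [Normal K T]

theorem exists_mem_fixingSubgroup_restrictNormalHom_eq (h : L ≤ T)
    {σ : Gal(T/K)} (hσ : σ ∈ fixingSubgroup Gal(T/K) {x : T | (x : Ω) ∈ L}) :
    ∃ a ∈ L.fixingSubgroup, restrictNormalHom T a = σ := by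
  obtain ⟨a, rfl⟩ := restrictNormalHom_surjective Ω σ
  have hres : restrictNormalHom T a ∈ (restrict h).fixingSubgroup :=
    (IntermediateField.mem_fixingSubgroup_iff _ _).mpr fun x hx ↦
      (_root_.mem_fixingSubgroup_iff _).mp hσ x ((mem_restrict h x).mp hx)
  exact ⟨a, (restrictNormalHom_mem_fixingSubgroup_restrict_iff h).mp hres, rfl⟩

variable [Normal K M]

theorem mul_comm_of_mem_fixingSubgroup (hT : T = M ⊔ L)
    [IsMulCommutative (L.fixingSubgroup.map (restrictNormalHom M))] {σ τ : Gal(T/K)}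
    (hσ : σ ∈ fixingSubgroup Gal(T/K) {x : T | (x : Ω) ∈ L})
    (hτ : τ ∈ fixingSubgroup Gal(T/K) {x : T | (x : Ω) ∈ L}) : σ * τ = τ * σ := by
  have hLT : L ≤ T := hT ▸ le_sup_right
  obtain ⟨a, ha, rfl⟩ := exists_mem_fixingSubgroup_restrictNormalHom_eq hLT hσ
  obtain ⟨b, hb, rfl⟩ := exists_mem_fixingSubgroup_restrictNormalHom_eq hLT hτ
  have hab : restrictNormalHom M ⁅a, b⁆ = 1 := by
    rw [map_commutatorElement, commutatorElement_eq_one_iff_mul_comm]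
    exact setLike_mul_comm (Subgroup.mem_map_of_mem _ ha) (Subgroup.mem_map_of_mem _ hb)
  have := restrictNormalHom_sup_eq_one hT (Subgroup.commutator_le_self _ <|
    Subgroup.commutator_mem_commutator ha hb) hab
  rwa [map_commutatorElement, commutatorElement_eq_one_iff_mul_comm] at this

theorem pow_eq_one_of_mem_fixingSubgroup (hT : T = M ⊔ L) {m : ℕ}
    (hpow : ∀ a ∈ L.fixingSubgroup.map (restrictNormalHom M), a ^ m = 1) {σ : Gal(T/K)}
    (hσ : σ ∈ fixingSubgroup Gal(T/K) {x : T | (x : Ω) ∈ L}) : σ ^ m = 1 := by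
  obtain ⟨a, ha, rfl⟩ := exists_mem_fixingSubgroup_restrictNormalHom_eq (hT ▸ le_sup_right) hσ
  rw [← map_pow]
  refine restrictNormalHom_sup_eq_one hT (pow_mem ha m) ?_
  rw [map_pow, hpow _ (Subgroup.mem_map_of_mem _ ha)]

end Normal

section Galois

variable [IsGalois K Ω]

theorem relfinrank_eq_relIndex_fixingSubgroup (h : L ≤ T) :
    relfinrank L T = T.fixingSubgroup.relIndex L.fixingSubgroup := by
  rw [relfinrank_eq_finrank_of_le h, finrank_eq_fixingSubgroup_index, Subgroup.relIndex,
    ← Subgroup.index_comap_of_surjective _ (f := (fixingSubgroupEquiv L).symm.toMonoidHom)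
      (fixingSubgroupEquiv L).symm.surjective]
  congr 1

variable [Normal K M]

theorem relfinrank_sup_eq_card_map :
    relfinrank L (M ⊔ L) = Nat.card (L.fixingSubgroup.map (restrictNormalHom M)) := by
  rw [relfinrank_eq_relIndex_fixingSubgroup le_sup_right, fixingSubgroup_sup,
    Subgroup.inf_relIndex_right, ← restrictNormalHom_ker, Subgroup.relIndex_ker]

theorem sup_eq_sup_of_isPrimitiveStabilizer [FiniteDimensional K M] [Normal K L] (h : E ≤ M)
    (hU : IsPrimitiveStabilizer (restrict h).fixingSubgroup)
    [IsMulCommutative (L.fixingSubgroup.map (restrictNormalHom M))]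
    (hL : L.fixingSubgroup.map (restrictNormalHom M) ≠ ⊥) : E ⊔ L = M ⊔ L := by
  have := normal_fixingSubgroup (L := L)
  have : (L.fixingSubgroup.map (restrictNormalHom M)).Normal :=
    this.map _ (restrictNormalHom_surjective Ω)
  refine le_antisymm (sup_le_sup_right h L) ?_
  rw [← InfiniteGalois.fixedField_fixingSubgroup (E ⊔ L), le_iff_le, fixingSubgroup_sup,
    fixingSubgroup_sup]
  refine fun σ hσ ↦ ⟨?_, hσ.2⟩
  have hbot := (hU.centralizer_inf_eq_bot hL).le
    ⟨Subgroup.le_centralizer _ (Subgroup.mem_map_of_mem _ hσ.2),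
      (restrictNormalHom_mem_fixingSubgroup_restrict_iff h).mpr hσ.1⟩
  rwa [← restrictNormalHom_ker]

end Galois

end Compositum

section KummerImage

open IntermediateField AlgEquiv

theorem finrank_adjoin_simple_le_of_pow_eq_one {K Ω : Type*} [Field K] [Field Ω] [Algebra K Ω]
    {ζ : Ω} {e : ℕ} (he : e ≠ 0) (hζ : ζ ^ e = 1) : Module.finrank K K⟮ζ⟯ ≤ e := by
  have hroot : Polynomial.aeval ζ (Polynomial.X ^ e - Polynomial.C (1 : K)) = 0 := by simp [hζ]
  have hint : IsIntegral K ζ := .of_pow (Nat.pos_of_ne_zero he) (hζ ▸ isIntegral_one)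
  rw [adjoin.finrank hint, ← Polynomial.natDegree_X_pow_sub_C (n := e) (r := (1 : K))]
  exact Polynomial.natDegree_le_of_dvd (minpoly.dvd K ζ hroot)
    (Polynomial.X_pow_sub_C_ne_zero (Nat.pos_of_ne_zero he) 1)

theorem inf_eq_bot_of_isPGroup_of_forall_pow_eq_one {G : Type*} [Group G] {p e : ℕ} [Fact p.Prime]
    {A V : Subgroup G} (hV : IsPGroup p V) (hpe : p.Coprime e) (hA : ∀ a ∈ A, a ^ e = 1) :
    A ⊓ V = ⊥ := by
  refine (Subgroup.eq_bot_iff_forall _).mpr fun a ha ↦ ?_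
  obtain ⟨k, hk⟩ := hV ⟨a, ha.2⟩
  have hdvd : orderOf a ∣ Nat.gcd (p ^ k) e := Nat.dvd_gcd
    (orderOf_dvd_of_pow_eq_one (by simpa [Subtype.ext_iff] using hk))
    (orderOf_dvd_of_pow_eq_one (hA a ha.1))
  rwa [hpe.pow_left k, Nat.dvd_one, orderOf_eq_one_iff] at hdvd

theorem coprime_pow_sub_one_s10 {p n : ℕ} (hp : 0 < p) (hn : n ≠ 0) : p.Coprime (p ^ n - 1) :=
  Nat.Coprime.coprime_dvd_left (dvd_pow_self p hn) <|
    (Nat.coprime_self_sub_right (Nat.one_le_pow n p hp)).mpr (Nat.coprime_one_right _)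

variable {K Ω : Type*} [Field K] [Field Ω] [Algebra K Ω] [IsGalois K Ω] {ζ : Ω} {p n : ℕ}
  [Fact p.Prime] {E M : IntermediateField K Ω} [FiniteDimensional K M] [Normal K M]
  {V : Subgroup Gal(M/K)}

theorem map_fixingSubgroup_kummerField_le {e : ℕ} [NeZero e] (hζ : IsPrimitiveRoot ζ e)
    (hcomm : ⁅K⟮ζ⟯.fixingSubgroup.map (restrictNormalHom M),
      K⟮ζ⟯.fixingSubgroup.map (restrictNormalHom M)⁆ ≤ V)
    (hpow : ∀ a ∈ K⟮ζ⟯.fixingSubgroup.map (restrictNormalHom M), a ^ e ∈ V) :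
    (kummerField K ζ e).fixingSubgroup.map (restrictNormalHom M) ≤ V := by
  rw [← Subgroup.map_commutator, Subgroup.map_le_iff_le_comap] at hcomm
  refine Subgroup.map_le_iff_le_comap.mpr (fixingSubgroup_kummerField_le (M := M) hζ ?_ hcomm ?_)
  · rw [← restrictNormalHom_ker]
    exact (restrictNormalHom M).ker_le_comap V
  · intro a ha
    rw [Subgroup.mem_comap, map_pow]
    exact hpow _ (Subgroup.mem_map_of_mem _ ha)

theorem map_fixingSubgroup_kummerField_ne_bot (hn : n ≠ 0) (hζ : IsPrimitiveRoot ζ (p ^ n - 1))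
    (hEM : E ≤ M) (hU : IsPrimitiveStabilizer (restrict hEM).fixingSubgroup)
    (hE : Module.finrank K E = p ^ n) (hVp : IsPGroup p V) [V.Normal] (hV : V ≠ ⊥) :
    (kummerField K ζ (p ^ n - 1)).fixingSubgroup.map (restrictNormalHom M) ≠ ⊥ := by
  have he : p ^ n - 1 ≠ 0 := Nat.sub_ne_zero_of_lt (Nat.one_lt_pow hn (Fact.out : p.Prime).one_lt)
  have : NeZero (p ^ n - 1) := ⟨he⟩
  have := normal_adjoin_simple_of_isPrimitiveRoot (K := K) hζ
  set A := K⟮ζ⟯.fixingSubgroup.map (restrictNormalHom M) with hA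
  have : A.Normal := (normal_fixingSubgroup (L := K⟮ζ⟯)).map _ (restrictNormalHom_surjective Ω)
  intro hbot
  have hApow : ∀ a ∈ A, a ^ (p ^ n - 1) = 1 := by
    rintro - ⟨a, ha, rfl⟩
    rw [← map_pow, ← Subgroup.mem_bot, ← hbot]
    exact Subgroup.mem_map_of_mem _ (pow_mem_fixingSubgroup_kummerField hζ ha)
  have hAbot : A = ⊥ := hU.eq_bot_of_inf_isPGroup_eq_bot hVp hV
    (inf_eq_bot_of_isPGroup_of_forall_pow_eq_one hVp
      (coprime_pow_sub_one_s10 (Fact.out : p.Prime).pos hn) hApow)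
  have hMζ : M ≤ K⟮ζ⟯ := by
    rw [hA, Subgroup.map_eq_bot_iff, restrictNormalHom_ker, ← le_iff_le,
      InfiniteGalois.fixedField_fixingSubgroup] at hAbot
    exact hAbot
  have : FiniteDimensional K K⟮ζ⟯ := adjoin.finiteDimensional (Algebra.IsIntegral.isIntegral ζ)
  have hle := (finrank_le_of_le_right (hEM.trans hMζ)).trans
    (finrank_adjoin_simple_le_of_pow_eq_one he hζ.pow_eq_one)
  omega

end KummerImage

section LocalFields

open IntermediateField AlgEquiv

theorem exists_isTameRamification_commutator_mem {K Ω : Type*} [NontriviallyNormedField K]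
    [IsUltrametricDist K] [ProperSpace K] [Field Ω] [Algebra K Ω] [Algebra.IsAlgebraic K Ω] {p : ℕ}
    [Fact p.Prime] (hp : ‖(p : K)‖ < 1) {ζ : Ω} {e : ℕ} (he : 0 < e) (hζ : IsPrimitiveRoot ζ e)
    (M : IntermediateField K Ω) [FiniteDimensional K M] [Normal K M] :
    ∃ I P : Subgroup Gal(M/K), IsTameRamification p I P ∧
      ∀ s ∈ I, s ^ e ∈ P → ∀ σ : Gal(Ω/K), σ ζ = ζ → ⁅restrictNormalHom M σ, s⁆ ∈ P := by
  refine ⟨inertia (spectralValuation K M) _, wildInertia (spectralValuation K M) _,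
    isTameRamification_inertia_wildInertia (spectralValuation_natCast_lt_one K M hp),
    fun s hs hse σ hσ ↦ commutator_mem_wildInertia_of_pow_mem (fun x hx ↦ ?_) hs hse⟩
  have hxΩ : spectralValuation K Ω ((x : Ω) ^ e - 1) < 1 := by
    rw [← spectralValuation_coe] at hx
    exact hx
  have hσx : spectralValuation K Ω (σ • (x : Ω) - x) < 1 :=
    map_smul_sub_lt_one_of_isPrimitiveRoot he hζ hσ hxΩ
  rw [← spectralValuation_coe, AlgEquiv.smul_def, AddSubgroupClass.coe_sub,
    restrictNormalHom_apply]
  exact hσx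

variable (F : Type*) {K Ω : Type*} [NontriviallyNormedField F] [IsUltrametricDist F]
  [ProperSpace F] [Field K] [Algebra F K] [FiniteDimensional F K] [Field Ω] [Algebra K Ω] {p : ℕ}
  [Fact p.Prime] (hp : ‖(p : F)‖ < 1) {ζ : Ω}
include hp

theorem exists_isTameRamification_commutator_mem_of_finiteDimensional [Algebra.IsAlgebraic K Ω]
    {e : ℕ} (he : 0 < e) (hζ : IsPrimitiveRoot ζ e) (M : IntermediateField K Ω)
    [FiniteDimensional K M] [Normal K M] :
    ∃ I P : Subgroup Gal(M/K), IsTameRamification p I P ∧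
      ∀ s ∈ I, s ^ e ∈ P → ∀ σ : Gal(Ω/K), σ ζ = ζ → ⁅restrictNormalHom M σ, s⁆ ∈ P := by
  let _ := spectralNorm.nontriviallyNormedField F K
  let _ := spectralNorm.normedAlgebra F K
  have : IsUltrametricDist K := IsUltrametricDist.isUltrametricDist_of_forall_norm_add_le_max_norm
    (isNonarchimedean_spectralNorm (K := F) (L := K))
  have : ProperSpace K := FiniteDimensional.proper F K
  have hpK : ‖(p : K)‖ < 1 := by rwa [← map_natCast (algebraMap F K), norm_algebraMap']
  exact exists_isTameRamification_commutator_mem hpK he hζ M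

variable {n : ℕ} (hn : n ≠ 0) (hζ : IsPrimitiveRoot ζ (p ^ n - 1)) [IsGalois K Ω]
  {E M : IntermediateField K Ω} [FiniteDimensional K M] [Normal K M] (hEM : E ≤ M)
  (hU : IsPrimitiveStabilizer (restrict hEM).fixingSubgroup)
  (hE : Module.finrank K E = p ^ n)
include hn hζ hU hE

theorem isPGroup_map_fixingSubgroup_kummerField_and_ne_bot :
    IsPGroup p ((kummerField K ζ (p ^ n - 1)).fixingSubgroup.map (restrictNormalHom M)) ∧
      (kummerField K ζ (p ^ n - 1)).fixingSubgroup.map (restrictNormalHom M) ≠ ⊥ := by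
  have he : 0 < p ^ n - 1 := Nat.sub_pos_of_lt (Nat.one_lt_pow hn (Fact.out : p.Prime).one_lt)
  have : NeZero (p ^ n - 1) := ⟨he.ne'⟩
  have : IsGalois K M := ⟨⟩
  have := normal_adjoin_simple_of_isPrimitiveRoot (K := K) hζ
  have : (K⟮ζ⟯.fixingSubgroup.map (restrictNormalHom M)).Normal :=
    (normal_fixingSubgroup (L := K⟮ζ⟯)).map _ (restrictNormalHom_surjective Ω)
  obtain ⟨I, P, hIP, hcomm⟩ :=
    exists_isTameRamification_commutator_mem_of_finiteDimensional F hp he hζ M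
  obtain ⟨V, _, hVbot, hVp, hVcomm, hVpow⟩ := hIP.exists_normal_isPGroup
    (A := K⟮ζ⟯.fixingSubgroup.map (restrictNormalHom M)) hU hn
    ((fixingSubgroup_index_restrict hEM).trans hE) <| by
      rintro s hs hse - ⟨a, ha, rfl⟩
      exact hcomm s hs hse a (mem_fixingSubgroup_adjoin_simple_iff.mp ha)
  exact ⟨hVp.to_le (map_fixingSubgroup_kummerField_le hζ hVcomm hVpow),
    map_fixingSubgroup_kummerField_ne_bot hn hζ hEM hU hE hVp hVbot⟩

end LocalFields

theorem stmt_10_general (F : Type*) {K Ω : Type*} [NontriviallyNormedField F]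
    [IsUltrametricDist F] [ProperSpace F] [Field K] [Algebra F K] [FiniteDimensional F K]
    [Field Ω] [Algebra K Ω] [IsGalois K Ω] {p n : ℕ} [Fact p.Prime] (hp : ‖(p : F)‖ < 1)
    (hn : n ≠ 0) {ζ : Ω} (hζ : IsPrimitiveRoot ζ (p ^ n - 1)) {E L : IntermediateField K Ω}
    (hL : L = kummerField K ζ (p ^ n - 1)) (hE : Module.finrank K E = p ^ n)
    (hprim : ∀ F : IntermediateField K Ω, F ≤ E → F = ⊥ ∨ F = E)
    {S : Subgroup Gal(↥(E ⊔ L)/K)}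
    (hS : S = fixingSubgroup Gal(↥(E ⊔ L)/K) {x : ↥(E ⊔ L) | (x : Ω) ∈ L}) :
    IsGalois K ↥(E ⊔ L) ∧
      Module.finrank L (IntermediateField.extendScalars (le_sup_right : L ≤ E ⊔ L)) = p ^ n ∧
      (∀ σ ∈ S, ∀ τ ∈ S, σ * τ = τ * σ) ∧ ∀ σ ∈ S, σ ^ p = 1 := by
  subst hS
  have hpn : 1 < p ^ n := Nat.one_lt_pow hn (Fact.out : p.Prime).one_lt
  have : NeZero (p ^ n - 1) := ⟨(Nat.sub_pos_of_lt hpn).ne'⟩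
  have : Normal K L := hL ▸ normal_kummerField hζ
  have : FiniteDimensional K E := .of_finrank_pos (hE ▸ zero_lt_one.trans hpn)
  set M := IntermediateField.normalClosure K E Ω
  have hU := isPrimitiveStabilizer_fixingSubgroup_restrict
    (isAtom_of_one_lt_finrank (hE ▸ hpn) hprim)
  obtain ⟨hP, hbot⟩ := isPGroup_map_fixingSubgroup_kummerField_and_ne_bot F hp hn hζ _ hU hE
  rw [← hL] at hP hbot
  have := (normal_fixingSubgroup (L := L)).map (AlgEquiv.restrictNormalHom M)
    (AlgEquiv.restrictNormalHom_surjective Ω)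
  have := hU.isMulCommutative_of_isPGroup hP
  have hsup : E ⊔ L = M ⊔ L := sup_eq_sup_of_isPrimitiveStabilizer _ hU hbot
  have : Normal K ↥(E ⊔ L) := hsup ▸ inferInstance
  refine ⟨⟨⟩, ?_, fun σ hσ τ hτ ↦ mul_comm_of_mem_fixingSubgroup hsup hσ hτ, fun σ hσ ↦
    pow_eq_one_of_mem_fixingSubgroup hsup (fun a ha ↦ hU.pow_eq_one_of_isPGroup hP ha) hσ⟩
  rw [← IntermediateField.relfinrank_eq_finrank_of_le, hsup, relfinrank_sup_eq_card_map,
    hU.card_eq_index hbot, fixingSubgroup_index_restrict, hE]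

/-- Let `K ⊆ Ω` be a finite extension of `ℚ_p`, `e_n = p ^ n - 1`, `K_n = K(ζ)` for a
primitive `e_n`-th root of unity `ζ`, and `L_n` the field generated over `K_n` by all
`x ∈ Ω` with `x ^ e_n ∈ K_n`.  If `E` is a primitive extension of `K` of degree `p ^ n`,
then `E ⬝ L_n` is Galois over `K`, of degree `p ^ n` over `L_n`, and `Gal(E ⬝ L_n / L_n)`
(the subgroup of `Gal(E ⬝ L_n / K)` fixing `L_n` pointwise) is abelian with every element
of order dividing `p`. -/
theorem stmt_10 (p : ℕ) [hp : Fact p.Prime] (n : ℕ) (hn : 1 ≤ n)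
    (Ω : Type) [Field Ω] [Algebra ℚ_[p] Ω] [IsAlgClosure ℚ_[p] Ω]
    (K : IntermediateField ℚ_[p] Ω) [FiniteDimensional ℚ_[p] ↥K]
    (ζ : Ω) (hζ : IsPrimitiveRoot ζ (p ^ n - 1))
    (Kn : IntermediateField ↥K Ω) (hKn : Kn = IntermediateField.adjoin ↥K {ζ})
    (Ln : IntermediateField ↥K Ω)
    (hLn : Ln = Kn ⊔ IntermediateField.adjoin ↥K {x : Ω | x ^ (p ^ n - 1) ∈ Kn})
    (E : IntermediateField ↥K Ω) (hE : Module.finrank ↥K ↥E = p ^ n)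
    (hprim : ∀ F : IntermediateField ↥K Ω, F ≤ E → F = ⊥ ∨ F = E)
    (S : Subgroup (↥(E ⊔ Ln) ≃ₐ[↥K] ↥(E ⊔ Ln)))
    (hS : S = fixingSubgroup (↥(E ⊔ Ln) ≃ₐ[↥K] ↥(E ⊔ Ln)) {x : ↥(E ⊔ Ln) | (x : Ω) ∈ Ln}) :
    IsGalois ↥K ↥(E ⊔ Ln) ∧
      Module.finrank ↥Ln ↥(IntermediateField.extendScalars (le_sup_right : Ln ≤ E ⊔ Ln))
        = p ^ n ∧
      (∀ σ ∈ S, ∀ τ ∈ S, σ * τ = τ * σ) ∧ (∀ σ ∈ S, σ ^ p = 1) := by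
  subst hKn
  have : IsGalois ℚ_[p] Ω := inferInstance
  exact stmt_10_general ℚ_[p] Padic.norm_p_lt_one (Nat.one_le_iff_ne_zero.mp hn) hζ hLn hE hprim hS
end

section
/- Fix a prime p and an integer n ≥ 1, set e_n = p^n − 1, and fix an algebraic closure Ω of ℚ_p. Let K ⊆ Ω be a finite extension of ℚ_p, let K_n = K(ζ) where ζ ∈ Ω is a primitive e_n-th root of unity, and let L_n ⊆ Ω be the field generated over K_n by all x ∈ Ω with x^{e_n} ∈ K_n. Let E ⊆ Ω be a primitive extension of K with [E : K] = p^n, and let M = E·L_n be the compositum. Then every subgroup of Gal(M / L_n) that is a normal subgroup of Gal(M / K) is either the trivial subgroup or all of Gal(M / L_n); that is, Gal(M / L_n) is a simple module over Gal(L_n / K) for the conjugation action. -/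
/-!
Let `H ≤ Gal(M/L)` be normal in `Gal(M/K)`, where `M = EL` with `L/K` Galois, and let
`B = Gal(M/E)`. Since `M/E` is Galois, the fixed field of the subgroup `HB` lies in `E`, so by
primitivity it is `E` or `K`. If it is `E`, then `H ≤ B`, and `B ∩ Gal(M/L) = Gal(M/EL)` is trivial.
If it is `K`, then `M/K` is Galois by Artin's theorem; the open subgroup `HB` is all of `Gal(M/K)`,
and the modular law gives `Gal(M/L) = H (B ∩ Gal(M/L)) = H`.
-/

theorem subgroup_eq_of_le_of_sup_eq_top_of_inf_eq_bot {G : Type*} [Group G] {H B S : Subgroup G}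
    [H.Normal] (hHS : H ≤ S) (hsup : H ⊔ B = ⊤) (hinf : B ⊓ S = ⊥) : H = S := by
  refine hHS.antisymm fun s hs ↦ ?_
  obtain ⟨h, hh, b, hb, rfl⟩ :=
    Subgroup.mem_sup_of_normal_left.1 (hsup ▸ Subgroup.mem_top s : s ∈ H ⊔ B)
  have hbS : b ∈ S := (S.mul_mem_cancel_left (hHS hh)).1 hs
  have hb1 : b = 1 := Subgroup.mem_bot.1 (hinf ▸ ⟨hb, hbS⟩)
  rwa [hb1, mul_one]

section

open IntermediateField Polynomial

variable {K M : Type*} [Field K] [Field M] [Algebra K M]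

theorem isGalois_of_adjoin_eq_top {s : Set M} (hs : adjoin K s = ⊤)
    (hsep : ∀ x ∈ s, IsSeparable K x)
    (hsplits : ∀ x ∈ s, ((minpoly K x).map (algebraMap K M)).Splits) : IsGalois K M := by
  have hle : adjoin K s ≤ separableClosure K M :=
    adjoin_le_iff.2 fun x hx ↦ mem_separableClosure_iff.2 (hsep x hx)
  have : Algebra.IsSeparable K M := (separableClosure.eq_top_iff K M).1 (top_le_iff.1 (hs ▸ hle))
  have : Normal K M := normal_iff.2 fun x ↦ ⟨Algebra.IsIntegral.isIntegral x,
    splits_of_mem_adjoin K M (fun y hy ↦ ⟨(hsep y hy).isIntegral, hsplits y hy⟩)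
      (hs ▸ mem_top : x ∈ adjoin K s)⟩
  exact ⟨⟩

theorem isGalois_of_sup_eq_top {E L : IntermediateField K M} [IsGalois K L] (h : E ⊔ L = ⊤) :
    IsGalois E M := by
  have hadjoin : adjoin E (L : Set M) = ⊤ := by
    rw [← restrictScalars_eq_top_iff (K := K), restrictScalars_adjoin, adjoin_union, adjoin_self,
      adjoin_self, h]
  have hsep (x : M) (hx : x ∈ L) : IsSeparable K x := by
    simpa using (IsGalois.separable K (⟨x, hx⟩ : L)).map L.val
  refine isGalois_of_adjoin_eq_top hadjoin (fun x hx ↦ (hsep x hx).tower_top E) fun x hx ↦ ?_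
  have hsplits : ((minpoly K x).map (algebraMap K M)).Splits := by
    have := (IsGalois.splits K (⟨x, hx⟩ : L)).map (algebraMap L M)
    rwa [Polynomial.map_map, ← IsScalarTower.algebraMap_eq, minpoly_eq] at this
  have hdvd := Polynomial.map_dvd (algebraMap E M) (minpoly.dvd_map_of_isScalarTower K E x)
  rw [Polynomial.map_map, ← IsScalarTower.algebraMap_eq] at hdvd
  exact hsplits.of_dvd (map_ne_zero (hsep x hx).ne_zero) hdvd

theorem map_prod_X_sub_C_aroots [DecidableEq M] (f : K[X]) (σ : Gal(M/K)) :
    (∏ y ∈ (f.aroots M).toFinset, (X - C y)).map (σ : M →+* M) =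
      ∏ y ∈ (f.aroots M).toFinset, (X - C y) := by
  rw [Polynomial.map_prod]
  refine Finset.prod_equiv σ.toEquiv (fun y ↦ ?_) fun y _ ↦ by simp
  have : aeval (σ y) f = σ (aeval y f) := aeval_algHom_apply σ.toAlgHom y f
  simp [this]

theorem map_minpoly_fixedField_dvd_prod_X_sub_C [Algebra.IsAlgebraic K M] [DecidableEq M]
    (U : Subgroup Gal(M/K)) (x : M) :
    (minpoly (fixedField U) x).map (algebraMap (fixedField U) M) ∣
      ∏ y ∈ ((minpoly K x).aroots M).toFinset, (X - C y) := by
  set q : M[X] := ∏ y ∈ ((minpoly K x).aroots M).toFinset, (X - C y) with hq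
  have hlift : q ∈ lifts (algebraMap (fixedField U) M) := by
    refine (lifts_iff_coeff_lifts _).2 fun n ↦ ⟨⟨q.coeff n, ?_⟩, rfl⟩
    refine (mem_fixedField_iff _ _).2 fun σ _ ↦ ?_
    exact (coeff_map (σ : M →+* M) n).symm.trans
      (congr_arg (coeff · n) (map_prod_X_sub_C_aroots (minpoly K x) σ))
  obtain ⟨r, hr⟩ := (mem_lifts _).1 hlift
  have hx : x ∈ ((minpoly K x).aroots M).toFinset := by
    simp [minpoly.ne_zero (Algebra.IsIntegral.isIntegral (R := K) x)]
  have hroot : aeval x r = 0 := by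
    rw [aeval_def, ← eval_map, hr, hq, eval_prod]
    exact Finset.prod_eq_zero hx (by simp)
  exact hr ▸ Polynomial.map_dvd _ (minpoly.dvd _ _ hroot)

/-- Artin's theorem; `IsGalois.of_fixed_field` applies only when `U` is finite. -/
theorem isGalois_fixedField [Algebra.IsAlgebraic K M] (U : Subgroup Gal(M/K)) :
    IsGalois (fixedField U) M := by
  classical
  have hsep (x : M) : IsSeparable (fixedField U) x :=
    (separable_map (algebraMap (fixedField U) M)).1 <|
      (separable_prod_X_sub_C_iff'.2 fun _ _ _ _ ↦ id).of_dvd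
        (map_minpoly_fixedField_dvd_prod_X_sub_C U x)
  have hsplits (x : M) :
      ((minpoly (fixedField U) x).map (algebraMap (fixedField U) M)).Splits :=
    (Splits.prod fun y _ ↦ Splits.X_sub_C y).of_dvd
      (Finset.prod_ne_zero_iff.2 fun y _ ↦ X_sub_C_ne_zero y)
      (map_minpoly_fixedField_dvd_prod_X_sub_C U x)
  have : Algebra.IsSeparable (fixedField U) M := ⟨hsep⟩
  have : Normal (fixedField U) M := normal_iff.2 fun x ↦ ⟨(hsep x).isIntegral, hsplits x⟩
  exact ⟨⟩

theorem fixedField_fixingSubgroup_of_isGalois {E : IntermediateField K M} [IsGalois E M] :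
    fixedField E.fixingSubgroup = E := by
  refine le_antisymm (fun x hx ↦ ?_) ((le_iff_le _ _).2 le_rfl)
  obtain ⟨y, rfl⟩ := (InfiniteGalois.mem_range_algebraMap_iff_fixed (k := E) x).2 fun σ ↦
    (mem_fixedField_iff _ _).1 hx (σ.restrictScalars K)
      ((mem_fixingSubgroup_iff _ _).2 fun y hy ↦ σ.commutes ⟨y, hy⟩)
  exact y.2

theorem eq_top_of_isOpen_of_fixedField_eq_bot [IsGalois K M] {U : Subgroup Gal(M/K)}
    (hU : IsOpen (U : Set Gal(M/K))) (hfix : fixedField U = ⊥) : U = ⊤ := by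
  have hclosed := InfiniteGalois.fixingSubgroup_fixedField ⟨U, U.isClosed_of_isOpen hU⟩
  exact hclosed.symm.trans (hfix ▸ fixingSubgroup_bot)

theorem finiteDimensional_of_forall_le_eq_bot_or_eq {E : IntermediateField K M}
    (hE : ∀ F ≤ E, F = ⊥ ∨ F = E) : FiniteDimensional K E := by
  have : Finite (IntermediateField K E) :=
    Finite.of_injective
      (fun F ↦ (⟨lift F, hE _ (lift_le F)⟩ : ({⊥, E} : Set (IntermediateField K M))))
      fun _ _ h ↦ lift_injective E (Subtype.ext_iff.1 h)
  exact Field.FiniteDimensional.of_finite_intermediateField K E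

theorem eq_bot_or_eq_fixingSubgroup_of_normal {E L : IntermediateField K M} [IsGalois K L]
    (hE : ∀ F ≤ E, F = ⊥ ∨ F = E) (hEL : E ⊔ L = ⊤) {H : Subgroup Gal(M/K)} [H.Normal]
    (hH : H ≤ L.fixingSubgroup) : H = ⊥ ∨ H = L.fixingSubgroup := by
  have := finiteDimensional_of_forall_le_eq_bot_or_eq hE
  have : IsGalois E M := isGalois_of_sup_eq_top hEL
  have : Algebra.IsAlgebraic K M := .trans K E M
  have hinf : E.fixingSubgroup ⊓ L.fixingSubgroup = ⊥ := by
    rw [← fixingSubgroup_sup, hEL, fixingSubgroup_top]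
  let U := H ⊔ E.fixingSubgroup
  have hUE : fixedField U ≤ E :=
    (fixedField_antitone le_sup_right).trans_eq fixedField_fixingSubgroup_of_isGalois
  rcases hE _ hUE with hbot | hfix
  · have : IsGalois K M := isGalois_iff_isGalois_bot.1 (hbot ▸ isGalois_fixedField U)
    have hopen : IsOpen (U : Set Gal(M/K)) :=
      Subgroup.isOpen_mono le_sup_right E.fixingSubgroup_isOpen
    have htop : U = ⊤ := eq_top_of_isOpen_of_fixedField_eq_bot hopen hbot
    exact .inr (subgroup_eq_of_le_of_sup_eq_top_of_inf_eq_bot hH htop hinf)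
  · have hU : U ≤ E.fixingSubgroup := (le_iff_le _ _).1 hfix.ge
    exact .inl (le_bot_iff.1 (hinf ▸ le_inf (le_sup_left.trans hU) hH))

theorem eq_bot_or_eq_restrict_of_le {E F : IntermediateField K M} (hEF : E ≤ F)
    (hE : ∀ F' ≤ E, F' = ⊥ ∨ F' = E) (F' : IntermediateField K F) (hF' : F' ≤ restrict hEF) :
    F' = ⊥ ∨ F' = restrict hEF := by
  have hle : lift F' ≤ E := (map_mono _ hF').trans_eq (lift_restrict hEF)
  simpa only [← lift_inj, lift_bot, lift_restrict] using hE _ hle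

theorem restrict_sup_restrict (E L : IntermediateField K M) :
    restrict (le_sup_left : E ≤ E ⊔ L) ⊔ restrict (le_sup_right : L ≤ E ⊔ L) = ⊤ :=
  lift_injective _ (by simp only [lift_sup, lift_restrict, lift_top])

theorem fixingSubgroup_restrict {E F : IntermediateField K M} (hEF : E ≤ F) :
    (restrict hEF).fixingSubgroup = fixingSubgroup Gal(F/K) {x : F | (x : M) ∈ E} := by
  rw [IntermediateField.fixingSubgroup]
  congr 1
  ext x
  exact mem_restrict hEF x

theorem normal_adjoin_of_forall_mem [Normal K M] {s : Set M}
    (hs : ∀ σ : Gal(M/K), ∀ x ∈ s, σ x ∈ s) : Normal K (adjoin K s) := by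
  refine normal_iff_forall_map_le'.2 fun σ ↦ ?_
  rw [adjoin_map]
  exact adjoin.mono K _ _ (Set.image_subset_iff.2 (hs σ))

theorem normal_adjoin_pow_mem [Normal K M] (F : IntermediateField K M) [Normal K F] (m : ℕ) :
    Normal K (adjoin K {x : M | x ^ m ∈ F}) := by
  refine normal_adjoin_of_forall_mem fun σ x hx ↦ ?_
  change σ x ^ m ∈ F
  rw [← map_pow]
  exact normal_iff_forall_map_le'.1 ‹Normal K F› σ ⟨_, hx, rfl⟩

theorem isGalois_adjoin_primitiveRoot {ζ : M} {m : ℕ} [NeZero m] (hζ : IsPrimitiveRoot ζ m) :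
    IsGalois K K⟮ζ⟯ := by
  have halg : IsAlgebraic K ζ := (hζ.isIntegral (NeZero.pos m)).tower_top.isAlgebraic
  have : IsCyclotomicExtension {m} K K⟮ζ⟯ := by
    change IsCyclotomicExtension {m} K K⟮ζ⟯.toSubalgebra
    rw [adjoin_simple_toSubalgebra_of_isAlgebraic halg]
    exact hζ.adjoin_isCyclotomicExtension K
  exact IsCyclotomicExtension.isGalois {m} K K⟮ζ⟯

end

theorem stmt_11_general {K Ω : Type*} [Field K] [Field Ω] [Algebra K Ω]
    (E L : IntermediateField K Ω) [IsGalois K L]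
    (hprim : ∀ F : IntermediateField K Ω, F ≤ E → F = ⊥ ∨ F = E)
    (S : Subgroup Gal(↥(E ⊔ L)/K))
    (hS : S = fixingSubgroup Gal(↥(E ⊔ L)/K) {x : ↥(E ⊔ L) | (x : Ω) ∈ L}) :
    ∀ H : Subgroup Gal(↥(E ⊔ L)/K), H ≤ S → H.Normal → H = ⊥ ∨ H = S := by
  intro H hHS _
  have hL : L ≤ E ⊔ L := le_sup_right
  have : IsGalois K (IntermediateField.restrict hL) :=
    .of_algEquiv (IntermediateField.restrictAlgEquiv hL)
  rw [← fixingSubgroup_restrict hL] at hS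
  subst hS
  exact eq_bot_or_eq_fixingSubgroup_of_normal (eq_bot_or_eq_restrict_of_le le_sup_left hprim)
    (restrict_sup_restrict E L) hHS

/-- In the setting of the previous statement (`E` a primitive extension of `K` of degree
`p ^ n`, `M = E ⬝ L_n`), every subgroup of `Gal(M / L_n)` (realised as the subgroup `S` of
`Gal(M / K)` fixing `L_n` pointwise) which is normal in `Gal(M / K)` is either trivial or
all of `Gal(M / L_n)`; i.e. `Gal(M / L_n)` is a simple `Gal(L_n / K)`-module under
conjugation. -/
theorem stmt_11 (p : ℕ) [hp : Fact p.Prime] (n : ℕ) (hn : 1 ≤ n)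
    (Ω : Type) [Field Ω] [Algebra ℚ_[p] Ω] [IsAlgClosure ℚ_[p] Ω]
    (K : IntermediateField ℚ_[p] Ω) [FiniteDimensional ℚ_[p] ↥K]
    (ζ : Ω) (hζ : IsPrimitiveRoot ζ (p ^ n - 1))
    (Kn : IntermediateField ↥K Ω) (hKn : Kn = IntermediateField.adjoin ↥K {ζ})
    (Ln : IntermediateField ↥K Ω)
    (hLn : Ln = Kn ⊔ IntermediateField.adjoin ↥K {x : Ω | x ^ (p ^ n - 1) ∈ Kn})
    (E : IntermediateField ↥K Ω) (hE : Module.finrank ↥K ↥E = p ^ n)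
    (hprim : ∀ F : IntermediateField ↥K Ω, F ≤ E → F = ⊥ ∨ F = E)
    (S : Subgroup (↥(E ⊔ Ln) ≃ₐ[↥K] ↥(E ⊔ Ln)))
    (hS : S = fixingSubgroup (↥(E ⊔ Ln) ≃ₐ[↥K] ↥(E ⊔ Ln)) {x : ↥(E ⊔ Ln) | (x : Ω) ∈ Ln}) :
    ∀ H : Subgroup (↥(E ⊔ Ln) ≃ₐ[↥K] ↥(E ⊔ Ln)), H ≤ S → H.Normal → H = ⊥ ∨ H = S := by
  have hq : 1 < p ^ n := Nat.one_lt_pow (by omega) hp.out.one_lt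
  have : NeZero (p ^ n - 1) := ⟨by omega⟩
  have : IsGalois K Kn := hKn ▸ isGalois_adjoin_primitiveRoot hζ
  have := normal_adjoin_pow_mem Kn (p ^ n - 1)
  have : Normal K Ln := hLn ▸ inferInstance
  have : IsGalois K Ln := ⟨⟩
  exact stmt_11_general E Ln hprim S hS
end
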